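/- There exist k₀ > 0 and K₀ ≥ 1 such that for all ε, k, K with 0 < ε < k < k₀ and K ≥ K₀, the metric measure space (X, d_∞, m) satisfies the CD(0,∞) condition: for every pair of probability measures μ₀, μ₁ on X absolutely continuous with respect to m, there exists a constant-speed W₂-geodesic (μ_t)_{t∈[0,1]} from μ₀ to μ₁ such that Ent(μ_t) ≤ (1−t)·Ent(μ₀) + t·Ent(μ₁) for every t ∈ [0,1]. -/

import Mathlib

open MeasureTheory

-- relative entropy with values in `EReal` (`+∞` if not absolutely continuous or not integrable)
open Classical in
noncomputable def Ent {α : Type*} [MeasurableSpace α] (m μ : Measure α) : EReal :=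
  if μ ≪ m ∧ Integrable (llr μ m) μ then ((∫ z, llr μ m z ∂μ : ℝ) : EReal) else ⊤

-- squared 2-Wasserstein distance w.r.t. cost `d`, as an infimum over couplings
noncomputable def W2sq {α : Type*} [MeasurableSpace α] (d : α → α → ℝ)
    (μ ν : Measure α) : ENNReal :=
  ⨅ (π : Measure (α × α)) (_ : Measure.map Prod.fst π = μ ∧ Measure.map Prod.snd π = ν),
    ∫⁻ p, ENNReal.ofReal (d p.1 p.2 ^ 2) ∂π

/-!
Couple `μ₀` and `μ₁` by a plan which minimises the squared sup-distance and, among the minimisers,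
the squared Euclidean distance. For the sup-distance there is freedom in the choice of geodesics: a
flat pair of points (`|Δy| < |Δx|`) leaves room to interpolate the relative height `y / f x` instead
of `y`, which respects the shape of the region and the weight; a steep pair is interpolated
linearly, and in between the two interpolations are blended. This selection pushes the plan along a
Wasserstein geodesic.

Exchanging the endpoints of two crossing pairs would improve the plan, so the plan lives on a set on
which the interpolation at time `t` is injective, monotone on vertical lines for flat pairs and on
horizontal lines for steep ones. One-dimensional comparison on these lines shows that the
interpolated density is at most the geometric mean of the endpoint densities divided by the
geometric mean of the slopes of the interpolation. Since `k` is small, this Jacobian gain outweighs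
the loss coming from the weight, so the logarithm of the density relative to `m` is convex along
almost every pair. Integrating over the plan gives convexity of the entropy.
-/

open ProbabilityTheory
open scoped ENNReal NNReal

/-! ### Couplings and the Wasserstein distance -/

section Coupling

variable {α β γ : Type*} [MeasurableSpace α] [MeasurableSpace β] [MeasurableSpace γ]

/-- `π` is a coupling of `μ` and `ν`: a measure on the product with marginals `μ` and `ν`. -/
def IsCoupling (μ : Measure α) (ν : Measure β) (π : Measure (α × β)) : Prop :=
  π.map Prod.fst = μ ∧ π.map Prod.snd = ν

namespace IsCoupling

variable {μ : Measure α} {ν : Measure β} {π : Measure (α × β)}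

lemma isProbabilityMeasure [IsProbabilityMeasure μ] (h : IsCoupling μ ν π) :
    IsProbabilityMeasure π :=
  (Measure.isProbabilityMeasure_map_iff measurable_fst.aemeasurable).1 (h.1 ▸ ‹_›)

lemma ae_fst (h : IsCoupling μ ν π) {p : α → Prop} (hp : ∀ᵐ x ∂μ, p x) : ∀ᵐ ω ∂π, p ω.1 :=
  ae_of_ae_map measurable_fst.aemeasurable (h.1.symm ▸ hp)

lemma ae_snd (h : IsCoupling μ ν π) {p : β → Prop} (hp : ∀ᵐ y ∂ν, p y) : ∀ᵐ ω ∂π, p ω.2 :=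
  ae_of_ae_map measurable_snd.aemeasurable (h.2.symm ▸ hp)

lemma ae_mem_prod (h : IsCoupling μ ν π) {X : Set α} {Y : Set β} (hμ : ∀ᵐ x ∂μ, x ∈ X)
    (hν : ∀ᵐ y ∂ν, y ∈ Y) : ∀ᵐ ω ∂π, ω ∈ X ×ˢ Y :=
  (h.ae_fst hμ).and (h.ae_snd hν)

lemma swap (h : IsCoupling μ ν π) : IsCoupling ν μ (π.map Prod.swap) := by
  constructor
  · rw [Measure.map_map measurable_fst measurable_swap]; exact h.2
  · rw [Measure.map_map measurable_snd measurable_swap]; exact h.1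

end IsCoupling

lemma isCoupling_map {Ω : Type*} [MeasurableSpace Ω] {P : Measure Ω} {u : Ω → α} {v : Ω → β}
    (hu : Measurable u) (hv : Measurable v) :
    IsCoupling (P.map u) (P.map v) (P.map fun ω ↦ (u ω, v ω)) :=
  ⟨Measure.map_map measurable_fst (hu.prodMk hv), Measure.map_map measurable_snd (hu.prodMk hv)⟩

section CompProd

variable (ν : Measure β) [SFinite ν] (κ : Kernel β α) [IsMarkovKernel κ] (η : Kernel β γ)
  [IsMarkovKernel η]

lemma map_compProd_prod_fst :
    (ν ⊗ₘ (κ ×ₖ η)).map (fun z ↦ (z.1, z.2.1)) = ν ⊗ₘ κ := by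
  have := Measure.compProd_map (μ := ν) (κ := κ ×ₖ η) measurable_fst
  rw [← Kernel.fst_eq, Kernel.fst_prod] at this
  exact this.symm

lemma map_compProd_prod_snd :
    (ν ⊗ₘ (κ ×ₖ η)).map (fun z ↦ (z.1, z.2.2)) = ν ⊗ₘ η := by
  have := Measure.compProd_map (μ := ν) (κ := κ ×ₖ η) measurable_snd
  rw [← Kernel.snd_eq, Kernel.snd_prod] at this
  exact this.symm

end CompProd

lemma exists_gluing [StandardBorelSpace α] [Nonempty α] [StandardBorelSpace γ] [Nonempty γ]
    {μ : Measure α} {ν : Measure β} {ρ : Measure γ} [IsProbabilityMeasure μ]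
    {π₁ : Measure (α × β)} {π₂ : Measure (β × γ)} (h₁ : IsCoupling μ ν π₁)
    (h₂ : IsCoupling ν ρ π₂) :
    ∃ G : Measure (β × α × γ), G.map (fun z ↦ (z.2.1, z.1)) = π₁ ∧
      G.map (fun z ↦ (z.1, z.2.2)) = π₂ := by
  have := h₁.isProbabilityMeasure
  have : IsProbabilityMeasure (π₁.map Prod.swap) :=
    Measure.isProbabilityMeasure_map measurable_swap.aemeasurable
  have : IsProbabilityMeasure ν :=
    h₁.2 ▸ Measure.isProbabilityMeasure_map measurable_snd.aemeasurable
  have := h₂.isProbabilityMeasure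
  have disint₁ : ν ⊗ₘ (π₁.map Prod.swap).condKernel = π₁.map Prod.swap := by
    conv_lhs => rw [← h₁.swap.1]
    exact Measure.disintegrate _ _
  have disint₂ : ν ⊗ₘ π₂.condKernel = π₂ := by
    conv_lhs => rw [← h₂.1]
    exact Measure.disintegrate _ _
  refine ⟨ν ⊗ₘ ((π₁.map Prod.swap).condKernel ×ₖ π₂.condKernel), ?_, ?_⟩
  · have key := congrArg (Measure.map Prod.swap)
      ((map_compProd_prod_fst ν (π₁.map Prod.swap).condKernel π₂.condKernel).trans disint₁)
    rw [Measure.map_map measurable_swap (by fun_prop),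
      Measure.map_map measurable_swap measurable_swap] at key
    rwa [Prod.swap_swap_eq, Measure.map_id] at key
  · rw [map_compProd_prod_snd, disint₂]

end Coupling

section Wasserstein

variable {α : Type*} [MeasurableSpace α]

/-- The `2`-Wasserstein distance with respect to the ambient metric. -/
noncomputable def wasserstein [Dist α] (μ ν : Measure α) : ℝ≥0∞ :=
  W2sq dist μ ν ^ (1 / 2 : ℝ)

lemma W2sq_eq_wasserstein_sq [Dist α] (μ ν : Measure α) :
    W2sq dist μ ν = wasserstein μ ν ^ 2 := by
  rw [wasserstein, ← ENNReal.rpow_natCast, ← ENNReal.rpow_mul]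
  norm_num

variable [PseudoMetricSpace α]

lemma W2sq_dist_eq (μ ν : Measure α) :
    W2sq dist μ ν = ⨅ π : {π // IsCoupling μ ν π}, ∫⁻ ω, edist ω.1 ω.2 ^ (2 : ℝ) ∂π.1 := by
  simp only [W2sq, iInf_subtype, IsCoupling, edist_dist, ENNReal.rpow_ofNat,
    ENNReal.ofReal_pow dist_nonneg]

lemma wasserstein_eq (μ ν : Measure α) :
    wasserstein μ ν =
      ⨅ π : {π // IsCoupling μ ν π}, (∫⁻ ω, edist ω.1 ω.2 ^ (2 : ℝ) ∂π.1) ^ (1 / 2 : ℝ) := by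
  rw [wasserstein, W2sq_dist_eq]
  exact (ENNReal.orderIsoRpow (1 / 2) (by norm_num)).map_iInf _

variable [SecondCountableTopology α] [OpensMeasurableSpace α]

lemma W2sq_dist_comm (μ ν : Measure α) : W2sq dist μ ν = W2sq dist ν μ := by
  suffices ∀ μ ν : Measure α, W2sq dist μ ν ≤ W2sq dist ν μ from le_antisymm (this μ ν) (this ν μ)
  intro μ ν
  rw [W2sq_dist_eq, W2sq_dist_eq]
  refine le_iInf fun π ↦ (iInf_le _ ⟨_, π.2.swap⟩).trans_eq ?_
  rw [lintegral_map (by fun_prop) measurable_swap]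
  simp only [Prod.fst_swap, Prod.snd_swap, edist_comm]

lemma wasserstein_triangle [StandardBorelSpace α] (μ ν ρ : Measure α) [IsProbabilityMeasure μ] :
    wasserstein μ ρ ≤ wasserstein μ ν + wasserstein ν ρ := by
  simp only [wasserstein_eq μ ν, wasserstein_eq ν ρ]
  refine ENNReal.le_iInf_add_iInf fun π₁ π₂ ↦ ?_
  have := nonempty_of_isProbabilityMeasure μ
  obtain ⟨G, hG₁, hG₂⟩ := exists_gluing π₁.2 π₂.2
  have hG : IsCoupling μ ρ (G.map fun z ↦ (z.2.1, z.2.2)) := by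
    have hμ := π₁.2.1
    have hρ := π₂.2.2
    rw [← hG₁, Measure.map_map measurable_fst (by fun_prop)] at hμ
    rw [← hG₂, Measure.map_map measurable_snd (by fun_prop)] at hρ
    exact hμ ▸ hρ ▸ isCoupling_map (by fun_prop) (by fun_prop)
  rw [wasserstein_eq, ← hG₁, ← hG₂]
  refine (iInf_le _ ⟨_, hG⟩).trans ?_
  rw [lintegral_map (by fun_prop) (by fun_prop), lintegral_map (by fun_prop) (by fun_prop),
    lintegral_map (by fun_prop) (by fun_prop)]
  calc (∫⁻ z, edist z.2.1 z.2.2 ^ (2 : ℝ) ∂G) ^ (1 / 2 : ℝ)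
      ≤ (∫⁻ z, (edist z.2.1 z.1 + edist z.1 z.2.2) ^ (2 : ℝ) ∂G) ^ (1 / 2 : ℝ) := by
        gcongr with z
        exact edist_triangle _ _ _
    _ ≤ _ := ENNReal.lintegral_Lp_add_le (by fun_prop) (by fun_prop) one_le_two

-- None of the three legs of `M 0 → M s → M t → M 1` can be shorter than its bound.
lemma wasserstein_eq_of_le [StandardBorelSpace α] {M : ℝ → Measure α}
    (hM : ∀ t ∈ Set.Icc (0 : ℝ) 1, IsProbabilityMeasure (M t)) (hfin : wasserstein (M 0) (M 1) ≠ ∞)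
    (hle : ∀ s ∈ Set.Icc (0 : ℝ) 1, ∀ t ∈ Set.Icc (0 : ℝ) 1, s ≤ t →
      wasserstein (M s) (M t) ≤ ENNReal.ofReal (t - s) * wasserstein (M 0) (M 1))
    {s t : ℝ} (hs : s ∈ Set.Icc (0 : ℝ) 1) (ht : t ∈ Set.Icc (0 : ℝ) 1) (hst : s ≤ t) :
    wasserstein (M s) (M t) = ENNReal.ofReal (t - s) * wasserstein (M 0) (M 1) := by
  refine le_antisymm (hle s hs t ht hst) ?_
  have h0 : (0 : ℝ) ∈ Set.Icc (0 : ℝ) 1 := by simp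
  have h1 : (1 : ℝ) ∈ Set.Icc (0 : ℝ) 1 := by simp
  have := hM 0 h0
  have := hM s hs
  set W := wasserstein (M 0) (M 1)
  have hsplit : ENNReal.ofReal (s - 0) * W + ENNReal.ofReal (t - s) * W + ENNReal.ofReal (1 - t) * W
      = W := by
    rw [← add_mul, ← add_mul, ← ENNReal.ofReal_add (by linarith [hs.1]) (by linarith),
      ← ENNReal.ofReal_add (by linarith [hs.1]) (by linarith [ht.2])]
    simp
  have hlegs : W ≤ ENNReal.ofReal (s - 0) * W + wasserstein (M s) (M t)
      + ENNReal.ofReal (1 - t) * W := by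
    calc W ≤ wasserstein (M 0) (M s) + (wasserstein (M s) (M t) + wasserstein (M t) (M 1)) :=
          (wasserstein_triangle _ (M s) _).trans (by gcongr; exact wasserstein_triangle _ _ _)
      _ ≤ _ := by
          rw [← add_assoc]
          gcongr
          exacts [hle 0 h0 s hs hs.1, hle t ht 1 h1 ht.2]
  have hne : ∀ r : ℝ, ENNReal.ofReal r * W ≠ ∞ := fun r ↦ ENNReal.mul_ne_top (by simp) hfin
  exact (ENNReal.add_le_add_iff_left (hne _)).1
    ((ENNReal.add_le_add_iff_right (hne _)).1 (hsplit.trans_le hlegs))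

lemma W2sq_eq_of_le [StandardBorelSpace α] {M : ℝ → Measure α}
    (hM : ∀ t ∈ Set.Icc (0 : ℝ) 1, IsProbabilityMeasure (M t))
    (hfin : W2sq dist (M 0) (M 1) ≠ ∞)
    (hle : ∀ s ∈ Set.Icc (0 : ℝ) 1, ∀ t ∈ Set.Icc (0 : ℝ) 1,
      W2sq dist (M s) (M t) ≤ ENNReal.ofReal ((t - s) ^ 2) * W2sq dist (M 0) (M 1))
    {s t : ℝ} (hs : s ∈ Set.Icc (0 : ℝ) 1) (ht : t ∈ Set.Icc (0 : ℝ) 1) :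
    W2sq dist (M s) (M t) = ENNReal.ofReal ((t - s) ^ 2) * W2sq dist (M 0) (M 1) := by
  wlog hst : s ≤ t generalizing s t
  · rw [W2sq_dist_comm, this ht hs (le_of_not_ge hst), ← neg_sub, neg_sq]
  simp only [W2sq_eq_wasserstein_sq] at hfin hle ⊢
  rw [ENNReal.ofReal_pow (by linarith), ← mul_pow]
  congr 1
  refine wasserstein_eq_of_le hM (fun h ↦ hfin (by simp [h])) (fun a ha b hb hab ↦ ?_) hs ht hst
  have := hle a ha b hb
  rw [ENNReal.ofReal_pow (by linarith), ← mul_pow] at this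
  exact (ENNReal.pow_le_pow_left_iff two_ne_zero).1 this

end Wasserstein

/-! ### Lexicographically optimal couplings -/

section LexOptimal

variable {α β : Type*} [MeasurableSpace α] [MeasurableSpace β]

/-- `π` minimises the primary cost `c₁` among all couplings of `μ` and `ν` and, among the minimisers
of the primary cost, the secondary cost `c₂`; both minimal costs are finite. -/
structure LexOptimal (c₁ c₂ : α × β → ℝ≥0) (μ : Measure α) (ν : Measure β)
    (π : Measure (α × β)) : Prop where
  isCoupling : IsCoupling μ ν π
  primary_le : ∀ π', IsCoupling μ ν π' → ∫⁻ ω, c₁ ω ∂π ≤ ∫⁻ ω, c₁ ω ∂π'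
  secondary_le : ∀ π', IsCoupling μ ν π' → ∫⁻ ω, c₁ ω ∂π' ≤ ∫⁻ ω, c₁ ω ∂π →
    ∫⁻ ω, c₂ ω ∂π ≤ ∫⁻ ω, c₂ ω ∂π'
  primary_ne_top : ∫⁻ ω, c₁ ω ∂π ≠ ∞
  secondary_ne_top : ∫⁻ ω, c₂ ω ∂π ≠ ∞

section Existence

lemma exists_boundedContinuousFunction_eqOn {E : Type*} [TopologicalSpace E] {Y : Set E}
    (hY : IsCompact Y) {c : E → ℝ≥0} (hc : Continuous c) :
    ∃ g : BoundedContinuousFunction E ℝ≥0, Set.EqOn g c Y := by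
  obtain ⟨C, hC⟩ := hY.bddAbove_image hc.continuousOn
  refine ⟨.mkOfBound ⟨fun ω ↦ min (c ω) C, by fun_prop⟩ C fun x y ↦ ?_, fun ω hω ↦ ?_⟩
  · have hx : ((min (c x) C : ℝ≥0) : ℝ) ≤ C := min_le_right _ _
    have hy : ((min (c y) C : ℝ≥0) : ℝ) ≤ C := min_le_right _ _
    exact abs_sub_le_of_nonneg_of_le (NNReal.coe_nonneg _) hx (NNReal.coe_nonneg _) hy
  · exact min_eq_left (hC (Set.mem_image_of_mem c hω))

variable [TopologicalSpace α] [BorelSpace α] [HasOuterApproxClosed α]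
  [TopologicalSpace β] [SecondCountableTopology β] [BorelSpace β] [HasOuterApproxClosed β]
  {μ : Measure α} {ν : Measure β} [IsProbabilityMeasure μ] [IsProbabilityMeasure ν]

lemma isClosed_setOf_isCoupling :
    IsClosed {π : ProbabilityMeasure (α × β) | IsCoupling μ ν (π : Measure (α × β))} := by
  have hset : {π : ProbabilityMeasure (α × β) | IsCoupling μ ν (π : Measure (α × β))} =
      (fun π : ProbabilityMeasure (α × β) ↦ π.map measurable_fst.aemeasurable) ⁻¹' {⟨μ, ‹_›⟩} ∩
        (fun π : ProbabilityMeasure (α × β) ↦ π.map measurable_snd.aemeasurable) ⁻¹'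
          {⟨ν, ‹_›⟩} := by
    ext π
    exact and_congr
      (Subtype.ext_iff (a2 := (⟨μ, ‹_›⟩ : ProbabilityMeasure α)) (a1 := π.map _)).symm
      (Subtype.ext_iff (a2 := (⟨ν, ‹_›⟩ : ProbabilityMeasure β)) (a1 := π.map _)).symm
  rw [hset]
  exact (isClosed_singleton.preimage (ProbabilityMeasure.continuous_map continuous_fst)).inter
    (isClosed_singleton.preimage (ProbabilityMeasure.continuous_map continuous_snd))

variable [T2Space α] [T2Space β] {X : Set α} {Y : Set β}

lemma isCompact_setOf_isCoupling (hX : IsCompact X) (hY : IsCompact Y) (hμ : ∀ᵐ x ∂μ, x ∈ X)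
    (hν : ∀ᵐ y ∂ν, y ∈ Y) :
    IsCompact {π : ProbabilityMeasure (α × β) | IsCoupling μ ν (π : Measure (α × β))} := by
  rw [← isClosed_setOf_isCoupling.closure_eq]
  refine isCompact_closure_of_isTightMeasureSet ?_
  rw [isTightMeasureSet_iff_exists_isCompact_measure_compl_le]
  refine fun ε _ ↦ ⟨X ×ˢ Y, hX.prod hY, ?_⟩
  rintro _ ⟨π, hπ, rfl⟩
  exact (ae_iff.1 (IsCoupling.ae_mem_prod hπ hμ hν)).trans_le zero_le

lemma exists_lexOptimal (hX : IsCompact X) (hY : IsCompact Y)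
    (hμ : ∀ᵐ x ∂μ, x ∈ X) (hν : ∀ᵐ y ∂ν, y ∈ Y) {c₁ c₂ : α × β → ℝ≥0} (hc₁ : Continuous c₁)
    (hc₂ : Continuous c₂) : ∃ π, LexOptimal c₁ c₂ μ ν π := by
  obtain ⟨g₁, hg₁⟩ := exists_boundedContinuousFunction_eqOn (hX.prod hY) hc₁
  obtain ⟨g₂, hg₂⟩ := exists_boundedContinuousFunction_eqOn (hX.prod hY) hc₂
  have cost_eq : ∀ {c : α × β → ℝ≥0} {g : BoundedContinuousFunction (α × β) ℝ≥0},
      Set.EqOn g c (X ×ˢ Y) → ∀ π, IsCoupling μ ν π → ∫⁻ ω, c ω ∂π = ∫⁻ ω, g ω ∂π := by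
    intro c g hg π hπ
    refine lintegral_congr_ae ?_
    filter_upwards [hπ.ae_mem_prod hμ hν] with ω hω
    rw [hg hω]
  let S := {π : ProbabilityMeasure (α × β) | IsCoupling μ ν (π : Measure (α × β))}
  have hS : IsCompact S := isCompact_setOf_isCoupling hX hY hμ hν
  have cont₁ := ProbabilityMeasure.continuous_lintegral_boundedContinuousFunction g₁
  have cont₂ := ProbabilityMeasure.continuous_lintegral_boundedContinuousFunction g₂
  obtain ⟨π₁, hπ₁, hmin₁⟩ := hS.exists_isMinOn
    ⟨⟨μ.prod ν, inferInstance⟩, by constructor <;> simp⟩ cont₁.continuousOn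
  have hmin_closed := isClosed_le cont₁ (continuous_const (y := ∫⁻ ω, g₁ ω ∂π₁))
  obtain ⟨π₂, ⟨hπ₂, hle⟩, hmin₂⟩ := (hS.inter_right hmin_closed).exists_isMinOn
    ⟨π₁, hπ₁, Set.mem_ofPred.2 le_rfl⟩ cont₂.continuousOn
  refine ⟨π₂, hπ₂, fun π' hπ' ↦ ?_, fun π' hπ' hπ'_le ↦ ?_, ?_, ?_⟩
  · rw [cost_eq hg₁ _ hπ₂, cost_eq hg₁ _ hπ']
    exact hle.trans (hmin₁ (a := ⟨π', hπ'.isProbabilityMeasure⟩) hπ')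
  · rw [cost_eq hg₁ _ hπ₂, cost_eq hg₁ _ hπ'] at hπ'_le
    rw [cost_eq hg₂ _ hπ₂, cost_eq hg₂ _ hπ']
    exact hmin₂ (a := ⟨π', hπ'.isProbabilityMeasure⟩) ⟨hπ', hπ'_le.trans hle⟩
  · rw [cost_eq hg₁ _ hπ₂]
    exact (BoundedContinuousFunction.lintegral_lt_top_of_nnreal _ g₁).ne
  · rw [cost_eq hg₂ _ hπ₂]
    exact (BoundedContinuousFunction.lintegral_lt_top_of_nnreal _ g₂).ne

end Existence

/-- The total cost of the two pairs in `q`. -/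
def selfSum {α β M : Type*} [Add M] (c : α × β → M) (q : (α × β) × (α × β)) : M :=
  c q.1 + c q.2

/-- The total cost after the two pairs in `q` have exchanged their second points. -/
def crossSum {α β M : Type*} [Add M] (c : α × β → M) (q : (α × β) × (α × β)) : M :=
  c (q.1.1, q.2.2) + c (q.2.1, q.1.2)

/-- Exchanging the second points of the two pairs in `q` strictly decreases the cost `(c₁, c₂)`
for the lexicographic order. -/
def SwapImproves {α β : Type*} (c₁ c₂ : α × β → ℝ≥0) (q : (α × β) × (α × β)) : Prop :=
  crossSum c₁ q < selfSum c₁ q ∨ crossSum c₁ q = selfSum c₁ q ∧ crossSum c₂ q < selfSum c₂ q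

lemma selfSum_coe {α β : Type*} (c : α × β → ℝ≥0) (q : (α × β) × (α × β)) :
    selfSum (fun ω ↦ (c ω : ℝ≥0∞)) q = (selfSum c q : ℝ≥0) :=
  (ENNReal.coe_add _ _).symm

lemma crossSum_coe {α β : Type*} (c : α × β → ℝ≥0) (q : (α × β) × (α × β)) :
    crossSum (fun ω ↦ (c ω : ℝ≥0∞)) q = (crossSum c q : ℝ≥0) :=
  (ENNReal.coe_add _ _).symm

lemma measurable_selfSum {c : α × β → ℝ≥0∞} (hc : Measurable c) : Measurable (selfSum c) := by
  unfold selfSum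
  fun_prop

variable {μ : Measure α} {ν : Measure β} {π : Measure (α × β)}
  {Q : Measure ((α × β) × (α × β))}

lemma IsCoupling.lintegral_selfSum (hQ : IsCoupling π π Q) {c : α × β → ℝ≥0∞} (hc : Measurable c) :
    ∫⁻ q, selfSum c q ∂Q = 2 * ∫⁻ ω, c ω ∂π := by
  have hfst : ∫⁻ q, c q.1 ∂Q = ∫⁻ ω, c ω ∂π := by rw [← hQ.1, lintegral_map hc measurable_fst]
  have hsnd : ∫⁻ q, c q.2 ∂Q = ∫⁻ ω, c ω ∂π := by rw [← hQ.2, lintegral_map hc measurable_snd]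
  unfold selfSum
  rw [lintegral_add_left (by fun_prop), hfst, hsnd, two_mul]

lemma IsCoupling.exists_swapped (hπ : IsCoupling μ ν π) (hQ : IsCoupling π π Q)
    {R : Set ((α × β) × (α × β))} (hR : MeasurableSet R) [DecidablePred (· ∈ R)] :
    ∃ π', IsCoupling μ ν π' ∧ ∀ c : α × β → ℝ≥0∞, Measurable c →
      2 * ∫⁻ ω, c ω ∂π' = ∫⁻ q, R.piecewise (crossSum c) (selfSum c) q ∂Q := by
  let F₁ : (α × β) × (α × β) → α × β := R.piecewise (fun q ↦ (q.1.1, q.2.2)) Prod.fst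
  let F₂ : (α × β) × (α × β) → α × β := R.piecewise (fun q ↦ (q.2.1, q.1.2)) Prod.snd
  have hF₁ : Measurable F₁ := .piecewise hR (by fun_prop) (by fun_prop)
  have hF₂ : Measurable F₂ := .piecewise hR (by fun_prop) (by fun_prop)
  let π' := (2⁻¹ : ℝ≥0∞) • (Q.map F₁ + Q.map F₂)
  have cost (c : α × β → ℝ≥0∞) (hc : Measurable c) :
      2 * ∫⁻ ω, c ω ∂π' = ∫⁻ q, R.piecewise (crossSum c) (selfSum c) q ∂Q := by
    rw [lintegral_smul_measure, lintegral_add_measure, lintegral_map hc hF₁, lintegral_map hc hF₂,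
      ← lintegral_add_left (by fun_prop), smul_eq_mul, ← mul_assoc,
      ENNReal.mul_inv_cancel two_ne_zero ENNReal.ofNat_ne_top, one_mul]
    refine lintegral_congr fun q ↦ ?_
    by_cases hq : q ∈ R <;> simp [F₁, F₂, hq, crossSum, selfSum]
  have measure_eq (E : Set (α × β)) (hE : MeasurableSet E)
      (hswap : crossSum (E.indicator 1) = selfSum (E.indicator (1 : α × β → ℝ≥0∞))) :
      π' E = π E := by
    have hind : Measurable (E.indicator (1 : α × β → ℝ≥0∞)) := measurable_one.indicator hE
    have h2 := cost _ hind
    rw [hswap, Set.piecewise_same, hQ.lintegral_selfSum hind] at h2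
    rw [← lintegral_indicator_one hE, ← lintegral_indicator_one hE]
    exact (ENNReal.mul_right_inj two_ne_zero ENNReal.ofNat_ne_top).1 h2
  refine ⟨π', ⟨?_, ?_⟩, cost⟩
  · rw [← hπ.1]
    ext A hA
    rw [Measure.map_apply measurable_fst hA, Measure.map_apply measurable_fst hA]
    exact measure_eq _ (measurable_fst hA) rfl
  · rw [← hπ.2]
    ext A hA
    rw [Measure.map_apply measurable_snd hA, Measure.map_apply measurable_snd hA]
    exact measure_eq _ (measurable_snd hA) (funext fun _ ↦ add_comm _ _)

section Swap

variable {R : Set ((α × β) × (α × β))} {π' : Measure (α × β)} [DecidablePred (· ∈ R)]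

-- Improving a coupling pointwise on `R` without improving the total cost forces equality on `R`.
lemma IsCoupling.ae_crossSum_eq_selfSum (hQ : IsCoupling π π Q) {c : α × β → ℝ≥0}
    (hc : Measurable c) (hfin : ∫⁻ ω, c ω ∂π ≠ ∞)
    (hπ' : 2 * ∫⁻ ω, c ω ∂π' = ∫⁻ q, R.piecewise (crossSum fun ω ↦ (c ω : ℝ≥0∞))
      (selfSum fun ω ↦ (c ω : ℝ≥0∞)) q ∂Q)
    (hopt : ∫⁻ ω, c ω ∂π ≤ ∫⁻ ω, c ω ∂π') (hle : ∀ᵐ q ∂Q, q ∈ R → crossSum c q ≤ selfSum c q) :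
    ∫⁻ ω, c ω ∂π' ≤ ∫⁻ ω, c ω ∂π ∧ ∀ᵐ q ∂Q, q ∈ R → crossSum c q = selfSum c q := by
  have hself := hQ.lintegral_selfSum hc.coe_nnreal_ennreal
  have hae : R.piecewise (crossSum fun ω ↦ (c ω : ℝ≥0∞)) (selfSum fun ω ↦ (c ω : ℝ≥0∞))
      ≤ᵐ[Q] selfSum fun ω ↦ (c ω : ℝ≥0∞) := by
    filter_upwards [hle] with q hq
    by_cases hqR : q ∈ R
    · simpa [hqR, crossSum_coe, selfSum_coe] using hq hqR
    · simp [hqR]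
  have hint := lintegral_mono_ae hae
  have heq := ae_eq_of_ae_le_of_lintegral_le hae
    (ne_top_of_le_ne_top (hself ▸ ENNReal.mul_ne_top ENNReal.ofNat_ne_top hfin) hint)
    (measurable_selfSum hc.coe_nnreal_ennreal).aemeasurable (by rw [hself, ← hπ']; gcongr)
  constructor
  · rw [← hπ', hself] at hint
    exact (ENNReal.mul_le_mul_iff_right two_ne_zero ENNReal.ofNat_ne_top).1 hint
  · filter_upwards [heq] with q hq hqR
    simpa [hqR, crossSum_coe, selfSum_coe] using hq

end Swap

namespace LexOptimal

variable {c₁ c₂ : α × β → ℝ≥0}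

lemma measure_eq_zero_of_swapImproves (hπ : LexOptimal c₁ c₂ μ ν π) (hQ : IsCoupling π π Q)
    (hc₁ : Measurable c₁) (hc₂ : Measurable c₂) {R : Set ((α × β) × (α × β))}
    (hR : MeasurableSet R) (himp : ∀ᵐ q ∂Q, q ∈ R → SwapImproves c₁ c₂ q) : Q R = 0 := by
  classical
  obtain ⟨π', hπ', hcost⟩ := hπ.isCoupling.exists_swapped hQ hR
  obtain ⟨hle₁, heq₁⟩ := hQ.ae_crossSum_eq_selfSum hc₁ hπ.primary_ne_top
    (hcost _ hc₁.coe_nnreal_ennreal) (hπ.primary_le π' hπ')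
    (himp.mono fun q hq hqR ↦ (hq hqR).elim le_of_lt fun h ↦ h.1.le)
  have hlt₂ : ∀ᵐ q ∂Q, q ∈ R → crossSum c₂ q < selfSum c₂ q := by
    filter_upwards [himp, heq₁] with q hq heq hqR
    exact (hq hqR).elim (fun h ↦ absurd (heq hqR) h.ne) And.right
  obtain ⟨-, heq₂⟩ := hQ.ae_crossSum_eq_selfSum hc₂ hπ.secondary_ne_top
    (hcost _ hc₂.coe_nnreal_ennreal) (hπ.secondary_le π' hπ' hle₁)
    (hlt₂.mono fun q hq hqR ↦ (hq hqR).le)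
  rw [measure_eq_zero_iff_ae_notMem]
  filter_upwards [hlt₂, heq₂] with q hlt heq hqR
  exact (hlt hqR).ne (heq hqR)

end LexOptimal

section FiberCoupling

variable {Ω S : Type*} [MeasurableSpace Ω] [MeasurableSpace S]

lemma exists_measurableSet_forall_ne_of_compProd_eq_zero {κ : Kernel S Ω} [IsMarkovKernel κ]
    {P : Measure Ω} [IsProbabilityMeasure P] {g : Ω → S} (hg : Measurable g)
    (hκ : P.map g ⊗ₘ κ = P.map fun ω ↦ (g ω, ω)) {U V : Set Ω} (hU : MeasurableSet U)
    (hV : MeasurableSet V) (hUV : (P.map g ⊗ₘ (κ ×ₖ κ)) (Set.univ ×ˢ (U ×ˢ V)) = 0) :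
    ∃ Γ, MeasurableSet Γ ∧ (∀ᵐ ω ∂P, ω ∈ Γ) ∧ ∀ ω ∈ Γ ∩ U, ∀ η ∈ Γ ∩ V, g ω ≠ g η := by
  have charged : ∀ W, MeasurableSet W → MeasurableSet {ω | κ (g ω) W = 0 ∧ ω ∈ W} ∧
      P {ω | κ (g ω) W = 0 ∧ ω ∈ W} = 0 := by
    intro W hW
    have hnull : MeasurableSet {s | κ s W = 0} := κ.measurable_coe hW (measurableSet_singleton 0)
    have hpre : {ω | κ (g ω) W = 0 ∧ ω ∈ W} = (fun ω ↦ (g ω, ω)) ⁻¹' ({s | κ s W = 0} ×ˢ W) := rfl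
    rw [hpre]
    refine ⟨(hg.prodMk measurable_id) (hnull.prod hW), ?_⟩
    rw [← Measure.map_apply (by fun_prop) (hnull.prod hW), ← hκ,
      Measure.compProd_apply_prod hnull hW, setLIntegral_congr_fun hnull fun s hs ↦ hs]
    simp
  have hprod : Measurable fun s ↦ κ s U * κ s V := (κ.measurable_coe hU).mul (κ.measurable_coe hV)
  have hzero : ∀ᵐ ω ∂P, κ (g ω) U * κ (g ω) V = 0 := by
    refine ae_of_ae_map (p := fun s ↦ κ s U * κ s V = 0) hg.aemeasurable
      ((lintegral_eq_zero_iff hprod).1 ?_)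
    rw [Measure.compProd_apply_prod MeasurableSet.univ (hU.prod hV), Measure.restrict_univ] at hUV
    simpa only [Kernel.prod_apply_prod] using hUV
  refine ⟨{ω | κ (g ω) U * κ (g ω) V = 0} ∩ {ω | κ (g ω) U = 0 ∧ ω ∈ U}ᶜ ∩
    {ω | κ (g ω) V = 0 ∧ ω ∈ V}ᶜ, ?_, ?_, ?_⟩
  · exact ((hprod.comp hg (measurableSet_singleton 0)).inter (charged U hU).1.compl).inter
      (charged V hV).1.compl
  · exact (hzero.and (compl_mem_ae_iff.2 (charged U hU).2)).and
      (compl_mem_ae_iff.2 (charged V hV).2)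
  · rintro ω ⟨⟨⟨hω, hωU⟩, -⟩, hU'⟩ η ⟨⟨-, hηV⟩, hV'⟩ heq
    rcases mul_eq_zero.1 hω with h | h
    · exact hωU ⟨h, hU'⟩
    · exact hηV ⟨heq ▸ h, hV'⟩

-- `Q` draws two points of a fibre of `g` independently from the conditional distribution.
lemma exists_fiberCoupling [StandardBorelSpace Ω] [Nonempty Ω] [MeasurableEq S] (P : Measure Ω)
    [IsProbabilityMeasure P] {g : Ω → S} (hg : Measurable g) :
    ∃ Q : Measure (Ω × Ω), IsCoupling P P Q ∧ (∀ᵐ q ∂Q, g q.1 = g q.2) ∧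
      ∀ U V, MeasurableSet U → MeasurableSet V → Q (U ×ˢ V) = 0 →
        ∃ Γ, MeasurableSet Γ ∧ (∀ᵐ ω ∂P, ω ∈ Γ) ∧ ∀ ω ∈ Γ ∩ U, ∀ η ∈ Γ ∩ V, g ω ≠ g η := by
  have : IsProbabilityMeasure (P.map g) := Measure.isProbabilityMeasure_map hg.aemeasurable
  set κ := condDistrib id g P
  have hκ : P.map g ⊗ₘ κ = P.map fun ω ↦ (g ω, ω) := compProd_map_condDistrib aemeasurable_id
  have hgraph : ∀ᵐ q ∂(P.map fun ω ↦ (g ω, ω)), q.1 = g q.2 := by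
    rw [ae_map_iff (by fun_prop) (measurableSet_eq_fun (by fun_prop) (by fun_prop))]
    exact .of_forall fun _ ↦ rfl
  have law_fst := (map_compProd_prod_fst (P.map g) κ κ).trans hκ
  have law_snd := (map_compProd_prod_snd (P.map g) κ κ).trans hκ
  refine ⟨(P.map g ⊗ₘ (κ ×ₖ κ)).map Prod.snd, ⟨?_, ?_⟩, ?_, fun U V hU hV hUV ↦ ?_⟩
  · have := congrArg (Measure.map Prod.snd) law_fst
    rw [Measure.map_map (by fun_prop) (by fun_prop), Measure.map_map (by fun_prop) (by fun_prop)]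
      at this
    rw [Measure.map_map (by fun_prop) (by fun_prop)]
    exact this.trans Measure.map_id
  · have := congrArg (Measure.map Prod.snd) law_snd
    rw [Measure.map_map (by fun_prop) (by fun_prop), Measure.map_map (by fun_prop) (by fun_prop)]
      at this
    rw [Measure.map_map (by fun_prop) (by fun_prop)]
    exact this.trans Measure.map_id
  · have hfst := ae_of_ae_map (by fun_prop) (law_fst.symm ▸ hgraph)
    have hsnd := ae_of_ae_map (by fun_prop) (law_snd.symm ▸ hgraph)
    rw [ae_map_iff (by fun_prop) (measurableSet_eq_fun (by fun_prop) (by fun_prop))]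
    filter_upwards [hfst, hsnd] with z h₁ h₂
    exact h₁.symm.trans h₂
  · rw [Measure.map_apply measurable_snd (hU.prod hV)] at hUV
    exact exists_measurableSet_forall_ne_of_compProd_eq_zero hg hκ hU hV (by rwa [Set.univ_prod])

end FiberCoupling

lemma exists_countable_cover_openRectangles {A B : Type*} [TopologicalSpace A] [TopologicalSpace B]
    [SecondCountableTopology A] [SecondCountableTopology B] {R : Set (A × B)} (hR : IsOpen R) :
    ∃ C : Set (Set A × Set B), C.Countable ∧
      (∀ q ∈ C, IsOpen q.1 ∧ IsOpen q.2 ∧ q.1 ×ˢ q.2 ⊆ R) ∧ ∀ z ∈ R, ∃ q ∈ C, z ∈ q.1 ×ˢ q.2 := by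
  have hA := TopologicalSpace.isBasis_countableBasis A
  have hB := TopologicalSpace.isBasis_countableBasis B
  refine ⟨{q ∈ TopologicalSpace.countableBasis A ×ˢ TopologicalSpace.countableBasis B |
      q.1 ×ˢ q.2 ⊆ R},
    ((TopologicalSpace.countable_countableBasis A).prod
      (TopologicalSpace.countable_countableBasis B)).mono (Set.sep_subset _ _),
    fun q hq ↦ ⟨hA.isOpen hq.1.1, hB.isOpen hq.1.2, hq.2⟩, fun z hz ↦ ?_⟩
  obtain ⟨U, V, hU, hV, hzU, hzV, hUV⟩ := isOpen_prod_iff.1 hR z.1 z.2 hz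
  obtain ⟨U', hU'B, hzU', hU'⟩ := hA.exists_subset_of_mem_open hzU hU
  obtain ⟨V', hV'B, hzV', hV'⟩ := hB.exists_subset_of_mem_open hzV hV
  exact ⟨(U', V'), ⟨⟨hU'B, hV'B⟩, (Set.prod_mono hU' hV').trans hUV⟩, hzU', hzV'⟩

lemma LexOptimal.exists_forall_notMem_of_swapImproves [TopologicalSpace α] [TopologicalSpace β]
    [SecondCountableTopology α] [SecondCountableTopology β] [OpensMeasurableSpace α]
    [OpensMeasurableSpace β] [StandardBorelSpace α] [StandardBorelSpace β]
    [IsProbabilityMeasure μ] {c₁ c₂ : α × β → ℝ≥0} (hπ : LexOptimal c₁ c₂ μ ν π)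
    (hc₁ : Measurable c₁) (hc₂ : Measurable c₂) {S : Type*} [MeasurableSpace S] [MeasurableEq S]
    {g : α × β → S} (hg : Measurable g) {Γ₀ : Set (α × β)} (hΓ₀ : ∀ᵐ ω ∂π, ω ∈ Γ₀)
    {R : Set ((α × β) × (α × β))} (hR : IsOpen R)
    (himp : ∀ ω ∈ Γ₀, ∀ η ∈ Γ₀, g ω = g η → (ω, η) ∈ R → SwapImproves c₁ c₂ (ω, η)) :
    ∃ Γ, MeasurableSet Γ ∧ (∀ᵐ ω ∂π, ω ∈ Γ) ∧
      ∀ ω ∈ Γ, ∀ η ∈ Γ, g ω = g η → (ω, η) ∉ R := by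
  have := hπ.isCoupling.isProbabilityMeasure
  have := nonempty_of_isProbabilityMeasure π
  obtain ⟨Q, hQ, hfib, hQ_null⟩ := exists_fiberCoupling π hg
  have hQR : Q R = 0 := by
    refine hπ.measure_eq_zero_of_swapImproves hQ hc₁ hc₂ hR.measurableSet ?_
    filter_upwards [hfib, hQ.ae_fst hΓ₀, hQ.ae_snd hΓ₀] with q hq h₁ h₂
    exact himp _ h₁ _ h₂ hq
  obtain ⟨C, hC, hCR, hcov⟩ := exists_countable_cover_openRectangles hR
  choose! Γ hΓm hΓae hΓ using fun q (hq : q ∈ C) ↦ hQ_null q.1 q.2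
    (hCR q hq).1.measurableSet (hCR q hq).2.1.measurableSet (measure_mono_null (hCR q hq).2.2 hQR)
  refine ⟨⋂ q ∈ C, Γ q, .biInter hC hΓm, ?_, fun ω hω η hη hg_eq hmem ↦ ?_⟩
  · simpa only [Set.mem_iInter₂] using (ae_ball_iff hC).2 hΓae
  obtain ⟨q, hq, hωq, hηq⟩ := hcov _ hmem
  rw [Set.mem_iInter₂] at hω hη
  exact hΓ _ hq ω ⟨hω _ hq, hωq⟩ η ⟨hη _ hq, hηq⟩ hg_eq

end LexOptimal

/-! ### A mass–volume inequality for triangular interpolations -/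

section IncrementLE

variable {ι : Type*}

/-- Passing from `p` to `q` increases both `u` and `v`, and increases `ζ` by at least
`a` times the increase of `u` plus `b` times the increase of `v`. -/
def IncrementLE (a b : ℝ) (u v ζ : ι → ℝ) (p q : ι) : Prop :=
  u p ≤ u q ∧ v p ≤ v q ∧ a * (u q - u p) + b * (v q - v p) ≤ ζ q - ζ p

variable {a b : ℝ} {u v ζ : ι → ℝ} {S : Set ι}

lemma IncrementLE.symm_of_le {p q : ι} (ha : 0 < a) (hb : 0 < b) (h : IncrementLE a b u v ζ q p)
    (hζ : ζ p ≤ ζ q) : IncrementLE a b u v ζ p q := by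
  obtain ⟨hu, hv, hinc⟩ := h
  have hu' : a * (u p - u q) ≤ 0 := by nlinarith
  have hv' : b * (v p - v q) ≤ 0 := by nlinarith
  have hup : u p = u q := by nlinarith
  have hvp : v p = v q := by nlinarith
  exact ⟨hup.le, hvp.le, by rw [hup, hvp]; simpa using hζ⟩

lemma mul_abs_add_mul_abs_le_of_incrementLE (ha : 0 < a) (hb : 0 < b)
    (H : ∀ p ∈ S, ∀ q ∈ S, IncrementLE a b u v ζ p q ∨ IncrementLE a b u v ζ q p) {c d : ℝ}
    (hS : S ⊆ ζ ⁻¹' Set.Icc c d) {p q p' q' : ι} (hp : p ∈ S) (hq : q ∈ S) (hp' : p' ∈ S)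
    (hq' : q' ∈ S) : a * |u p - u q| + b * |v p' - v q'| ≤ d - c := by
  classical
  let pts : Finset ι := {p, q, p', q'}
  have hpts : ∀ r ∈ pts, r ∈ S := by
    intro r hr
    simp only [pts, Finset.mem_insert, Finset.mem_singleton] at hr
    rcases hr with rfl | rfl | rfl | rfl <;> assumption
  have hle : ∀ r ∈ pts, ∀ s ∈ pts, ζ r ≤ ζ s → IncrementLE a b u v ζ r s := fun r hr s hs h ↦
    (H r (hpts r hr) s (hpts s hs)).elim id fun h' ↦ h'.symm_of_le ha hb h
  obtain ⟨lo, hlo, hmin⟩ := pts.exists_min_image ζ ⟨p, by simp [pts]⟩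
  obtain ⟨hi, hhi, hmax⟩ := pts.exists_max_image ζ ⟨p, by simp [pts]⟩
  have hlo_le : ∀ r ∈ pts, u lo ≤ u r ∧ v lo ≤ v r := fun r hr ↦
    (hle lo hlo r hr (hmin r hr)).imp_right And.left
  have hle_hi : ∀ r ∈ pts, u r ≤ u hi ∧ v r ≤ v hi := fun r hr ↦
    (hle r hr hi hhi (hmax r hr)).imp_right And.left
  have hu : |u p - u q| ≤ u hi - u lo :=
    abs_sub_le_of_le_of_le (hlo_le p (by simp [pts])).1 (hle_hi p (by simp [pts])).1
      (hlo_le q (by simp [pts])).1 (hle_hi q (by simp [pts])).1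
  have hv : |v p' - v q'| ≤ v hi - v lo :=
    abs_sub_le_of_le_of_le (hlo_le p' (by simp [pts])).2 (hle_hi p' (by simp [pts])).2
      (hlo_le q' (by simp [pts])).2 (hle_hi q' (by simp [pts])).2
  calc a * |u p - u q| + b * |v p' - v q'|
      ≤ a * (u hi - u lo) + b * (v hi - v lo) := by gcongr
    _ ≤ ζ hi - ζ lo := (hle lo hlo hi hhi (hmin hi hhi)).2.2
    _ ≤ d - c := sub_le_sub (hS (hpts hi hhi)).2 (hS (hpts lo hlo)).1

lemma mul_ediam_add_le {E : Type*} [PseudoEMetricSpace E] {s : Set E} (hs : s.Nonempty)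
    {c N M : ℝ≥0∞} (hM : M ≠ ∞) (h : ∀ x ∈ s, ∀ y ∈ s, c * edist x y + N ≤ M) :
    c * Metric.ediam s + N ≤ M := by
  obtain ⟨x, hx⟩ := hs
  have hN : N ≤ M := le_add_self.trans (h x hx x hx)
  refine add_le_of_le_tsub_right_of_le hN ?_
  simp only [Metric.ediam, ENNReal.mul_iSup]
  exact iSup₂_le fun x hx ↦ iSup₂_le fun y hy ↦
    ENNReal.le_sub_of_add_le_right (ne_top_of_le_ne_top hM hN) (h x hx y hy)

lemma mul_volume_add_mul_volume_le_of_incrementLE_of_subset_Icc (ha : 0 < a) (hb : 0 < b)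
    (H : ∀ p ∈ S, ∀ q ∈ S, IncrementLE a b u v ζ p q ∨ IncrementLE a b u v ζ q p) {c d : ℝ}
    (hS : S ⊆ ζ ⁻¹' Set.Icc c d) :
    ENNReal.ofReal a * volume (u '' S) + ENNReal.ofReal b * volume (v '' S)
      ≤ ENNReal.ofReal (d - c) := by
  rcases S.eq_empty_or_nonempty with rfl | hne
  · simp
  calc ENNReal.ofReal a * volume (u '' S) + ENNReal.ofReal b * volume (v '' S)
      ≤ ENNReal.ofReal a * Metric.ediam (u '' S) + ENNReal.ofReal b * Metric.ediam (v '' S) := by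
        gcongr <;> exact Real.volume_le_diam _
    _ ≤ ENNReal.ofReal (d - c) := ?_
  refine mul_ediam_add_le (hne.image u) ENNReal.ofReal_ne_top ?_
  rintro _ ⟨p, hp, rfl⟩ _ ⟨q, hq, rfl⟩
  rw [add_comm]
  refine mul_ediam_add_le (hne.image v) ENNReal.ofReal_ne_top ?_
  rintro _ ⟨p', hp', rfl⟩ _ ⟨q', hq', rfl⟩
  rw [add_comm, edist_dist, edist_dist, Real.dist_eq, Real.dist_eq, ← ENNReal.ofReal_mul ha.le,
    ← ENNReal.ofReal_mul hb.le, ← ENNReal.ofReal_add (by positivity) (by positivity)]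
  exact ENNReal.ofReal_le_ofReal
    (mul_abs_add_mul_abs_le_of_incrementLE ha hb H hS hp hq hp' hq')

lemma outerMeasure_le_volume_of_Ioc_le {N : OuterMeasure ℝ}
    (hN : ∀ c d, N (Set.Ioc c d) ≤ ENNReal.ofReal (d - c)) (E : Set ℝ) : N E ≤ volume E := by
  rw [Real.volume_eq_stieltjes_id, StieltjesFunction.measure_def]
  suffices N ≤ StieltjesFunction.id.outer from this E
  rw [StieltjesFunction.outer, OuterMeasure.le_ofFunction]
  intro s
  have hbot : (botSet : Set ℝ) = ∅ := Set.eq_empty_of_forall_notMem fun x h ↦ not_isBot x h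
  rw [StieltjesFunction.length, if_neg (not_isEmpty_of_nonempty ℝ), hbot, Set.sdiff_empty]
  exact le_iInf₂ fun c d ↦ le_iInf fun hs ↦ (N.mono hs).trans (hN c d)

lemma mul_volume_add_mul_volume_le_of_incrementLE (ha : 0 < a) (hb : 0 < b)
    (H : ∀ p ∈ S, ∀ q ∈ S, IncrementLE a b u v ζ p q ∨ IncrementLE a b u v ζ q p) :
    ENNReal.ofReal a * volume (u '' S) + ENNReal.ofReal b * volume (v '' S)
      ≤ volume (ζ '' S) := by
  let N : OuterMeasure ℝ :=
    { measureOf := fun E ↦ ENNReal.ofReal a * volume (u '' (S ∩ ζ ⁻¹' E)) +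
        ENNReal.ofReal b * volume (v '' (S ∩ ζ ⁻¹' E))
      empty := by simp
      mono := fun {E F} hEF ↦ by gcongr
      iUnion_nat := fun E _ ↦ by
        simp only [Set.preimage_iUnion, Set.inter_iUnion, Set.image_iUnion]
        rw [ENNReal.tsum_add, ENNReal.tsum_mul_left, ENNReal.tsum_mul_left]
        gcongr <;> exact measure_iUnion_le _ }
  have hIoc : ∀ c d, N (Set.Ioc c d) ≤ ENNReal.ofReal (d - c) := fun c d ↦
    mul_volume_add_mul_volume_le_of_incrementLE_of_subset_Icc ha hb
      (fun p hp q hq ↦ H p hp.1 q hq.1)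
      (Set.inter_subset_right.trans (Set.preimage_mono Set.Ioc_subset_Icc_self))
  have hS : S ∩ ζ ⁻¹' (ζ '' S) = S := Set.inter_eq_left.2 (Set.subset_preimage_image ζ S)
  calc ENNReal.ofReal a * volume (u '' S) + ENNReal.ofReal b * volume (v '' S)
      = N (ζ '' S) := by
        change _ = ENNReal.ofReal a * volume (u '' (S ∩ ζ ⁻¹' (ζ '' S))) +
          ENNReal.ofReal b * volume (v '' (S ∩ ζ ⁻¹' (ζ '' S)))
        rw [hS]
    _ ≤ volume (ζ '' S) := outerMeasure_le_volume_of_Ioc_le hIoc _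

end IncrementLE

lemma ennreal_geom_mean_le_arith_mean {t : ℝ} (ht₀ : 0 < t) (ht₁ : t < 1) (p q : ℝ≥0∞) :
    p ^ (1 - t) * q ^ t ≤ ENNReal.ofReal (1 - t) * p + ENNReal.ofReal t * q := by
  rcases eq_or_ne p ∞ with rfl | hp
  · simp [ENNReal.mul_top, ht₁]
  rcases eq_or_ne q ∞ with rfl | hq
  · simp [ENNReal.mul_top, ht₀]
  lift p to ℝ≥0 using hp
  lift q to ℝ≥0 using hq
  have := NNReal.geom_mean_le_arith_mean2_weighted (1 - t).toNNReal t.toNNReal p q (by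
    rw [← Real.toNNReal_add (by linarith) ht₀.le]; simp)
  rw [Real.coe_toNNReal _ (by linarith), Real.coe_toNNReal _ ht₀.le] at this
  rw [← ENNReal.coe_rpow_of_nonneg _ (by linarith), ← ENNReal.coe_rpow_of_nonneg _ ht₀.le,
    ENNReal.ofReal, ENNReal.ofReal]
  exact_mod_cast this

lemma exists_monotone_extension {ι : Type*} {S : Set ι} (hS : S.Nonempty) {z x : ι → ℝ} {K : ℝ}
    (hK : 0 ≤ K)
    (H : ∀ p ∈ S, ∀ q ∈ S, z p ≤ z q → x p ≤ x q ∧ x q - x p ≤ K * (z q - z p)) :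
    ∃ X : ℝ → ℝ, Monotone X ∧ (∀ u v, u ≤ v → X v - X u ≤ K * (v - u)) ∧
      ∀ s ∈ S, X (z s) = x s := by
  have : Nonempty S := hS.to_subtype
  obtain ⟨s₀, hs₀⟩ := hS
  have bdd : ∀ u, BddAbove (Set.range fun s : S ↦ x s - K * max (z s - u) 0) := by
    refine fun u ↦ ⟨x s₀ + K * max (u - z s₀) 0, Set.forall_mem_range.2 fun s ↦ ?_⟩
    rcases le_total (z s) (z s₀) with h | h
    · have := (H s s.2 s₀ hs₀ h).1
      have : 0 ≤ K * max (z s - u) 0 := by positivity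
      have : 0 ≤ K * max (u - z s₀) 0 := by positivity
      linarith
    · have := (H s₀ hs₀ s s.2 h).2
      have : K * (z s - z s₀) ≤ K * (max (z s - u) 0 + max (u - z s₀) 0) := by
        gcongr
        linarith [le_max_left (z s - u) 0, le_max_left (u - z s₀) 0]
      linarith
  refine ⟨fun u ↦ ⨆ s : S, (x s - K * max (z s - u) 0), ?_, ?_, ?_⟩
  · exact fun u v huv ↦ ciSup_mono (bdd v) fun s ↦ by gcongr
  · intro u v huv
    rw [sub_le_iff_le_add']
    refine ciSup_le fun s ↦ le_trans ?_ (add_le_add_left (le_ciSup (bdd u) s) _)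
    have : max (z s - u) 0 ≤ max (z s - v) 0 + (v - u) :=
      max_le (by linarith [le_max_left (z s - v) 0]) (by linarith [le_max_right (z s - v) 0])
    have := mul_le_mul_of_nonneg_left this hK
    linarith
  · intro s hs
    refine le_antisymm (ciSup_le fun s' ↦ ?_) (le_trans (by simp) (le_ciSup (bdd (z s)) ⟨s, hs⟩))
    rcases le_total (z s') (z s) with h | h
    · rw [max_eq_right (by linarith)]
      simpa using (H s' s'.2 s hs h).1
    · rw [max_eq_left (by linarith)]
      linarith [(H s hs s' s'.2 h).2]

lemma lipschitzWith_of_monotone_of_mul_add_mul_eq {a b : ℝ} (ha : 0 < a) (hb : 0 ≤ b) {X Y : ℝ → ℝ}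
    (hX : Monotone X) (hY : Monotone Y) (h : ∀ u, a * X u + b * Y u = u) :
    LipschitzWith a⁻¹.toNNReal X := by
  refine LipschitzWith.of_le_add_mul _ fun u v ↦ ?_
  rw [Real.coe_toNNReal _ (by positivity), Real.dist_eq]
  rcases le_total u v with huv | hvu
  · linarith [hX huv, mul_nonneg (inv_nonneg.2 ha.le) (abs_nonneg (u - v))]
  · have hinc : a * (X u - X v) ≤ u - v := by
      nlinarith [h u, h v, mul_le_mul_of_nonneg_left (hY hvu) hb]
    rw [abs_of_nonneg (sub_nonneg.2 hvu), ← sub_le_iff_le_add', inv_mul_eq_div, le_div_iff₀ ha]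
    linarith

lemma exists_monotone_pair_of_monotoneOn {ι : Type*} {S : Set ι} (hS : S.Nonempty) {t : ℝ}
    (ht₀ : 0 < t) (ht₁ : t < 1) {x₀ x₁ : ι → ℝ}
    (H : ∀ p ∈ S, ∀ q ∈ S, x₀ p < x₀ q → x₁ p ≤ x₁ q) :
    ∃ X₀ X₁ : ℝ → ℝ, Monotone X₀ ∧ Monotone X₁ ∧ (∀ u, (1 - t) * X₀ u + t * X₁ u = u) ∧
      ∀ p ∈ S, X₀ ((1 - t) * x₀ p + t * x₁ p) = x₀ p ∧ X₁ ((1 - t) * x₀ p + t * x₁ p) = x₁ p := by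
  have hs₀ : 0 < 1 - t := sub_pos.2 ht₁
  obtain ⟨X₀, hX₀, hincr, hval⟩ := exists_monotone_extension hS
    (z := fun p ↦ (1 - t) * x₀ p + t * x₁ p) (x := x₀) (K := (1 - t)⁻¹) (by positivity) (by
      intro p hp q hq hpq
      have hx₀ : x₀ p ≤ x₀ q := by
        by_contra! hlt
        nlinarith [H q hq p hp hlt]
      have hx₁ : x₁ p ≤ x₁ q := by
        rcases hx₀.lt_or_eq with hlt | heq
        · exact H p hp q hq hlt
        · nlinarith
      refine ⟨hx₀, ?_⟩
      rw [inv_mul_eq_div, le_div_iff₀ hs₀]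
      nlinarith)
  refine ⟨X₀, fun u ↦ (u - (1 - t) * X₀ u) / t, hX₀, fun u v huv ↦ ?_, fun u ↦ ?_,
    fun p hp ↦ ⟨hval p hp, ?_⟩⟩
  · have := hincr u v huv
    rw [inv_mul_eq_div, le_div_iff₀ hs₀] at this
    exact div_le_div_of_nonneg_right (by linarith) ht₀.le
  · rw [mul_div_cancel₀ _ ht₀.ne']
    ring
  · simp only [hval p hp]
    field_simp
    ring

lemma ofReal_abs_deriv_rpow_mul_le_one {t : ℝ} (ht₀ : 0 < t) (ht₁ : t < 1) {X₀ X₁ : ℝ → ℝ}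
    (hX₀ : Monotone X₀) (hX₁ : Monotone X₁) (h : ∀ u, (1 - t) * X₀ u + t * X₁ u = u) :
    ∀ᵐ z, ENNReal.ofReal |deriv X₀ z| ^ (1 - t) * ENNReal.ofReal |deriv X₁ z| ^ t ≤ 1 := by
  filter_upwards [hX₀.ae_differentiableAt, hX₁.ae_differentiableAt] with z hz₀ hz₁
  have hderiv : (1 - t) * deriv X₀ z + t * deriv X₁ z = 1 := by
    have hsum := (hz₀.hasDerivAt.const_mul (1 - t)).add (hz₁.hasDerivAt.const_mul t)
    exact hsum.unique ((hasDerivAt_id z).congr_of_eventuallyEq (.of_forall h))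
  refine (ennreal_geom_mean_le_arith_mean ht₀ ht₁ _ _).trans ?_
  rw [abs_of_nonneg hX₀.deriv_nonneg, abs_of_nonneg hX₁.deriv_nonneg,
    ← ENNReal.ofReal_mul (sub_nonneg.2 ht₁.le), ← ENNReal.ofReal_mul ht₀.le,
    ← ENNReal.ofReal_add (mul_nonneg (sub_nonneg.2 ht₁.le) hX₀.deriv_nonneg)
      (mul_nonneg ht₀.le hX₁.deriv_nonneg), hderiv, ENNReal.ofReal_one]

lemma volume_image_eq_zero_of_lipschitzWith {X : ℝ → ℝ} {K : ℝ≥0} (hX : LipschitzWith K X)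
    {s : Set ℝ} (hs : volume s = 0) : volume (X '' s) = 0 := by
  have himage := hX.hausdorffMeasure_image_le zero_le_one s
  rwa [hausdorffMeasure_real, hs, mul_zero, nonpos_iff_eq_zero] at himage

lemma volume_image_prodMap_id_le_lintegral {X : ℝ → ℝ} {s : Set (ℝ × ℝ)} (hs : MeasurableSet s)
    (hX : ∀ q ∈ s, DifferentiableAt ℝ X q.1) :
    volume (Prod.map X id '' s) ≤ ∫⁻ z, ENNReal.ofReal |deriv X z| * volume (Prod.mk z ⁻¹' s) := by
  let X' : ℝ × ℝ → (ℝ × ℝ) →L[ℝ] (ℝ × ℝ) := fun q ↦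
    (ContinuousLinearMap.toSpanSingleton ℝ (deriv X q.1)).prodMap (ContinuousLinearMap.id ℝ ℝ)
  have hdet : ∀ q, (X' q).det = deriv X q.1 := fun q ↦ by
    rw [ContinuousLinearMap.det, ContinuousLinearMap.coe_prodMap, LinearMap.det_prodMap]
    simp
  have hX' : ∀ q ∈ s, HasFDerivWithinAt (Prod.map X id) (X' q) s q := fun q hq ↦
    ((hX q hq).hasDerivAt.hasFDerivAt.prodMap q (hasFDerivAt_id q.2)).hasFDerivWithinAt
  have hmeas : Measurable fun q : ℝ × ℝ ↦ ENNReal.ofReal |deriv X q.1| :=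
    ((measurable_deriv X).comp measurable_fst).abs.ennreal_ofReal
  calc volume (Prod.map X id '' s)
      ≤ ∫⁻ q in s, ENNReal.ofReal |(X' q).det| :=
        addHaar_image_le_lintegral_abs_det_fderiv volume hs hX'
    _ = ∫⁻ q, s.indicator (fun q ↦ ENNReal.ofReal |deriv X q.1|) q := by
        simp only [hdet, lintegral_indicator hs]
    _ = ∫⁻ z, ∫⁻ y, s.indicator (fun q ↦ ENNReal.ofReal |deriv X q.1|) (z, y) := by
        rw [Measure.volume_eq_prod, lintegral_prod _ (hmeas.indicator hs).aemeasurable]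
    _ = ∫⁻ z, ENNReal.ofReal |deriv X z| * volume (Prod.mk z ⁻¹' s) :=
        lintegral_congr fun z ↦ lintegral_indicator_const (s := Prod.mk z ⁻¹' s)
          (measurable_prodMk_left hs) (ENNReal.ofReal |deriv X z|)

lemma volume_image_prodMap_id_le_of_lipschitzWith {X : ℝ → ℝ} {K : ℝ≥0} (hX : LipschitzWith K X)
    {s : Set (ℝ × ℝ)} (hs : MeasurableSet s) :
    volume (Prod.map X id '' s) ≤ ∫⁻ z, ENNReal.ofReal |deriv X z| * volume (Prod.mk z ⁻¹' s) := by
  set D : Set ℝ := {z | DifferentiableAt ℝ X z}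
  have hD : MeasurableSet D := measurableSet_of_differentiableAt ℝ X
  have hnull : volume ((X '' Dᶜ) ×ˢ (Set.univ : Set ℝ)) = 0 := by
    rw [Measure.volume_eq_prod, Measure.prod_prod,
      volume_image_eq_zero_of_lipschitzWith hX hX.ae_differentiableAt, zero_mul]
  have hcover : Prod.map X id '' s ⊆
      Prod.map X id '' (s ∩ Prod.fst ⁻¹' D) ∪ (X '' Dᶜ) ×ˢ Set.univ := by
    rintro _ ⟨q, hq, rfl⟩
    by_cases hqD : q.1 ∈ D
    · exact .inl ⟨q, ⟨hq, hqD⟩, rfl⟩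
    · exact .inr ⟨⟨q.1, hqD, rfl⟩, trivial⟩
  calc volume (Prod.map X id '' s)
      ≤ volume (Prod.map X id '' (s ∩ Prod.fst ⁻¹' D)) + 0 := by
        rw [← hnull]
        exact (measure_mono hcover).trans (measure_union_le _ _)
    _ ≤ ∫⁻ z, ENNReal.ofReal |deriv X z| * volume (Prod.mk z ⁻¹' (s ∩ Prod.fst ⁻¹' D)) := by
        rw [add_zero]
        exact volume_image_prodMap_id_le_lintegral (hs.inter (measurable_fst hD)) fun q hq ↦ hq.2
    _ ≤ ∫⁻ z, ENNReal.ofReal |deriv X z| * volume (Prod.mk z ⁻¹' s) := by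
        gcongr
        exact Set.inter_subset_left

lemma measure_le_lintegral_rpow_mul_rpow {Ω γ : Type*} {mΩ : MeasurableSpace Ω}
    {mγ : MeasurableSpace γ} {π : Measure Ω} {ν : Measure γ} {S : Set Ω} {z : Ω → γ} {t : ℝ}
    (ht₀ : 0 ≤ t) (ht₁ : t ≤ 1) {h₀ h₁ : γ → ℝ≥0∞} (hm₀ : Measurable h₀) (hm₁ : Measurable h₁)
    (hle₀ : ∀ E, MeasurableSet E → π (S ∩ z ⁻¹' E) ≤ ∫⁻ x in E, h₀ x ∂ν)
    (hle₁ : ∀ E, MeasurableSet E → π (S ∩ z ⁻¹' E) ≤ ∫⁻ x in E, h₁ x ∂ν) :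
    π S ≤ ∫⁻ x, h₀ x ^ (1 - t) * h₁ x ^ t ∂ν := by
  have hself : ∀ a : ℝ≥0∞, a = a ^ (1 - t) * a ^ t := fun a ↦ by
    rw [← ENNReal.rpow_add_of_nonneg _ _ (sub_nonneg.2 ht₁) ht₀, sub_add_cancel, ENNReal.rpow_one]
  set P := {x | h₀ x ≤ h₁ x}
  have hP : MeasurableSet P := measurableSet_le hm₀ hm₁
  calc π S ≤ π (S ∩ z ⁻¹' P) + π (S ∩ z ⁻¹' Pᶜ) := by
        rw [Set.preimage_compl, ← Set.sdiff_eq]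
        exact measure_le_inter_add_sdiff π S _
    _ ≤ (∫⁻ x in P, h₀ x ∂ν) + ∫⁻ x in Pᶜ, h₁ x ∂ν :=
        add_le_add (hle₀ P hP) (hle₁ Pᶜ hP.compl)
    _ ≤ (∫⁻ x in P, h₀ x ^ (1 - t) * h₁ x ^ t ∂ν) +
          ∫⁻ x in Pᶜ, h₀ x ^ (1 - t) * h₁ x ^ t ∂ν := by
        refine add_le_add (setLIntegral_mono' hP fun x hx ↦ ?_)
          (setLIntegral_mono' hP.compl fun x hx ↦ ?_)
        · calc h₀ x = h₀ x ^ (1 - t) * h₀ x ^ t := hself _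
            _ ≤ _ := by gcongr; exact hx
        · calc h₁ x = h₁ x ^ (1 - t) * h₁ x ^ t := hself _
            _ ≤ _ := by gcongr; exact le_of_not_ge hx
    _ = ∫⁻ x, h₀ x ^ (1 - t) * h₁ x ^ t ∂ν := lintegral_add_compl _ hP

lemma mul_le_mul_volume_of_slice_le {t : ℝ} (ht₀ : 0 ≤ t) (ht₁ : t ≤ 1) {m a b c : ℝ≥0∞}
    {d₀ d₁ φ₀ φ₁ : ℝ → ℝ≥0∞} {T : Set (ℝ × ℝ)}
    (hmass : m ≤ ∫⁻ u, (a * (d₀ u * φ₀ u)) ^ (1 - t) * (b * (d₁ u * φ₁ u)) ^ t)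
    (hd : ∀ᵐ u, d₀ u ^ (1 - t) * d₁ u ^ t ≤ 1)
    (hslice : ∀ u, c * (φ₀ u ^ (1 - t) * φ₁ u ^ t) ≤ volume (Prod.mk u ⁻¹' T)) :
    c * m ≤ a ^ (1 - t) * b ^ t * volume T := by
  have hT := measurableSet_toMeasurable (volume : Measure (ℝ × ℝ)) T
  calc c * m
      ≤ c * ∫⁻ u, (a * (d₀ u * φ₀ u)) ^ (1 - t) * (b * (d₁ u * φ₁ u)) ^ t := by gcongr
    _ ≤ ∫⁻ u, c * ((a * (d₀ u * φ₀ u)) ^ (1 - t) * (b * (d₁ u * φ₁ u)) ^ t) :=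
        lintegral_const_mul_le _ _
    _ = ∫⁻ u, a ^ (1 - t) * b ^ t *
          (d₀ u ^ (1 - t) * d₁ u ^ t * (c * (φ₀ u ^ (1 - t) * φ₁ u ^ t))) :=
        lintegral_congr fun u ↦ by
          simp only [ENNReal.mul_rpow_of_nonneg _ _ (sub_nonneg.2 ht₁),
            ENNReal.mul_rpow_of_nonneg _ _ ht₀]
          ring
    _ ≤ ∫⁻ u, a ^ (1 - t) * b ^ t * (1 * volume (Prod.mk u ⁻¹' toMeasurable volume T)) := by
        refine lintegral_mono_ae ?_
        filter_upwards [hd] with u hu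
        gcongr
        exact (hslice u).trans (measure_mono (Set.preimage_mono (subset_toMeasurable _ _)))
    _ = a ^ (1 - t) * b ^ t * volume T := by
        simp only [one_mul]
        rw [lintegral_const_mul _ (measurable_measure_prodMk_left hT), ← measure_toMeasurable T]
        congr 1
        exact (Measure.prod_apply hT).symm

section Triangular

variable {Ω : Type*} {t A B : ℝ} {p₀ p₁ Z : Ω → ℝ × ℝ} {S : Set Ω}

/-- On `S`, the point `Z` interpolates between `p₀` and `p₁` in triangular form: linearly and
monotonically in the first coordinate and, for coinciding first coordinates, in the second
coordinate with increments at least `A (1 - t)` and `B t` times those of `p₀` and `p₁`. -/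
structure TriangularInterpolation (t A B : ℝ) (p₀ p₁ Z : Ω → ℝ × ℝ) (S : Set Ω) : Prop where
  fst_eq : ∀ ω ∈ S, (Z ω).1 = (1 - t) * (p₀ ω).1 + t * (p₁ ω).1
  fst_mono : ∀ ω ∈ S, ∀ η ∈ S, (p₀ ω).1 < (p₀ η).1 → (p₁ ω).1 ≤ (p₁ η).1
  snd_increments : ∀ ω ∈ S, ∀ η ∈ S, (p₀ ω).1 = (p₀ η).1 → (p₁ ω).1 = (p₁ η).1 →
    IncrementLE (A * (1 - t)) (B * t) (fun ω ↦ (p₀ ω).2) (fun ω ↦ (p₁ ω).2) (fun ω ↦ (Z ω).2) ω η ∨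
    IncrementLE (A * (1 - t)) (B * t) (fun ω ↦ (p₀ ω).2) (fun ω ↦ (p₁ ω).2) (fun ω ↦ (Z ω).2) η ω

/-- On `P`, the point `Z` interpolates between `p₀` and `p₁` linearly and monotonically in the first
coordinate and, for coinciding first coordinates, its second coordinate has slopes `(1 - t) g₀` and
`t g₁` averaged over the two points: the form of interpolations quadratic along each fibre. -/
structure AverageSlopeInterpolation (t : ℝ) (g₀ g₁ : Ω → ℝ) (p₀ p₁ Z : Ω → ℝ × ℝ)
    (P : Set Ω) : Prop where
  fst_eq : ∀ ω ∈ P, (Z ω).1 = (1 - t) * (p₀ ω).1 + t * (p₁ ω).1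
  fst_mono : ∀ ω ∈ P, ∀ η ∈ P, (p₀ ω).1 < (p₀ η).1 → (p₁ ω).1 ≤ (p₁ η).1
  snd_comonotone : ∀ ω ∈ P, ∀ η ∈ P, (p₀ ω).1 = (p₀ η).1 → (p₁ ω).1 = (p₁ η).1 →
    (p₀ ω).2 ≤ (p₀ η).2 ∧ (p₁ ω).2 ≤ (p₁ η).2 ∨ (p₀ η).2 ≤ (p₀ ω).2 ∧ (p₁ η).2 ≤ (p₁ ω).2
  snd_eq : ∀ ω ∈ P, ∀ η ∈ P, (p₀ ω).1 = (p₀ η).1 → (p₁ ω).1 = (p₁ η).1 →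
    (Z η).2 - (Z ω).2 = (g₀ ω + g₀ η) / 2 * (1 - t) * ((p₀ η).2 - (p₀ ω).2) +
      (g₁ ω + g₁ η) / 2 * t * ((p₁ η).2 - (p₁ ω).2)

lemma AverageSlopeInterpolation.mono {g₀ g₁ : Ω → ℝ} {P Q : Set Ω}
    (h : AverageSlopeInterpolation t g₀ g₁ p₀ p₁ Z P) (hQP : Q ⊆ P) :
    AverageSlopeInterpolation t g₀ g₁ p₀ p₁ Z Q where
  fst_eq ω hω := h.fst_eq ω (hQP hω)
  fst_mono ω hω η hη := h.fst_mono ω (hQP hω) η (hQP hη)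
  snd_comonotone ω hω η hη := h.snd_comonotone ω (hQP hω) η (hQP hη)
  snd_eq ω hω η hη := h.snd_eq ω (hQP hω) η (hQP hη)

lemma AverageSlopeInterpolation.triangularInterpolation {g₀ g₁ : Ω → ℝ} {P : Set Ω}
    (h : AverageSlopeInterpolation t g₀ g₁ p₀ p₁ Z P)
    (ht₀ : 0 ≤ t) (ht₁ : t ≤ 1) (A B : ℝ) :
    TriangularInterpolation t A B p₀ p₁ Z (P ∩ {ω | A ≤ g₀ ω ∧ B ≤ g₁ ω}) where
  fst_eq ω hω := h.fst_eq ω hω.1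
  fst_mono ω hω η hη := h.fst_mono ω hω.1 η hη.1
  snd_increments ω hω η hη h₀ h₁ := by
    have hslope : ∀ ω ∈ P ∩ {ω | A ≤ g₀ ω ∧ B ≤ g₁ ω}, ∀ η ∈ P ∩ {ω | A ≤ g₀ ω ∧ B ≤ g₁ ω},
        (p₀ ω).1 = (p₀ η).1 → (p₁ ω).1 = (p₁ η).1 → (p₀ ω).2 ≤ (p₀ η).2 ∧ (p₁ ω).2 ≤ (p₁ η).2 →
        IncrementLE (A * (1 - t)) (B * t) (fun ω ↦ (p₀ ω).2) (fun ω ↦ (p₁ ω).2)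
          (fun ω ↦ (Z ω).2) ω η := by
      rintro ω ⟨hω, hA, hB⟩ η ⟨hη, hA', hB'⟩ h₀ h₁ ⟨hle₀, hle₁⟩
      refine ⟨hle₀, hle₁, ?_⟩
      rw [h.snd_eq ω hω η hη h₀ h₁]
      have := sub_nonneg.2 hle₀
      have := sub_nonneg.2 hle₁
      have := sub_nonneg.2 ht₁
      gcongr <;> linarith
    exact (h.snd_comonotone ω hω.1 η hη.1 h₀ h₁).imp (hslope ω hω η hη h₀ h₁)
      (hslope η hη ω hω h₀.symm h₁.symm)

namespace TriangularInterpolation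

lemma mono {S' : Set Ω} (h : TriangularInterpolation t A B p₀ p₁ Z S) (hS : S' ⊆ S) :
    TriangularInterpolation t A B p₀ p₁ Z S' where
  fst_eq ω hω := h.fst_eq ω (hS hω)
  fst_mono ω hω η hη := h.fst_mono ω (hS hω) η (hS hη)
  snd_increments ω hω η hη := h.snd_increments ω (hS hω) η (hS hη)

lemma mul_volume_slice_le (h : TriangularInterpolation t A B p₀ p₁ Z S) (ht₀ : 0 < t) (ht₁ : t < 1)
    (hA : 0 < A) (hB : 0 < B) {X₀ X₁ : ℝ → ℝ} (hX₀ : ∀ ω ∈ S, X₀ (Z ω).1 = (p₀ ω).1)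
    (hX₁ : ∀ ω ∈ S, X₁ (Z ω).1 = (p₁ ω).1) (z : ℝ) :
    ENNReal.ofReal A ^ (1 - t) * ENNReal.ofReal B ^ t *
      (volume (Prod.mk z ⁻¹' ((fun ω ↦ ((Z ω).1, (p₀ ω).2)) '' S)) ^ (1 - t) *
        volume (Prod.mk z ⁻¹' ((fun ω ↦ ((Z ω).1, (p₁ ω).2)) '' S)) ^ t)
      ≤ volume (Prod.mk z ⁻¹' (Z '' S)) := by
  have hs₀ : 0 < 1 - t := sub_pos.2 ht₁
  have hslice : ∀ y : Ω → ℝ, Prod.mk z ⁻¹' ((fun ω ↦ ((Z ω).1, y ω)) '' S)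
      = y '' (S ∩ {ω | (Z ω).1 = z}) := fun y ↦ by
    ext; simp [and_assoc]
  have hincr := mul_volume_add_mul_volume_le_of_incrementLE (S := S ∩ {ω | (Z ω).1 = z})
    (mul_pos hA hs₀) (mul_pos hB ht₀) (by
      rintro ω ⟨hω, rfl⟩ η ⟨hη, hηω⟩
      rw [Set.mem_ofPred_eq] at hηω
      refine h.snd_increments ω hω η hη ?_ ?_
      · rw [← hX₀ ω hω, ← hX₀ η hη, hηω]
      · rw [← hX₁ ω hω, ← hX₁ η hη, hηω])
  rw [hslice, hslice, show Z '' S = (fun ω ↦ ((Z ω).1, (Z ω).2)) '' S from rfl, hslice]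
  refine le_trans ?_ hincr
  rw [ENNReal.ofReal_mul hA.le, ENNReal.ofReal_mul hB.le]
  have hgm := ennreal_geom_mean_le_arith_mean ht₀ ht₁
    (ENNReal.ofReal A * volume ((fun ω ↦ (p₀ ω).2) '' (S ∩ {ω | (Z ω).1 = z})))
    (ENNReal.ofReal B * volume ((fun ω ↦ (p₁ ω).2) '' (S ∩ {ω | (Z ω).1 = z})))
  rw [ENNReal.mul_rpow_of_nonneg _ _ hs₀.le, ENNReal.mul_rpow_of_nonneg _ _ ht₀.le] at hgm
  calc _ = _ := by ring
    _ ≤ _ := hgm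
    _ = _ := by ring

end TriangularInterpolation

variable [MeasurableSpace Ω] {π : Measure Ω}

lemma measure_inter_le_lintegral_of_lipschitzWith {X : ℝ → ℝ} {K : ℝ≥0} (hX : LipschitzWith K X)
    {p : Ω → ℝ × ℝ} {z : Ω → ℝ} (hval : ∀ ω ∈ S, X (z ω) = (p ω).1)
    (hQ : MeasurableSet ((fun ω ↦ (z ω, (p ω).2)) '' S)) {a : ℝ≥0∞}
    (hπ : ∀ E, MeasurableSet E → π (S ∩ p ⁻¹' E) ≤ a * volume E) {E : Set ℝ}
    (hE : MeasurableSet E) :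
    π (S ∩ z ⁻¹' E) ≤ ∫⁻ u in E, a * (ENNReal.ofReal |deriv X u| *
      volume (Prod.mk u ⁻¹' ((fun ω ↦ (z ω, (p ω).2)) '' S))) := by
  set Q := (fun ω ↦ (z ω, (p ω).2)) '' S
  have hsub : S ∩ z ⁻¹' E ⊆
      S ∩ p ⁻¹' toMeasurable volume (Prod.map X id '' (Q ∩ Prod.fst ⁻¹' E)) := by
    rintro ω ⟨hω, hωE⟩
    exact ⟨hω, subset_toMeasurable _ _
      ⟨(z ω, (p ω).2), ⟨⟨ω, hω, rfl⟩, hωE⟩, Prod.ext (hval ω hω) rfl⟩⟩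
  have hmeas : Measurable fun u ↦ ENNReal.ofReal |deriv X u| * volume (Prod.mk u ⁻¹' Q) :=
    (measurable_deriv X).abs.ennreal_ofReal.mul (measurable_measure_prodMk_left hQ)
  calc π (S ∩ z ⁻¹' E)
      ≤ a * volume (Prod.map X id '' (Q ∩ Prod.fst ⁻¹' E)) := by
        rw [← measure_toMeasurable (Prod.map X id '' _)]
        exact (measure_mono hsub).trans (hπ _ (measurableSet_toMeasurable _ _))
    _ ≤ a * ∫⁻ u, ENNReal.ofReal |deriv X u| * volume (Prod.mk u ⁻¹' (Q ∩ Prod.fst ⁻¹' E)) := by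
        gcongr
        exact volume_image_prodMap_id_le_of_lipschitzWith hX (hQ.inter (measurable_fst hE))
    _ = a * ∫⁻ u in E, ENNReal.ofReal |deriv X u| * volume (Prod.mk u ⁻¹' Q) := by
        rw [← lintegral_indicator hE]
        congr 2 with u
        by_cases hu : u ∈ E <;> simp [hu, ← Set.preimage_comp, Function.comp_def]
    _ = _ := (lintegral_const_mul _ hmeas).symm

theorem TriangularInterpolation.mul_measure_le_of_isCompact [TopologicalSpace Ω]
    (h : TriangularInterpolation t A B p₀ p₁ Z S) (hS : IsCompact S) (hp₀ : Continuous p₀)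
    (hp₁ : Continuous p₁) (ht₀ : 0 < t) (ht₁ : t < 1) (hA : 0 < A) (hB : 0 < B) {a b : ℝ≥0∞}
    (hπ₀ : ∀ E, MeasurableSet E → π (S ∩ p₀ ⁻¹' E) ≤ a * volume E)
    (hπ₁ : ∀ E, MeasurableSet E → π (S ∩ p₁ ⁻¹' E) ≤ b * volume E) :
    ENNReal.ofReal A ^ (1 - t) * ENNReal.ofReal B ^ t * π S
      ≤ a ^ (1 - t) * b ^ t * volume (Z '' S) := by
  rcases S.eq_empty_or_nonempty with rfl | hne
  · simp
  have hs₀ : 0 < 1 - t := sub_pos.2 ht₁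
  obtain ⟨X₀, X₁, hX₀, hX₁, hsum, hval⟩ :=
    exists_monotone_pair_of_monotoneOn hne ht₀ ht₁ h.fst_mono
  have hval₀ : ∀ ω ∈ S, X₀ (Z ω).1 = (p₀ ω).1 := fun ω hω ↦ by
    rw [h.fst_eq ω hω, (hval ω hω).1]
  have hval₁ : ∀ ω ∈ S, X₁ (Z ω).1 = (p₁ ω).1 := fun ω hω ↦ by
    rw [h.fst_eq ω hω, (hval ω hω).2]
  set Q₀ := (fun ω ↦ ((Z ω).1, (p₀ ω).2)) '' S
  set Q₁ := (fun ω ↦ ((Z ω).1, (p₁ ω).2)) '' S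
  have hZ : ContinuousOn (fun ω ↦ (Z ω).1) S :=
    ContinuousOn.congr (f := fun ω ↦ (1 - t) * (p₀ ω).1 + t * (p₁ ω).1) (by fun_prop) h.fst_eq
  have hQ₀ : MeasurableSet Q₀ :=
    (hS.image_of_continuousOn (hZ.prodMk (by fun_prop))).measurableSet
  have hQ₁ : MeasurableSet Q₁ :=
    (hS.image_of_continuousOn (hZ.prodMk (by fun_prop))).measurableSet
  set g₀ : ℝ → ℝ≥0∞ := fun u ↦ ENNReal.ofReal |deriv X₀ u| * volume (Prod.mk u ⁻¹' Q₀)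
  set g₁ : ℝ → ℝ≥0∞ := fun u ↦ ENNReal.ofReal |deriv X₁ u| * volume (Prod.mk u ⁻¹' Q₁)
  have hg₀ : Measurable g₀ :=
    (measurable_deriv X₀).abs.ennreal_ofReal.mul (measurable_measure_prodMk_left hQ₀)
  have hg₁ : Measurable g₁ :=
    (measurable_deriv X₁).abs.ennreal_ofReal.mul (measurable_measure_prodMk_left hQ₁)
  have hmass : π S ≤ ∫⁻ u, (a * g₀ u) ^ (1 - t) * (b * g₁ u) ^ t :=
    measure_le_lintegral_rpow_mul_rpow ht₀.le ht₁.le (hg₀.const_mul a) (hg₁.const_mul b)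
      (fun E hE ↦ measure_inter_le_lintegral_of_lipschitzWith
        (lipschitzWith_of_monotone_of_mul_add_mul_eq hs₀ ht₀.le hX₀ hX₁ hsum) hval₀ hQ₀ hπ₀ hE)
      (fun E hE ↦ measure_inter_le_lintegral_of_lipschitzWith
        (lipschitzWith_of_monotone_of_mul_add_mul_eq ht₀ hs₀.le hX₁ hX₀
          fun u ↦ by rw [add_comm, hsum]) hval₁ hQ₁ hπ₁ hE)
  exact mul_le_mul_volume_of_slice_le ht₀.le ht₁.le hmass
    (ofReal_abs_deriv_rpow_mul_le_one ht₀ ht₁ hX₀ hX₁ hsum)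
    (h.mul_volume_slice_le ht₀ ht₁ hA hB hval₀ hval₁)

theorem TriangularInterpolation.mul_measure_le [TopologicalSpace Ω] [IsFiniteMeasure π]
    [π.InnerRegularCompactLTTop] (h : TriangularInterpolation t A B p₀ p₁ Z S)
    (hS : MeasurableSet S) (hp₀ : Continuous p₀) (hp₁ : Continuous p₁) (ht₀ : 0 < t) (ht₁ : t < 1)
    (hA : 0 < A) (hB : 0 < B) {a b : ℝ≥0∞}
    (hπ₀ : ∀ E, MeasurableSet E → π (S ∩ p₀ ⁻¹' E) ≤ a * volume E)
    (hπ₁ : ∀ E, MeasurableSet E → π (S ∩ p₁ ⁻¹' E) ≤ b * volume E) :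
    ENNReal.ofReal A ^ (1 - t) * ENNReal.ofReal B ^ t * π S
      ≤ a ^ (1 - t) * b ^ t * volume (Z '' S) := by
  rw [hS.measure_eq_iSup_isCompact_of_ne_top (measure_ne_top _ _)]
  simp only [ENNReal.mul_iSup]
  refine iSup_le fun C ↦ iSup₂_le fun hCS hC ↦ ?_
  calc ENNReal.ofReal A ^ (1 - t) * ENNReal.ofReal B ^ t * π C
      ≤ a ^ (1 - t) * b ^ t * volume (Z '' C) :=
        (h.mono hCS).mul_measure_le_of_isCompact hC hp₀ hp₁ ht₀ ht₁ hA hB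
          (fun E hE ↦ (measure_mono (Set.inter_subset_inter_left _ hCS)).trans (hπ₀ E hE))
          (fun E hE ↦ (measure_mono (Set.inter_subset_inter_left _ hCS)).trans (hπ₁ E hE))
    _ ≤ a ^ (1 - t) * b ^ t * volume (Z '' S) := by gcongr

end Triangular

section ImageDensity

variable {Ω β : Type*} [MeasurableSpace Ω] [MeasurableSpace β] {π : Measure Ω} {ν : Measure β}
  {Z : Ω → β} {h h' : Ω → ℝ≥0∞} {P S : Set Ω}

/-- The image under `Z` of the part of `π` carried by `P` has density at most `h` with respect to
`ν`, where the bound `h` is a function of the point of `Ω` rather than of its image. -/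
def ImageDensityLE (π : Measure Ω) (ν : Measure β) (Z : Ω → β) (h : Ω → ℝ≥0∞) (P : Set Ω) : Prop :=
  ∀ S ⊆ P, MeasurableSet S → ∀ c, (∀ ω ∈ S, h ω ≤ c) → π S ≤ c * ν (Z '' S)

lemma ImageDensityLE.mono (hP : ImageDensityLE π ν Z h P) (hh : ∀ ω ∈ P, h ω ≤ h' ω) :
    ImageDensityLE π ν Z h' P :=
  fun S hSP hS c hc ↦ hP S hSP hS c fun ω hω ↦ (hh ω (hSP hω)).trans (hc ω hω)

lemma ImageDensityLE.of_measurePreserving_comp {e : β ≃ᵐ β} (he : MeasurePreserving e ν ν)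
    (hP : ImageDensityLE π ν (e ∘ Z) h P) : ImageDensityLE π ν Z h P := fun S hSP hS c hc ↦ by
  rw [← Set.preimage_image_eq (Z '' S) e.injective, he.measure_preimage_equiv, ← Set.image_comp]
  exact hP S hSP hS c hc

section CountableCover

variable {ι : Type*} [Countable ι] {C : ι → Set Ω}

lemma absolutelyContinuous_map_of_imageDensityLE (hZ : Measurable Z)
    (hC : ∀ i, MeasurableSet (C i)) (hcov : ∀ᵐ ω ∂π, ∃ i, ω ∈ C i)
    (hdens : ∀ i, ImageDensityLE π ν Z h (C i)) : π.map Z ≪ ν := by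
  refine Measure.AbsolutelyContinuous.mk fun E hE hνE ↦ ?_
  have hnull : ∀ i, ∀ᵐ ω ∂π, ω ∉ C i ∩ Z ⁻¹' E := fun i ↦ by
    refine measure_eq_zero_iff_ae_notMem.1 (nonpos_iff_eq_zero.1 ?_)
    refine (hdens i _ Set.inter_subset_left ((hC i).inter (hZ hE)) ∞ fun _ _ ↦ le_top).trans ?_
    rw [measure_mono_null (Set.image_subset_iff.2 Set.inter_subset_right) hνE, mul_zero]
  rw [Measure.map_apply hZ hE, measure_eq_zero_iff_ae_notMem]
  filter_upwards [ae_all_iff.2 hnull, hcov] with ω hω ⟨i, hi⟩ hωE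
  exact hω i ⟨hi, hωE⟩

variable [StandardBorelSpace Ω] [MeasurableSpace.CountablySeparated β]

lemma measure_eq_setLIntegral_rnDeriv_image [SigmaFinite ν] [IsFiniteMeasure π]
    (hZ : Measurable Z) (hac : π.map Z ≪ ν) {Γ : Set Ω} (hΓ : ∀ᵐ ω ∂π, ω ∈ Γ)
    (hinj : Γ.InjOn Z) (hS : MeasurableSet S) (hSΓ : S ⊆ Γ) :
    π S = ∫⁻ z in Z '' S, (π.map Z).rnDeriv ν z ∂ν := by
  have hZS : MeasurableSet (Z '' S) := hS.image_of_measurable_injOn hZ (hinj.mono hSΓ)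
  rw [Measure.setLIntegral_rnDeriv hac, Measure.map_apply hZ hZS]
  refine measure_congr ?_
  filter_upwards [hΓ] with ω hω
  exact propext ⟨fun h ↦ ⟨ω, h, rfl⟩, fun ⟨η, hη, heq⟩ ↦ hinj (hSΓ hη) hω heq ▸ hη⟩

lemma ImageDensityLE.measure_inter_lt_rnDeriv_eq_zero [SigmaFinite ν] [IsFiniteMeasure π]
    (hP : ImageDensityLE π ν Z h P) (hPm : MeasurableSet P) (hh : Measurable h)
    (hZ : Measurable Z) (hac : π.map Z ≪ ν) {Γ : Set Ω} (hΓ : ∀ᵐ ω ∂π, ω ∈ Γ)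
    (hinj : Γ.InjOn Z) (hPΓ : P ⊆ Γ) (c : ℝ≥0∞) :
    π (P ∩ {ω | h ω < c ∧ c < (π.map Z).rnDeriv ν (Z ω)}) = 0 := by
  set S := P ∩ {ω | h ω < c ∧ c < (π.map Z).rnDeriv ν (Z ω)}
  have hS : MeasurableSet S := hPm.inter ((measurableSet_lt hh measurable_const).inter
    (measurableSet_lt measurable_const ((Measure.measurable_rnDeriv _ _).comp hZ)))
  have hSP : S ⊆ P := Set.inter_subset_left
  have hZS := hS.image_of_measurable_injOn hZ (hinj.mono (hSP.trans hPΓ))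
  have hmass := measure_eq_setLIntegral_rnDeriv_image hZ hac hΓ hinj hS (hSP.trans hPΓ)
  have hle : π S ≤ c * ν (Z '' S) := hP S hSP hS c fun ω hω ↦ hω.2.1.le
  have hlt : ∀ z ∈ Z '' S, c < (π.map Z).rnDeriv ν z := by
    rintro _ ⟨ω, hω, rfl⟩
    exact hω.2.2
  by_contra hne
  have hνS : ν (Z '' S) ≠ 0 := fun h0 ↦ hne (by simpa [h0] using hle)
  have hfin : ∫⁻ _ in Z '' S, c ∂ν ≠ ∞ :=
    ne_top_of_le_ne_top (hmass ▸ measure_ne_top π S)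
      (setLIntegral_mono' hZS fun z hz ↦ (hlt z hz).le)
  have hstrict := setLIntegral_strict_mono hZS hνS (Measure.measurable_rnDeriv _ _) hfin
    (.of_forall hlt)
  rw [setLIntegral_const, ← hmass] at hstrict
  exact hstrict.not_ge hle

theorem ae_rnDeriv_map_le_of_imageDensityLE [SigmaFinite ν] [IsFiniteMeasure π]
    (hZ : Measurable Z) (hh : Measurable h) {Γ : Set Ω} (hinj : Γ.InjOn Z)
    (hC : ∀ i, MeasurableSet (C i)) (hCΓ : ∀ i, C i ⊆ Γ) (hcov : ∀ᵐ ω ∂π, ∃ i, ω ∈ C i)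
    (hdens : ∀ i, ImageDensityLE π ν Z h (C i)) :
    ∀ᵐ ω ∂π, (π.map Z).rnDeriv ν (Z ω) ≤ h ω := by
  have hac := absolutelyContinuous_map_of_imageDensityLE hZ hC hcov hdens
  have hΓ : ∀ᵐ ω ∂π, ω ∈ Γ := hcov.mono fun ω ⟨i, hi⟩ ↦ hCΓ i hi
  obtain ⟨D, hDc, hD⟩ := TopologicalSpace.exists_countable_dense ℝ≥0∞
  have hnull : ∀ c ∈ D, ∀ᵐ ω ∂π, ∀ i, ω ∉ C i ∩ {ω | h ω < c ∧ c < (π.map Z).rnDeriv ν (Z ω)} :=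
    fun c _ ↦ ae_all_iff.2 fun i ↦ measure_eq_zero_iff_ae_notMem.1
      ((hdens i).measure_inter_lt_rnDeriv_eq_zero (hC i) hh hZ hac hΓ hinj (hCΓ i) c)
  filter_upwards [(ae_ball_iff hDc).2 hnull, hcov] with ω hω ⟨i, hi⟩
  by_contra! hlt
  obtain ⟨c, hcD, hc⟩ := hD.exists_between hlt
  exact hω c hcD i ⟨hi, hc⟩

lemma measure_le_mul_measure_image_of_fiber_le [MeasurableSpace ι] [MeasurableSingletonClass ι]
    {N : Ω → ι} (hN : Measurable N) (hS : MeasurableSet S) (hZ : Measurable Z) (hinj : S.InjOn Z)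
    {c : ℝ≥0∞} (hc : ∀ n, π (S ∩ N ⁻¹' {n}) ≤ c * ν (Z '' (S ∩ N ⁻¹' {n}))) :
    π S ≤ c * ν (Z '' S) := by
  have hunion : S = ⋃ n, S ∩ N ⁻¹' {n} := by ext; simp
  have hmeas : ∀ n, MeasurableSet (S ∩ N ⁻¹' {n}) := fun n ↦
    hS.inter (hN (measurableSet_singleton n))
  have hdisj : Pairwise fun m n ↦ Disjoint (Z '' (S ∩ N ⁻¹' {m})) (Z '' (S ∩ N ⁻¹' {n})) := by
    refine fun m n hmn ↦ Set.disjoint_left.2 ?_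
    rintro _ ⟨ω, ⟨hω, rfl⟩, rfl⟩ ⟨η, ⟨hη, rfl⟩, heq⟩
    exact hmn (congrArg N (hinj hω hη heq.symm))
  calc π S = π (⋃ n, S ∩ N ⁻¹' {n}) := by rw [← hunion]
    _ ≤ ∑' n, π (S ∩ N ⁻¹' {n}) := measure_iUnion_le _
    _ ≤ ∑' n, c * ν (Z '' (S ∩ N ⁻¹' {n})) := ENNReal.tsum_le_tsum hc
    _ = c * ν (⋃ n, Z '' (S ∩ N ⁻¹' {n})) := by
        rw [ENNReal.tsum_mul_left, measure_iUnion hdisj fun n ↦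
          (hmeas n).image_of_measurable_injOn hZ (hinj.mono Set.inter_subset_left)]
    _ = c * ν (Z '' S) := by rw [← Set.image_iUnion, ← hunion]

end CountableCover

lemma exists_measurable_level {g : Ω → ℝ} (hg : Measurable g) {r : ℝ} (hr : 1 < r) :
    ∃ N : Ω → ℤ, Measurable N ∧ ∀ ω η, 0 < g ω → 0 < g η → N ω = N η → g ω ≤ r * g η := by
  refine ⟨fun ω ↦ ⌊Real.logb r (g ω)⌋, Int.measurable_floor.comp (by unfold Real.logb; fun_prop),
    fun ω η hω hη (hN : ⌊_⌋ = ⌊_⌋) ↦ ?_⟩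
  have hr₀ : 0 < r := one_pos.trans hr
  rw [← Real.logb_le_logb hr hω (by positivity), Real.logb_mul hr₀.ne' hη.ne',
    Real.logb_self_eq_one hr]
  have hω' := Int.lt_floor_add_one (Real.logb r (g ω))
  have hη' := Int.floor_le (Real.logb r (g η))
  rw [hN] at hω'
  linarith

lemma mul_rpow_mul_mul_rpow {r x y : ℝ} (hr : 0 < r) (hx : 0 ≤ x) (hy : 0 ≤ y) (t : ℝ) :
    (r * x) ^ (1 - t) * (r * y) ^ t = r * (x ^ (1 - t) * y ^ t) := by
  rw [Real.mul_rpow hr.le hx, Real.mul_rpow hr.le hy]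
  calc _ = r ^ (1 - t) * r ^ t * (x ^ (1 - t) * y ^ t) := by ring
    _ = _ := by rw [← Real.rpow_add hr, sub_add_cancel, Real.rpow_one]

/-- The weighted geometric mean of the densities `v₀` and `v₁`, divided by that of the slopes
`g₀` and `g₁` of an interpolation: the bound for the interpolated density. -/
noncomputable def geomDensity (t : ℝ) (v₀ v₁ g₀ g₁ : ℝ) : ℝ :=
  v₀ ^ (1 - t) * v₁ ^ t / (g₀ ^ (1 - t) * g₁ ^ t)

lemma geomDensity_mul_div {t v₀ v₁ g₀ g₁ r : ℝ} (hr : 0 < r) (hv₀ : 0 ≤ v₀) (hv₁ : 0 ≤ v₁)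
    (hg₀ : 0 ≤ g₀) (hg₁ : 0 ≤ g₁) :
    geomDensity t (r * v₀) (r * v₁) (r⁻¹ * g₀) (r⁻¹ * g₁)
      = r ^ 2 * geomDensity t v₀ v₁ g₀ g₁ := by
  rw [geomDensity, geomDensity, mul_rpow_mul_mul_rpow hr hv₀ hv₁,
    mul_rpow_mul_mul_rpow (inv_pos.2 hr) hg₀ hg₁]
  field_simp

lemma le_of_forall_one_lt_le_ofReal_sq_mul {a b : ℝ≥0∞}
    (h : ∀ r : ℝ, 1 < r → a ≤ ENNReal.ofReal (r ^ 2) * b) : a ≤ b := by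
  have hlim : Filter.Tendsto (fun r : ℝ ↦ ENNReal.ofReal (r ^ 2) * b) (nhdsWithin 1 (Set.Ioi 1))
      (nhds (ENNReal.ofReal (1 ^ 2) * b)) :=
    ENNReal.Tendsto.mul_const (ENNReal.continuous_ofReal.comp (continuous_pow 2)).continuousWithinAt
      (.inl (by simp))
  rw [one_pow, ENNReal.ofReal_one, one_mul] at hlim
  exact ge_of_tendsto hlim (Filter.eventually_of_mem self_mem_nhdsWithin h)

theorem imageDensityLE_of_level_bound [StandardBorelSpace Ω] [MeasurableSpace.CountablySeparated β]
    {t : ℝ} {v₀ v₁ g₀ g₁ : Ω → ℝ}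
    (hv₀ : Measurable v₀) (hv₁ : Measurable v₁) (hg₀ : Measurable g₀) (hg₁ : Measurable g₁)
    (hpos : ∀ ω ∈ P, 0 < v₀ ω ∧ 0 < v₁ ω ∧ 0 < g₀ ω ∧ 0 < g₁ ω)
    (hZ : Measurable Z) (hinj : P.InjOn Z)
    (hmass : ∀ a b A B, 0 < a → 0 < b → 0 < A → 0 < B → ∀ S ⊆ P, MeasurableSet S →
      (∀ ω ∈ S, v₀ ω ≤ a ∧ v₁ ω ≤ b ∧ A ≤ g₀ ω ∧ B ≤ g₁ ω) →
      π S ≤ ENNReal.ofReal (geomDensity t a b A B) * ν (Z '' S)) :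
    ImageDensityLE π ν Z
      (fun ω ↦ ENNReal.ofReal (geomDensity t (v₀ ω) (v₁ ω) (g₀ ω) (g₁ ω))) P := by
  refine fun S hSP hS c hc ↦ le_of_forall_one_lt_le_ofReal_sq_mul fun r hr ↦ ?_
  have hr₀ : 0 < r := one_pos.trans hr
  obtain ⟨N₀, hN₀, hv₀N⟩ := exists_measurable_level hv₀ hr
  obtain ⟨N₁, hN₁, hv₁N⟩ := exists_measurable_level hv₁ hr
  obtain ⟨M₀, hM₀, hg₀M⟩ := exists_measurable_level hg₀ hr
  obtain ⟨M₁, hM₁, hg₁M⟩ := exists_measurable_level hg₁ hr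
  have hN := (hN₀.prodMk hN₁).prodMk (hM₀.prodMk hM₁)
  rw [← mul_assoc]
  refine measure_le_mul_measure_image_of_fiber_le hN hS hZ (hinj.mono hSP) fun n ↦ ?_
  set F := S ∩ (fun ω ↦ ((N₀ ω, N₁ ω), (M₀ ω, M₁ ω))) ⁻¹' {n}
  rcases F.eq_empty_or_nonempty with hempty | ⟨ω, hωS, rfl⟩
  · simp [hempty]
  have hF : ∀ η ∈ F, v₀ η ≤ r * v₀ ω ∧ v₁ η ≤ r * v₁ ω ∧ r⁻¹ * g₀ ω ≤ g₀ η ∧ r⁻¹ * g₁ ω ≤ g₁ η := by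
    rintro η ⟨hηS, hηω⟩
    obtain ⟨hv₀ω, hv₁ω, hg₀ω, hg₁ω⟩ := hpos ω (hSP hωS)
    obtain ⟨hv₀η, hv₁η, hg₀η, hg₁η⟩ := hpos η (hSP hηS)
    simp only [Set.mem_preimage, Set.mem_singleton_iff, Prod.mk.injEq] at hηω
    exact ⟨hv₀N η ω hv₀η hv₀ω hηω.1.1, hv₁N η ω hv₁η hv₁ω hηω.1.2,
      (inv_mul_le_iff₀ hr₀).2 (hg₀M ω η hg₀ω hg₀η hηω.2.1.symm),
      (inv_mul_le_iff₀ hr₀).2 (hg₁M ω η hg₁ω hg₁η hηω.2.2.symm)⟩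
  obtain ⟨hv₀ω, hv₁ω, hg₀ω, hg₁ω⟩ := hpos ω (hSP hωS)
  calc π F
      ≤ ENNReal.ofReal (geomDensity t (r * v₀ ω) (r * v₁ ω) (r⁻¹ * g₀ ω) (r⁻¹ * g₁ ω)) *
          ν (Z '' F) :=
        hmass _ _ _ _ (by positivity) (by positivity) (by positivity) (by positivity) F
          (Set.inter_subset_left.trans hSP) (hS.inter (hN (measurableSet_singleton _))) hF
    _ = ENNReal.ofReal (r ^ 2) * ENNReal.ofReal (geomDensity t (v₀ ω) (v₁ ω) (g₀ ω) (g₁ ω)) *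
          ν (Z '' F) := by
        rw [geomDensity_mul_div hr₀ hv₀ω.le hv₁ω.le hg₀ω.le hg₁ω.le,
          ENNReal.ofReal_mul (by positivity)]
    _ ≤ ENNReal.ofReal (r ^ 2) * c * ν (Z '' F) := by
        gcongr
        exact hc ω hωS

end ImageDensity

section TriangularDensity

variable {Ω : Type*} [MeasurableSpace Ω] {π : Measure Ω} {p p₀ p₁ Z : Ω → ℝ × ℝ}
  {v₀ v₁ g₀ g₁ : Ω → ℝ} {P : Set Ω} {t : ℝ}

/-- The image of `π` under `p` has density at most `a` on the image of the sublevel set `v ≤ a`,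
for every `a`. -/
def MarginalDensityLE (π : Measure Ω) (p : Ω → ℝ × ℝ) (v : Ω → ℝ) : Prop :=
  ∀ a E, MeasurableSet E → π ({ω | v ω ≤ a} ∩ p ⁻¹' E) ≤ ENNReal.ofReal a * volume E

lemma MarginalDensityLE.measurePreserving_comp {v : Ω → ℝ} (h : MarginalDensityLE π p v)
    {e : ℝ × ℝ → ℝ × ℝ} (he : MeasurePreserving e volume volume) :
    MarginalDensityLE π (e ∘ p) v := fun a E hE ↦ by
  rw [← he.measure_preimage hE.nullMeasurableSet]
  exact h a _ (he.measurable hE)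

lemma marginalDensityLE_of_map_eq_withDensity (hp : Measurable p) {v : ℝ × ℝ → ℝ}
    (hv : Measurable v) (hπ : π.map p = volume.withDensity fun z ↦ ENNReal.ofReal (v z)) :
    MarginalDensityLE π p (v ∘ p) := fun a E hE ↦ by
  have hmeas : MeasurableSet (E ∩ {z | v z ≤ a}) := hE.inter (hv measurableSet_Iic)
  calc π ({ω | (v ∘ p) ω ≤ a} ∩ p ⁻¹' E) = π.map p (E ∩ {z | v z ≤ a}) := by
        rw [Measure.map_apply hp hmeas, Set.inter_comm]; rfl
    _ = ∫⁻ z in E ∩ {z | v z ≤ a}, ENNReal.ofReal (v z) := by rw [hπ, withDensity_apply _ hmeas]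
    _ ≤ ∫⁻ _ in E ∩ {z | v z ≤ a}, ENNReal.ofReal a :=
        setLIntegral_mono' hmeas fun z hz ↦ ENNReal.ofReal_le_ofReal hz.2
    _ ≤ ENNReal.ofReal a * volume E := by
        rw [setLIntegral_const]
        gcongr
        exact Set.inter_subset_left

theorem AverageSlopeInterpolation.imageDensityLE [TopologicalSpace Ω] [PolishSpace Ω]
    [BorelSpace Ω] [IsFiniteMeasure π] (ht₀ : 0 < t) (ht₁ : t < 1)
    (hp₀ : Continuous p₀) (hp₁ : Continuous p₁) (hZ : Measurable Z) (hinj : P.InjOn Z)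
    (hv₀ : Measurable v₀) (hv₁ : Measurable v₁) (hg₀ : Measurable g₀) (hg₁ : Measurable g₁)
    (hpos : ∀ ω ∈ P, 0 < v₀ ω ∧ 0 < v₁ ω ∧ 0 < g₀ ω ∧ 0 < g₁ ω)
    (hπ₀ : MarginalDensityLE π p₀ v₀) (hπ₁ : MarginalDensityLE π p₁ v₁)
    (h : AverageSlopeInterpolation t g₀ g₁ p₀ p₁ Z P) :
    ImageDensityLE π volume Z
      (fun ω ↦ ENNReal.ofReal (geomDensity t (v₀ ω) (v₁ ω) (g₀ ω) (g₁ ω))) P := by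
  refine imageDensityLE_of_level_bound hv₀ hv₁ hg₀ hg₁ hpos hZ hinj fun a b A B ha hb hA hB S hSP hS
    hlevel ↦ ?_
  have htriS : TriangularInterpolation t A B p₀ p₁ Z S :=
    (h.triangularInterpolation ht₀.le ht₁.le A B).mono fun ω hω ↦ ⟨hSP hω, (hlevel ω hω).2.2⟩
  have hmass := htriS.mul_measure_le hS hp₀ hp₁ ht₀ ht₁ hA hB (π := π)
    (fun E hE ↦ (measure_mono (Set.inter_subset_inter_left _ fun ω hω ↦ (hlevel ω hω).1)).trans
      (hπ₀ a E hE))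
    (fun E hE ↦ (measure_mono (Set.inter_subset_inter_left _ fun ω hω ↦ (hlevel ω hω).2.1)).trans
      (hπ₁ b E hE))
  have hG : 0 < A ^ (1 - t) * B ^ t := by positivity
  simp only [ENNReal.ofReal_rpow_of_pos, ha, hb, hA, hB] at hmass
  rw [← ENNReal.ofReal_mul (by positivity), ← ENNReal.ofReal_mul (by positivity)] at hmass
  rw [geomDensity, ENNReal.ofReal_div_of_pos hG, ← ENNReal.mul_div_right_comm,
    ENNReal.le_div_iff_mul_le (.inl (by simpa using hG)) (.inl ENNReal.ofReal_ne_top), mul_comm]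
  exact hmass

end TriangularDensity

/-! ### Thin profiles -/

/-- The properties of the upper boundary `f` of the space that the argument uses: `f` is positive,
increasing, `k`-Lipschitz for a small `k`, at most `3 k` left of `1`, and `0 ≤ f'' ≤ 2` in the weak
sense that `f` is convex and `f x - x ^ 2` is concave. -/
structure ThinProfile (f : ℝ → ℝ) (k : ℝ) : Prop where
  lt_thousandth : k < 1 / 1000
  pos : ∀ x, 0 < f x
  mono : Monotone f
  abs_sub_le : ∀ x y, |f y - f x| ≤ k * |y - x|
  convexOn : ConvexOn ℝ Set.univ f
  concaveOn : ConcaveOn ℝ Set.univ fun x ↦ f x - x ^ 2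
  le_three_mul : f 1 ≤ 3 * k

lemma eq_of_hasDerivAt_eq_zero_of_le {g g' : ℝ → ℝ} {a x : ℝ} (hg : ∀ y, HasDerivAt g (g' y) y)
    (hzero : ∀ y ≤ a, g' y = 0) (hx : x ≤ a) : g x = g a :=
  (constant_of_has_deriv_right_zero (HasDerivAt.continuousOn fun y _ ↦ hg y)
    (fun y hy ↦ hzero y hy.2.le ▸ (hg y).hasDerivWithinAt) a ⟨hx, le_rfl⟩).symm

lemma mem_Icc_integral_of_hasDerivAt {g φ : ℝ → ℝ} {a : ℝ} (hg : ∀ x, HasDerivAt g (φ x) x)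
    (hφ : Continuous φ) (hint : Integrable φ) (hφ₀ : ∀ x, 0 ≤ φ x) (hzero : ∀ x ≤ a, φ x = 0)
    (ha : g a = 0) (x : ℝ) : g x ∈ Set.Icc 0 (∫ y, φ y) := by
  rcases le_total x a with hx | hx
  · rw [eq_of_hasDerivAt_eq_zero_of_le hg hzero hx, ha]
    exact ⟨le_rfl, integral_nonneg hφ₀⟩
  · refine ⟨ha ▸ monotone_of_hasDerivAt_nonneg hg hφ₀ hx, ?_⟩
    have hftc : ∫ y in a..x, φ y = g x - g a :=
      intervalIntegral.integral_eq_sub_of_hasDerivAt (fun y _ ↦ hg y) (hφ.intervalIntegrable _ _)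
    rw [intervalIntegral.integral_of_le hx, ha, sub_zero] at hftc
    exact hftc ▸ setIntegral_le_integral hint (.of_forall hφ₀)

lemma convexOn_univ_of_hasDerivAt {g g' : ℝ → ℝ} (hg : ∀ x, HasDerivAt g (g' x) x)
    (hg' : Monotone g') : ConvexOn ℝ Set.univ g :=
  Monotone.convexOn_univ_of_deriv (fun x ↦ (hg x).differentiableAt)
    (by rwa [funext fun x ↦ (hg x).deriv])

lemma concaveOn_univ_sub_sq_of_hasDerivAt {f f' φ : ℝ → ℝ} (hf : ∀ x, HasDerivAt f (f' x) x)
    (hf' : ∀ x, HasDerivAt f' (φ x) x) (hφ : ∀ x, φ x ≤ 2) :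
    ConcaveOn ℝ Set.univ fun x ↦ f x - x ^ 2 := by
  have hmono : Monotone fun x ↦ 2 * x - f' x :=
    monotone_of_hasDerivAt_nonneg (f' := fun x ↦ 2 * 1 - φ x)
      (fun x ↦ ((hasDerivAt_id x).const_mul 2).sub (hf' x)) fun x ↦ by simpa using hφ x
  have hconv : ConvexOn ℝ Set.univ fun x ↦ x ^ 2 - f x :=
    convexOn_univ_of_hasDerivAt (fun x ↦ by simpa using (hasDerivAt_pow 2 x).fun_sub (hf x)) hmono
  simpa [Pi.neg_def] using hconv.neg

lemma abs_sub_le_of_hasDerivAt {f f' : ℝ → ℝ} {k : ℝ} (hf : ∀ x, HasDerivAt f (f' x) x)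
    (hk : ∀ x, |f' x| ≤ k) (x y : ℝ) : |f y - f x| ≤ k * |y - x| :=
  convex_univ.norm_image_sub_le_of_norm_hasDerivWithin_le (fun x _ ↦ (hf x).hasDerivWithinAt)
    (fun x _ ↦ hk x) (Set.mem_univ x) (Set.mem_univ y)

theorem thinProfile_of_hasDerivAt {ε k : ℝ} (hε : 0 < ε) (hεk : ε < k) (hk : k < 1 / 1000)
    {φ f f' : ℝ → ℝ} (hφ : Continuous φ) (hφ₀ : ∀ x, 0 ≤ φ x) (hφ₁ : ∀ x, φ x ≤ 1)
    (hsupp : ∀ x, x ∉ Set.Icc (-k) k → φ x = 0) (hint : (∫ x, φ x) = k)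
    (hf : ∀ x, HasDerivAt f (f' x) x) (hf' : ∀ x, HasDerivAt f' (φ x) x)
    (hf'_left : f' (-1) = 0) (hf_left : f (-1) = ε) : ThinProfile f k := by
  have hφint : Integrable φ := by
    by_contra h
    exact (hε.trans hεk).ne (hint ▸ (integral_undef h).symm)
  have hzero : ∀ x ≤ -1, φ x = 0 := fun x hx ↦ hsupp x fun h ↦ by linarith [h.1]
  have hslope : ∀ x, f' x ∈ Set.Icc 0 k :=
    hint ▸ mem_Icc_integral_of_hasDerivAt hf' hφ hφint hφ₀ hzero hf'_left
  have hmono : Monotone f := monotone_of_hasDerivAt_nonneg hf fun x ↦ (hslope x).1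
  have hlip := abs_sub_le_of_hasDerivAt hf fun x ↦
    abs_le.2 ⟨(neg_nonpos.2 (hε.trans hεk).le).trans (hslope x).1, (hslope x).2⟩
  have hle : ∀ x, ε ≤ f x := fun x ↦ hf_left ▸ (le_total x (-1)).elim
    (fun hx ↦ (eq_of_hasDerivAt_eq_zero_of_le hf (fun y hy ↦
      (eq_of_hasDerivAt_eq_zero_of_le hf' hzero hy).trans hf'_left) hx).ge)
    fun hx ↦ hmono hx
  refine ⟨hk, fun x ↦ hε.trans_le (hle x), hmono, hlip,
    convexOn_univ_of_hasDerivAt hf (monotone_of_hasDerivAt_nonneg hf' hφ₀),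
    concaveOn_univ_sub_sq_of_hasDerivAt hf hf' fun x ↦ (hφ₁ x).trans one_le_two, ?_⟩
  have := (abs_le.1 (hlip (-1) 1)).2
  norm_num at this
  linarith

/-- The linear interpolation `(1 - t) x + t x'`. -/
def interp (t x x' : ℝ) : ℝ := (1 - t) * x + t * x'

lemma interp_nonneg {t x x' : ℝ} (ht : t ∈ Set.Icc (0 : ℝ) 1) (hx : 0 ≤ x) (hx' : 0 ≤ x') :
    0 ≤ interp t x x' :=
  add_nonneg (mul_nonneg (sub_nonneg.2 ht.2) hx) (mul_nonneg ht.1 hx')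

lemma interp_pos {t x x' : ℝ} (ht : t ∈ Set.Ioo (0 : ℝ) 1) (hx : 0 ≤ x) (hx' : 0 ≤ x')
    (h : 0 < x ∨ 0 < x') : 0 < interp t x x' := by
  have ht' := sub_pos.2 ht.2
  rcases h with h | h
  · exact add_pos_of_pos_of_nonneg (mul_pos ht' h) (mul_nonneg ht.1.le hx')
  · exact add_pos_of_nonneg_of_pos (mul_nonneg ht'.le hx) (mul_pos ht.1 h)

lemma interp_sub_interp (s t x x' : ℝ) : interp t x x' - interp s x x' = (t - s) * (x' - x) := by
  unfold interp; ring

lemma interp_le_interp {t x x' y y' : ℝ} (ht : t ∈ Set.Icc (0 : ℝ) 1) (h : x ≤ y) (h' : x' ≤ y') :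
    interp t x x' ≤ interp t y y' :=
  add_le_add (mul_le_mul_of_nonneg_left h (sub_nonneg.2 ht.2)) (mul_le_mul_of_nonneg_left h' ht.1)

lemma interp_self (t x : ℝ) : interp t x x = x := by unfold interp; ring

namespace ThinProfile

variable {f : ℝ → ℝ} {k t : ℝ}

lemma k_pos (hf : ThinProfile f k) : 0 < k := by linarith [hf.pos 1, hf.le_three_mul]

lemma continuous (hf : ThinProfile f k) : Continuous f :=
  (LipschitzWith.of_dist_le' fun x y ↦ by
    simpa only [Real.dist_eq] using hf.abs_sub_le y x).continuous

lemma le_of_le_one (hf : ThinProfile f k) {x : ℝ} (hx : x ≤ 1) : f x ≤ 3 * k :=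
  (hf.mono hx).trans hf.le_three_mul

lemma interp_le (hf : ThinProfile f k) (ht : t ∈ Set.Icc (0 : ℝ) 1) (x x' : ℝ) :
    f (interp t x x') ≤ interp t (f x) (f x') :=
  hf.convexOn.2 (Set.mem_univ x) (Set.mem_univ x') (sub_nonneg.2 ht.2) ht.1 (sub_add_cancel 1 t)

lemma interp_le_add (hf : ThinProfile f k) (ht : t ∈ Set.Icc (0 : ℝ) 1) (x x' : ℝ) :
    interp t (f x) (f x') ≤ f (interp t x x') + t * (1 - t) * (x' - x) ^ 2 := by
  have := hf.concaveOn.2 (Set.mem_univ x) (Set.mem_univ x') (sub_nonneg.2 ht.2) ht.1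
    (sub_add_cancel 1 t)
  simp only [smul_eq_mul] at this
  unfold interp
  linarith

lemma interp_between (hf : ThinProfile f k) (ht : t ∈ Set.Icc (0 : ℝ) 1) (x x' : ℝ) :
    f (interp t x x') ∈ Set.uIcc (f x) (f x') := by
  refine hf.mono.image_uIcc_subset ⟨_, ?_, rfl⟩
  rw [← segment_eq_uIcc]
  exact ⟨1 - t, t, sub_nonneg.2 ht.2, ht.1, sub_add_cancel 1 t, rfl⟩

end ThinProfile

/-! ### The interpolation map -/

/-- The weight of the proportional interpolation for a displacement `(a, b)`: it is `1` for flat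
displacements, `2 |b| ≤ |a|`, it is `0` for steep ones, `|a| ≤ |b|`, and affine in `|b| / |a|` in
between. (For `a = 0` division by zero gives the value `1`, but then the two interpolations
that are mixed coincide.) -/
noncomputable def bend (a b : ℝ) : ℝ := max 0 (min 1 (2 - 2 * (|b| / |a|)))

lemma bend_nonneg (a b : ℝ) : 0 ≤ bend a b := le_max_left _ _

lemma bend_le_one (a b : ℝ) : bend a b ≤ 1 := max_le zero_le_one (min_le_left _ _)

lemma bend_eq_zero {a b : ℝ} (ha : a ≠ 0) (h : |a| ≤ |b|) : bend a b = 0 := by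
  have hratio : 1 ≤ |b| / |a| := (one_le_div (abs_pos.2 ha)).2 h
  exact max_eq_left ((min_le_right _ _).trans (by linarith))

lemma bend_eq_one {a b : ℝ} (h : 2 * |b| ≤ |a|) : bend a b = 1 := by
  have hratio : |b| / |a| ≤ 1 / 2 := div_le_of_le_mul₀ (abs_nonneg a) (by norm_num) (by linarith)
  rw [bend, min_eq_left (by linarith), max_eq_right zero_le_one]

lemma bend_eq_of_le_of_le {a b : ℝ} (ha : a ≠ 0) (h₁ : |a| ≤ 2 * |b|) (h₂ : |b| ≤ |a|) :
    bend a b = 2 - 2 * (|b| / |a|) := by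
  have ha' : 0 < |a| := abs_pos.2 ha
  have hlower : 1 / 2 ≤ |b| / |a| := by rw [le_div_iff₀ ha']; linarith
  have hupper : |b| / |a| ≤ 1 := (div_le_one ha').2 h₂
  rw [bend, min_eq_right (by linarith), max_eq_right (by linarith)]

lemma bend_mul_abs_le (a b : ℝ) : bend a b * |a| ≤ 2 * max 0 (|a| - |b|) := by
  rcases eq_or_ne a 0 with rfl | ha
  · simp
  have ha' : 0 < |a| := abs_pos.2 ha
  calc bend a b * |a| ≤ max 0 (2 - 2 * (|b| / |a|)) * |a| := by
        gcongr; exact max_le_max le_rfl (min_le_right _ _)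
    _ = max (2 * 0) (2 * (|a| - |b|)) := by
        rw [max_mul_of_nonneg _ _ ha'.le, zero_mul, mul_zero]; congr 1; field_simp
    _ = 2 * max 0 (|a| - |b|) := (mul_max_of_nonneg _ _ zero_le_two).symm

lemma abs_bend_sub_bend_le (a b b' : ℝ) : |bend a b - bend a b'| ≤ 2 * (|b - b'| / |a|) := by
  have hclamp : ∀ r s : ℝ, |max 0 (min 1 r) - max 0 (min 1 s)| ≤ |r - s| := fun r s ↦ by
    rw [max_comm 0, max_comm 0, min_comm 1, min_comm 1]
    exact (abs_max_sub_max_le_abs _ _ _).trans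
      ((abs_min_sub_min_le_max _ _ _ _).trans (by simp))
  calc |bend a b - bend a b'| ≤ |2 - 2 * (|b| / |a|) - (2 - 2 * (|b'| / |a|))| := hclamp _ _
    _ = 2 * (|(|b| - |b'|)| / |a|) := by
        rw [show 2 - 2 * (|b| / |a|) - (2 - 2 * (|b'| / |a|)) = -(2 * ((|b| - |b'|) / |a|)) by ring,
          abs_neg, abs_mul, abs_two, abs_div, abs_abs]
    _ ≤ 2 * (|b - b'| / |a|) :=
        mul_le_mul_of_nonneg_left (div_le_div_of_nonneg_right (abs_abs_sub_abs_le_abs_sub b b')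
          (abs_nonneg a)) zero_le_two

/-- The height at time `t` when the relative height `y / f x` is interpolated linearly. -/
noncomputable def proportionalInterp (f : ℝ → ℝ) (t x y x' y' : ℝ) : ℝ :=
  f (interp t x x') * interp t (y / f x) (y' / f x')

/-- The deviation of the proportional interpolation of heights from the linear one. -/
noncomputable def interpDefect (f : ℝ → ℝ) (t x y x' y' : ℝ) : ℝ :=
  proportionalInterp f t x y x' y' - interp t y y'

/-- The height at time `t` of the chosen geodesic from `(x, y)` to `(x', y')`: proportional
interpolation for flat displacements, linear interpolation for steep ones. -/
noncomputable def heightInterp (f : ℝ → ℝ) (t x y x' y' : ℝ) : ℝ :=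
  interp t y y' + bend (x' - x) (y' - y) * interpDefect f t x y x' y'

/-- The point at time `t` of the chosen sup-distance geodesic between the two points of `ω`. -/
noncomputable def interpMap (f : ℝ → ℝ) (t : ℝ) (ω : (ℝ × ℝ) × (ℝ × ℝ)) : ℝ × ℝ :=
  (interp t ω.1.1 ω.2.1, heightInterp f t ω.1.1 ω.1.2 ω.2.1 ω.2.2)

/-- The space `X` below the graph of `f` over `[-1, 1]`. -/
def subgraphRegion (f : ℝ → ℝ) : Set (ℝ × ℝ) :=
  {p | p.1 ∈ Set.Icc (-1 : ℝ) 1 ∧ 0 ≤ p.2 ∧ p.2 ≤ f p.1}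

namespace ThinProfile

variable {f : ℝ → ℝ} {k s t x y x' y' : ℝ}

lemma isCompact_subgraphRegion (hf : ThinProfile f k) : IsCompact (subgraphRegion f) := by
  have hf_cont := hf.continuous
  have hclosed : IsClosed (subgraphRegion f) :=
    (isClosed_Icc.preimage continuous_fst).inter
      ((isClosed_le continuous_const continuous_snd).inter
        (isClosed_le continuous_snd (by fun_prop)))
  exact (isCompact_Icc.prod isCompact_Icc).of_isClosed_subset
    (s := Set.Icc (-1 : ℝ) 1 ×ˢ Set.Icc 0 (3 * k)) hclosed
    fun p ⟨hx, hy₀, hy₁⟩ ↦ ⟨hx, hy₀, hy₁.trans (hf.le_of_le_one hx.2)⟩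

lemma proportionalInterp_zero (hf : ThinProfile f k) : proportionalInterp f 0 x y x' y' = y := by
  simp [proportionalInterp, interp, mul_div_cancel₀ _ (hf.pos x).ne']

lemma proportionalInterp_one (hf : ThinProfile f k) : proportionalInterp f 1 x y x' y' = y' := by
  simp [proportionalInterp, interp, mul_div_cancel₀ _ (hf.pos x').ne']

lemma heightInterp_zero (hf : ThinProfile f k) : heightInterp f 0 x y x' y' = y := by
  simp [heightInterp, interpDefect, hf.proportionalInterp_zero, interp]

lemma heightInterp_one (hf : ThinProfile f k) : heightInterp f 1 x y x' y' = y' := by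
  simp [heightInterp, interpDefect, hf.proportionalInterp_one, interp]

lemma interpMap_zero (hf : ThinProfile f k) (ω : (ℝ × ℝ) × (ℝ × ℝ)) : interpMap f 0 ω = ω.1 :=
  Prod.ext (by simp [interpMap, interp]) hf.heightInterp_zero

lemma interpMap_one (hf : ThinProfile f k) (ω : (ℝ × ℝ) × (ℝ × ℝ)) : interpMap f 1 ω = ω.2 :=
  Prod.ext (by simp [interpMap, interp]) hf.heightInterp_one

lemma measurable_interpMap (hf : ThinProfile f k) (t : ℝ) : Measurable (interpMap f t) := by
  have := hf.continuous.measurable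
  unfold interpMap heightInterp interpDefect proportionalInterp interp bend
  fun_prop

lemma heightInterp_eq_interp_of_steep (hf : ThinProfile f k) (h : |x' - x| ≤ |y' - y|) :
    heightInterp f t x y x' y' = interp t y y' := by
  rcases eq_or_ne x x' with rfl | hx
  · have hdefect : interpDefect f t x y x y' = 0 := by
      have := (hf.pos x).ne'
      rw [interpDefect, proportionalInterp, interp_self]
      unfold interp
      field_simp
      ring
    rw [heightInterp, hdefect, mul_zero, add_zero]
  · rw [heightInterp, bend_eq_zero (sub_ne_zero.2 hx.symm) h, zero_mul, add_zero]

lemma div_mem_Icc (hf : ThinProfile f k) (hy : y ∈ Set.Icc 0 (f x)) :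
    y / f x ∈ Set.Icc (0 : ℝ) 1 :=
  ⟨div_nonneg hy.1 (hf.pos x).le, (div_le_one (hf.pos x)).2 hy.2⟩

lemma interp_div_mem_Icc (hf : ThinProfile f k) (ht : t ∈ Set.Icc (0 : ℝ) 1)
    (hy : y ∈ Set.Icc 0 (f x)) (hy' : y' ∈ Set.Icc 0 (f x')) :
    interp t (y / f x) (y' / f x') ∈ Set.Icc (0 : ℝ) 1 := by
  have hu := hf.div_mem_Icc hy
  have hu' := hf.div_mem_Icc hy'
  exact ⟨interp_nonneg ht hu.1 hu'.1, (interp_le_interp ht hu.2 hu'.2).trans_eq (interp_self t 1)⟩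

lemma abs_proportionalInterp_sub_le (hf : ThinProfile f k) (hs : s ∈ Set.Icc (0 : ℝ) 1)
    (ht : t ∈ Set.Icc (0 : ℝ) 1) (hy : y ∈ Set.Icc 0 (f x)) (hy' : y' ∈ Set.Icc 0 (f x')) :
    |proportionalInterp f t x y x' y' - proportionalInterp f s x y x' y' - (t - s) * (y' - y)| ≤
      2 * k * |x' - x| * |t - s| := by
  obtain ⟨hw₀, hw₁⟩ := hf.interp_div_mem_Icc ht hy hy'
  obtain ⟨hu₀, hu₁⟩ := hf.div_mem_Icc hy
  obtain ⟨hu₀', hu₁'⟩ := hf.div_mem_Icc hy'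
  have heq : proportionalInterp f t x y x' y' - proportionalInterp f s x y x' y' -
        (t - s) * (y' - y) =
      (f (interp t x x') - f (interp s x x')) * interp t (y / f x) (y' / f x') +
      (t - s) * ((f (interp s x x') - f x') * (y' / f x') -
        (f (interp s x x') - f x) * (y / f x)) := by
    have := (hf.pos x).ne'
    have := (hf.pos x').ne'
    unfold proportionalInterp interp
    field_simp
    ring
  have htime : |(f (interp t x x') - f (interp s x x')) * interp t (y / f x) (y' / f x')| ≤
      k * |x' - x| * |t - s| := by
    have hlip := hf.abs_sub_le (interp s x x') (interp t x x')
    rw [interp_sub_interp, abs_mul] at hlip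
    rw [abs_mul, abs_of_nonneg hw₀]
    exact (mul_le_of_le_one_right (abs_nonneg _) hw₁).trans (hlip.trans_eq (by ring))
  have hspace : |(f (interp s x x') - f x') * (y' / f x') - (f (interp s x x') - f x) * (y / f x)| ≤
      k * |x' - x| := by
    obtain ⟨hlip₁, hlip₂⟩ := abs_le.1 (hf.abs_sub_le x x')
    rw [abs_le]
    rcases Set.mem_uIcc.1 (hf.interp_between hs x x') with ⟨h₁, h₂⟩ | ⟨h₁, h₂⟩ <;>
      constructor <;> nlinarith
  rw [heq]
  refine (abs_add_le _ _).trans ?_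
  rw [abs_mul (t - s)]
  linarith [mul_le_mul_of_nonneg_left hspace (abs_nonneg (t - s))]

lemma abs_interpDefect_le (hf : ThinProfile f k) (ht : t ∈ Set.Icc (0 : ℝ) 1)
    (hy : y ∈ Set.Icc 0 (f x)) (hy' : y' ∈ Set.Icc 0 (f x')) :
    |interpDefect f t x y x' y'| ≤ 2 * k * |x' - x| * t ∧
      |interpDefect f t x y x' y'| ≤ 2 * k * |x' - x| * (1 - t) := by
  have h₀ := hf.abs_proportionalInterp_sub_le (Set.left_mem_Icc.2 zero_le_one) ht hy hy'
  have h₁ := hf.abs_proportionalInterp_sub_le (Set.right_mem_Icc.2 zero_le_one) ht hy hy'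
  rw [hf.proportionalInterp_zero, sub_zero, abs_of_nonneg ht.1] at h₀
  rw [hf.proportionalInterp_one, abs_sub_comm t, abs_of_nonneg (sub_nonneg.2 ht.2)] at h₁
  constructor
  · convert h₀ using 2
    simp only [interpDefect, interp]
    ring
  · convert h₁ using 2
    simp only [interpDefect, interp]
    ring

lemma abs_heightInterp_sub_le (hf : ThinProfile f k) (hs : s ∈ Set.Icc (0 : ℝ) 1)
    (ht : t ∈ Set.Icc (0 : ℝ) 1) (hy : y ∈ Set.Icc 0 (f x)) (hy' : y' ∈ Set.Icc 0 (f x')) :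
    |heightInterp f t x y x' y' - heightInterp f s x y x' y'| ≤
      |t - s| * (|y' - y| + 4 * k * max 0 (|x' - x| - |y' - y|)) := by
  have hk := hf.k_pos
  calc |heightInterp f t x y x' y' - heightInterp f s x y x' y'|
      = |(t - s) * (y' - y) + bend (x' - x) (y' - y) * (proportionalInterp f t x y x' y' -
          proportionalInterp f s x y x' y' - (t - s) * (y' - y))| := by
        simp only [heightInterp, interpDefect, interp]; ring_nf
    _ ≤ |t - s| * |y' - y| + bend (x' - x) (y' - y) * (2 * k * |x' - x| * |t - s|) := by
        refine (abs_add_le _ _).trans ?_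
        rw [abs_mul, abs_mul, abs_of_nonneg (bend_nonneg _ _)]
        gcongr
        · exact bend_nonneg _ _
        · exact hf.abs_proportionalInterp_sub_le hs ht hy hy'
    _ = |t - s| * (|y' - y| + 2 * k * (bend (x' - x) (y' - y) * |x' - x|)) := by ring
    _ ≤ |t - s| * (|y' - y| + 2 * k * (2 * max 0 (|x' - x| - |y' - y|))) := by
        gcongr _ * (_ + _ * ?_); exact bend_mul_abs_le _ _
    _ = _ := by ring

lemma abs_heightInterp_sub_le_max (hf : ThinProfile f k) (hs : s ∈ Set.Icc (0 : ℝ) 1)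
    (ht : t ∈ Set.Icc (0 : ℝ) 1) (hy : y ∈ Set.Icc 0 (f x)) (hy' : y' ∈ Set.Icc 0 (f x')) :
    |heightInterp f t x y x' y' - heightInterp f s x y x' y'| ≤
      |t - s| * max |x' - x| |y' - y| := by
  refine (hf.abs_heightInterp_sub_le hs ht hy hy').trans ?_
  gcongr
  rcases le_total |x' - x| |y' - y| with h | h
  · simp [max_eq_left (sub_nonpos.2 h)]
  · rw [max_eq_right (sub_nonneg.2 h), max_eq_left h]
    nlinarith [hf.k_pos, hf.lt_thousandth]

lemma abs_heightInterp_sub_lt (hf : ThinProfile f k) (hs : s ∈ Set.Icc (0 : ℝ) 1)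
    (ht : t ∈ Set.Icc (0 : ℝ) 1) (hst : s ≠ t) (hy : y ∈ Set.Icc 0 (f x))
    (hy' : y' ∈ Set.Icc 0 (f x')) (h : |y' - y| < |x' - x|) :
    |heightInterp f t x y x' y' - heightInterp f s x y x' y'| < |t - s| * |x' - x| := by
  refine (hf.abs_heightInterp_sub_le hs ht hy hy').trans_lt
    (mul_lt_mul_of_pos_left ?_ (abs_pos.2 (sub_ne_zero.2 hst.symm)))
  rw [max_eq_right (sub_nonneg.2 h.le)]
  nlinarith [hf.k_pos, hf.lt_thousandth]

lemma dist_interpMap_le (hf : ThinProfile f k) (hs : s ∈ Set.Icc (0 : ℝ) 1)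
    (ht : t ∈ Set.Icc (0 : ℝ) 1) {ω : (ℝ × ℝ) × (ℝ × ℝ)}
    (hω : ω ∈ subgraphRegion f ×ˢ subgraphRegion f) :
    dist (interpMap f s ω) (interpMap f t ω) ≤ |t - s| * dist ω.1 ω.2 := by
  obtain ⟨⟨x, y⟩, ⟨x', y'⟩⟩ := ω
  obtain ⟨⟨-, hy⟩, ⟨-, hy'⟩⟩ := hω
  rw [dist_comm, dist_comm (x, y), Prod.dist_eq, Prod.dist_eq]
  simp only [Real.dist_eq, interpMap]
  refine max_le ?_ (hf.abs_heightInterp_sub_le_max hs ht hy hy')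
  rw [interp_sub_interp, abs_mul]
  gcongr
  exact le_max_left _ _

end ThinProfile

namespace ThinProfile

variable {f : ℝ → ℝ} {k t x y x' y' z z' : ℝ}

lemma proportionalInterp_mem_Icc (hf : ThinProfile f k) (ht : t ∈ Set.Icc (0 : ℝ) 1)
    (hy : y ∈ Set.Icc 0 (f x)) (hy' : y' ∈ Set.Icc 0 (f x')) :
    proportionalInterp f t x y x' y' ∈ Set.Icc 0 (f (interp t x x')) := by
  obtain ⟨hw₀, hw₁⟩ := hf.interp_div_mem_Icc ht hy hy'
  have hpos := hf.pos (interp t x x')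
  exact ⟨mul_nonneg hpos.le hw₀, mul_le_of_le_one_right hpos.le hw₁⟩

lemma interp_le_of_abs_le_two_mul (hf : ThinProfile f k) (ht : t ∈ Set.Icc (0 : ℝ) 1)
    (hy : y ≤ f x) (hy' : y' ≤ f x') (h : |x' - x| ≤ 2 * |y' - y|) :
    interp t y y' ≤ f (interp t x x') := by
  obtain ⟨ht₀, ht₁⟩ := ht
  have hk := hf.lt_thousandth
  have hk₀ := hf.k_pos
  have hslope : k * |x' - x| ≤ |y' - y| := by nlinarith [abs_nonneg (y' - y)]
  have hlip := (abs_le.1 (hf.abs_sub_le x (interp t x x'))).1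
  have hlip' := (abs_le.1 (hf.abs_sub_le x' (interp t x x'))).1
  rw [show interp t x x' - x = t * (x' - x) by unfold interp; ring, abs_mul,
    abs_of_nonneg ht₀] at hlip
  rw [show interp t x x' - x' = -((1 - t) * (x' - x)) by unfold interp; ring, abs_neg, abs_mul,
    abs_of_nonneg (sub_nonneg.2 ht₁)] at hlip'
  unfold interp at *
  rcases abs_cases (y' - y) with ⟨habs, -⟩ | ⟨habs, -⟩ <;> rw [habs] at hslope
  · linarith [mul_le_mul_of_nonneg_left hslope (sub_nonneg.2 ht₁)]
  · linarith [mul_le_mul_of_nonneg_left hslope ht₀]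

lemma heightInterp_mem_Icc (hf : ThinProfile f k) (ht : t ∈ Set.Icc (0 : ℝ) 1)
    (hy : y ∈ Set.Icc 0 (f x)) (hy' : y' ∈ Set.Icc 0 (f x')) :
    heightInterp f t x y x' y' ∈ Set.Icc 0 (f (interp t x x')) := by
  have hprop := hf.proportionalInterp_mem_Icc ht hy hy'
  have hlin : 0 ≤ interp t y y' := interp_nonneg ht hy.1 hy'.1
  have hconvex : heightInterp f t x y x' y' = interp (bend (x' - x) (y' - y)) (interp t y y')
      (proportionalInterp f t x y x' y') := by
    unfold heightInterp interpDefect interp; ring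
  have hbend : bend (x' - x) (y' - y) ∈ Set.Icc (0 : ℝ) 1 := ⟨bend_nonneg _ _, bend_le_one _ _⟩
  rw [hconvex]
  refine ⟨interp_nonneg hbend hlin hprop.1, ?_⟩
  rcases le_total (2 * |y' - y|) |x' - x| with hflat | hsteep
  · rw [bend_eq_one hflat]
    simpa [interp] using hprop.2
  · have hlin' := hf.interp_le_of_abs_le_two_mul ht hy.2 hy'.2 hsteep
    exact (interp_le_interp hbend hlin' hprop.2).trans_eq (interp_self _ _)

lemma interpMap_mem (hf : ThinProfile f k) (ht : t ∈ Set.Icc (0 : ℝ) 1)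
    {ω : (ℝ × ℝ) × (ℝ × ℝ)} (hω : ω ∈ subgraphRegion f ×ˢ subgraphRegion f) :
    interpMap f t ω ∈ subgraphRegion f := by
  obtain ⟨⟨hx, hy⟩, ⟨hx', hy'⟩⟩ := hω
  refine ⟨⟨?_, ?_⟩, hf.heightInterp_mem_Icc ht hy hy'⟩
  · exact (interp_self t (-1)).symm.trans_le (interp_le_interp ht hx.1 hx'.1)
  · exact (interp_le_interp ht hx.2 hx'.2).trans_eq (interp_self t 1)

/-! ### Strict monotonicity of the interpolated height -/

lemma proportionalInterp_sub :
    proportionalInterp f t x z x' z' - proportionalInterp f t x y x' y' =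
      interp t (f (interp t x x') / f x * (z - y)) (f (interp t x x') / f x' * (z' - y')) := by
  simp only [proportionalInterp, interp]
  ring

lemma one_sub_le_div (hf : ThinProfile f k) (ht : t ∈ Set.Icc (0 : ℝ) 1)
    (h : |x' - x| ≤ 2 * f x ∨ |x' - x| ≤ 2 * f x') :
    1 - 3 * k ≤ f (interp t x x') / f x ∧ 1 - 3 * k ≤ f (interp t x x') / f x' := by
  have hk₀ := hf.k_pos
  obtain ⟨hlip₁, hlip₂⟩ := abs_le.1 (hf.abs_sub_le x x')
  have hpos := hf.pos x
  have hpos' := hf.pos x'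
  rw [le_div_iff₀ hpos, le_div_iff₀ hpos']
  have hdist : k * |x' - x| ≤ 2 * (k * f x) ∨ k * |x' - x| ≤ 2 * (k * f x') :=
    h.imp (fun h ↦ by nlinarith) fun h ↦ by nlinarith
  rcases Set.mem_uIcc.1 (hf.interp_between ht x x') with ⟨hmin, hmax⟩ | ⟨hmin, hmax⟩ <;>
    rcases hdist with hdist | hdist <;> constructor <;> nlinarith

lemma abs_bend_sub_mul_interpDefect_le (hf : ThinProfile f k) (ht : t ∈ Set.Icc (0 : ℝ) 1)
    (hx : x ≠ x') (hy : y ∈ Set.Icc 0 (f x)) (hy' : y' ∈ Set.Icc 0 (f x')) (hyz : y ≤ z)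
    (hyz' : y' ≤ z') :
    |(bend (x' - x) (z' - z) - bend (x' - x) (y' - y)) * interpDefect f t x y x' y'| ≤
      4 * k * interp t (z - y) (z' - y') := by
  obtain ⟨ht₀, ht₁⟩ := ht
  have hk := hf.k_pos
  have hD : 0 < |x' - x| := abs_pos.2 (sub_ne_zero.2 hx.symm)
  obtain ⟨hdefect, hdefect'⟩ := hf.abs_interpDefect_le ⟨ht₀, ht₁⟩ hy hy'
  have hbend : |bend (x' - x) (z' - z) - bend (x' - x) (y' - y)| * |x' - x| ≤
      2 * ((z - y) + (z' - y')) := by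
    rw [← le_div_iff₀ hD]
    refine (abs_bend_sub_bend_le _ _ _).trans ?_
    rw [mul_div_assoc]
    gcongr
    rw [abs_le]
    constructor <;> linarith
  rw [abs_mul]
  set T := |bend (x' - x) (z' - z) - bend (x' - x) (y' - y)|
  have hT : 0 ≤ T := abs_nonneg _
  unfold interp
  rcases le_total t (1 - t) with h | h
  · nlinarith [mul_le_mul_of_nonneg_left hdefect hT,
      mul_le_mul_of_nonneg_right hbend (mul_nonneg hk.le ht₀),
      mul_nonneg (mul_nonneg hk.le (sub_nonneg.2 hyz)) (sub_nonneg.2 h)]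
  · nlinarith [mul_le_mul_of_nonneg_left hdefect' hT,
      mul_le_mul_of_nonneg_right hbend (mul_nonneg hk.le (sub_nonneg.2 ht₁)),
      mul_nonneg (mul_nonneg hk.le (sub_nonneg.2 hyz')) (sub_nonneg.2 h)]

lemma heightInterp_lt_heightInterp_of_flat (hf : ThinProfile f k) (ht : t ∈ Set.Ioo (0 : ℝ) 1)
    (hyz : y ≤ z) (hyz' : y' ≤ z') (hlt : y < z ∨ y' < z') (h : 2 * |y' - y| ≤ |x' - x|)
    (h' : 2 * |z' - z| ≤ |x' - x|) :
    heightInterp f t x y x' y' < heightInterp f t x z x' z' := by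
  have hdiv : 0 < f (interp t x x') / f x := div_pos (hf.pos _) (hf.pos _)
  have hdiv' : 0 < f (interp t x x') / f x' := div_pos (hf.pos _) (hf.pos _)
  simp only [heightInterp, interpDefect, bend_eq_one h, bend_eq_one h', one_mul, add_sub_cancel]
  rw [← sub_pos, proportionalInterp_sub]
  exact interp_pos ht (mul_nonneg hdiv.le (sub_nonneg.2 hyz))
    (mul_nonneg hdiv'.le (sub_nonneg.2 hyz'))
    (hlt.imp (fun h ↦ mul_pos hdiv (sub_pos.2 h)) fun h ↦ mul_pos hdiv' (sub_pos.2 h))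

lemma heightInterp_lt_heightInterp_of_near (hf : ThinProfile f k) (ht : t ∈ Set.Ioo (0 : ℝ) 1)
    (hx : x ≠ x') (hy : y ∈ Set.Icc 0 (f x)) (hy' : y' ∈ Set.Icc 0 (f x')) (hyz : y ≤ z)
    (hyz' : y' ≤ z') (hlt : y < z ∨ y' < z') (hnear : |x' - x| ≤ 2 * f x ∨ |x' - x| ≤ 2 * f x') :
    heightInterp f t x y x' y' < heightInterp f t x z x' z' := by
  have ht' := Set.Ioo_subset_Icc_self ht
  have hk := hf.lt_thousandth
  have hk₀ := hf.k_pos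
  have hsub := sub_nonneg.2 hyz
  have hsub' := sub_nonneg.2 hyz'
  obtain ⟨hr, hr'⟩ := hf.one_sub_le_div ht' hnear
  set T := bend (x' - x) (z' - z)
  have hT : T ∈ Set.Icc (0 : ℝ) 1 := ⟨bend_nonneg _ _, bend_le_one _ _⟩
  have hsum : 0 < interp t (z - y) (z' - y') :=
    interp_pos ht hsub hsub' (hlt.imp sub_pos.2 sub_pos.2)
  have hprop : (1 - 3 * k) * interp t (z - y) (z' - y') ≤
      proportionalInterp f t x z x' z' - proportionalInterp f t x y x' y' := by
    rw [proportionalInterp_sub]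
    refine le_trans (Eq.le ?_) (interp_le_interp ht' (mul_le_mul_of_nonneg_right hr hsub)
      (mul_le_mul_of_nonneg_right hr' hsub'))
    unfold interp; ring
  have hdefect :=
    (abs_le.1 (hf.abs_bend_sub_mul_interpDefect_le ht' hx hy hy' hyz hyz')).1
  have hdecomp : heightInterp f t x z x' z' - heightInterp f t x y x' y' =
      (1 - T) * interp t (z - y) (z' - y') + T * (proportionalInterp f t x z x' z' -
        proportionalInterp f t x y x' y') + (T - bend (x' - x) (y' - y)) *
          interpDefect f t x y x' y' := by
    simp only [heightInterp, interpDefect, T, interp]; ring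
  rw [← sub_pos, hdecomp]
  nlinarith [mul_le_mul_of_nonneg_left hprop hT.1, mul_nonneg (sub_nonneg.2 hT.2)
    (mul_pos hk₀ hsum).le, mul_pos hsum (show 0 < 1 - 7 * k by linarith)]

lemma heightInterp_lt_heightInterp (hf : ThinProfile f k) (ht : t ∈ Set.Ioo (0 : ℝ) 1)
    (hx : x ≠ x') (hy : 0 ≤ y) (hy' : 0 ≤ y') (hz : z ≤ f x) (hz' : z' ≤ f x') (hyz : y ≤ z)
    (hyz' : y' ≤ z') (hlt : y < z ∨ y' < z') :
    heightInterp f t x y x' y' < heightInterp f t x z x' z' := by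
  by_cases hflat : 2 * |y' - y| ≤ |x' - x| ∧ 2 * |z' - z| ≤ |x' - x|
  · exact hf.heightInterp_lt_heightInterp_of_flat ht hyz hyz' hlt hflat.1 hflat.2
  · refine hf.heightInterp_lt_heightInterp_of_near ht hx ⟨hy, hyz.trans hz⟩ ⟨hy', hyz'.trans hz'⟩
      hyz hyz' hlt ?_
    rw [not_and_or, not_le, not_le] at hflat
    by_contra! hfar
    rcases hflat with h | h <;> rcases abs_cases (y' - y) with ⟨e, -⟩ | ⟨e, -⟩ <;>
      rcases abs_cases (z' - z) with ⟨e', -⟩ | ⟨e', -⟩ <;> linarith [hfar.1, hfar.2]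

end ThinProfile

/-! ### Crossing pairs can be improved -/

/-- The primary transport cost: the squared sup-distance. -/
noncomputable def distSq (ω : (ℝ × ℝ) × (ℝ × ℝ)) : ℝ≥0 := nndist ω.1 ω.2 ^ 2

/-- The secondary transport cost: the squared Euclidean distance. -/
noncomputable def euclidSq (ω : (ℝ × ℝ) × (ℝ × ℝ)) : ℝ≥0 :=
  nndist ω.1.1 ω.2.1 ^ 2 + nndist ω.1.2 ω.2.2 ^ 2

lemma continuous_distSq : Continuous distSq := by unfold distSq; fun_prop

lemma continuous_euclidSq : Continuous euclidSq := by unfold euclidSq; fun_prop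

lemma coe_distSq (p q : ℝ × ℝ) : (distSq (p, q) : ℝ) = max |q.1 - p.1| |q.2 - p.2| ^ 2 := by
  rw [distSq, NNReal.coe_pow, coe_nndist, dist_comm, Prod.dist_eq, Real.dist_eq, Real.dist_eq]

lemma crossSum_euclidSq_lt_selfSum {x y x' y' a b a' b' : ℝ}
    (h : (x - a) * (x' - a') + (y - b) * (y' - b') < 0) :
    crossSum euclidSq (((x, y), (x', y')), ((a, b), (a', b'))) <
      selfSum euclidSq (((x, y), (x', y')), ((a, b), (a', b'))) := by
  simp only [← NNReal.coe_lt_coe, crossSum, selfSum, euclidSq, NNReal.coe_add, NNReal.coe_pow,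
    coe_nndist, Real.dist_eq, sq_abs]
  linarith

lemma sq_add_sq_lt_or_eq {t d e p q : ℝ} (ht : t ∈ Set.Ioo (0 : ℝ) 1) (hd : 0 ≤ d)
    (hp : 0 ≤ p) (hq : 0 ≤ q) (hpt : p ≤ interp t e d) (hqt : q ≤ interp t d e) :
    p ^ 2 + q ^ 2 < d ^ 2 + e ^ 2 ∨ e = d ∧ p = d ∧ q = d := by
  have htt : 0 < t * (1 - t) := mul_pos ht.1 (sub_pos.2 ht.2)
  have hsum : p ^ 2 + q ^ 2 ≤ d ^ 2 + e ^ 2 - 2 * (t * (1 - t)) * (d - e) ^ 2 := by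
    have := add_le_add (pow_le_pow_left₀ hp hpt 2) (pow_le_pow_left₀ hq hqt 2)
    unfold interp at this
    linarith
  rcases eq_or_ne e d with rfl | hne
  · rw [interp_self] at hpt hqt
    rcases hpt.lt_or_eq with hlt | rfl
    · left; nlinarith
    · rcases hqt.lt_or_eq with hlt | rfl
      · left; nlinarith
      · exact .inr ⟨rfl, rfl, rfl⟩
  · left
    nlinarith [mul_pos htt (sq_pos_of_ne_zero (sub_ne_zero.2 hne.symm))]

lemma eq_and_eq_of_interp_eq {t x x' a a' D : ℝ} (ht : t ∈ Set.Ioo (0 : ℝ) 1) (hD : 0 < D)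
    (hx : |x' - x| = D) (ha : |a' - a| ≤ D) (hxa : |x - a'| = D) (hax : |a - x'| = D)
    (h : interp t x x' = interp t a a') : x = a ∧ x' = a' := by
  have ht₁ := sub_pos.2 ht.2
  obtain ⟨ha₁, ha₂⟩ := abs_le.1 ha
  have htD := mul_pos ht.1 hD
  have htD' := mul_pos ht₁ hD
  have h₁ := mul_le_mul_of_nonneg_left ha₁ ht.1.le
  have h₂ := mul_le_mul_of_nonneg_left ha₂ ht.1.le
  have h₃ := mul_le_mul_of_nonneg_left ha₁ ht₁.le
  have h₄ := mul_le_mul_of_nonneg_left ha₂ ht₁.le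
  unfold interp at h
  rcases eq_or_eq_neg_of_abs_eq hx with hx | hx <;> obtain rfl := eq_add_of_sub_eq hx <;>
    rcases eq_or_eq_neg_of_abs_eq hxa with hxa | hxa <;>
      rcases eq_or_eq_neg_of_abs_eq hax with hax | hax <;> constructor <;> linarith

namespace ThinProfile

variable {f : ℝ → ℝ} {k t x y x' y' a b a' b' : ℝ}

lemma dist_cross_le (hf : ThinProfile f k) (ht : t ∈ Set.Icc (0 : ℝ) 1)
    {ω η : (ℝ × ℝ) × (ℝ × ℝ)} (hω : ω ∈ subgraphRegion f ×ˢ subgraphRegion f)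
    (hη : η ∈ subgraphRegion f ×ˢ subgraphRegion f) (h : interpMap f t ω = interpMap f t η) :
    dist ω.1 η.2 ≤ interp t (dist η.1 η.2) (dist ω.1 ω.2) := by
  have hω' := hf.dist_interpMap_le (Set.left_mem_Icc.2 zero_le_one) ht hω
  have hη' := hf.dist_interpMap_le ht (Set.right_mem_Icc.2 zero_le_one) hη
  rw [hf.interpMap_zero, sub_zero, abs_of_nonneg ht.1, h] at hω'
  rw [hf.interpMap_one, abs_of_nonneg (sub_nonneg.2 ht.2)] at hη'
  rw [interp, add_comm]
  exact (dist_triangle _ _ _).trans (add_le_add hω' hη')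

lemma mul_neg_of_heightInterp_eq (hf : ThinProfile f k) (ht : t ∈ Set.Ioo (0 : ℝ) 1) (hx : x ≠ x')
    (hy : y ∈ Set.Icc 0 (f x)) (hy' : y' ∈ Set.Icc 0 (f x')) (hb : b ∈ Set.Icc 0 (f x))
    (hb' : b' ∈ Set.Icc 0 (f x')) (h : heightInterp f t x y x' y' = heightInterp f t x b x' b')
    (hne : ¬ (y = b ∧ y' = b')) : (y - b) * (y' - b') < 0 := by
  by_contra! hcon
  rcases mul_nonneg_iff.1 hcon with ⟨h₁, h₂⟩ | ⟨h₁, h₂⟩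
  · refine (hf.heightInterp_lt_heightInterp ht hx hb.1 hb'.1 hy.2 hy'.2 (by linarith)
      (by linarith) ?_).ne' h
    by_contra! hle
    exact hne ⟨by linarith, by linarith⟩
  · refine (hf.heightInterp_lt_heightInterp ht hx hy.1 hy'.1 hb.2 hb'.2 (by linarith)
      (by linarith) ?_).ne h
    by_contra! hle
    exact hne ⟨by linarith, by linarith⟩

lemma eq_and_eq_of_flat_crossing (hf : ThinProfile f k) (ht : t ∈ Set.Ioo (0 : ℝ) 1) {D : ℝ}
    (hy : y ∈ Set.Icc 0 (f x)) (hy' : y' ∈ Set.Icc 0 (f x')) (hb : b ∈ Set.Icc 0 (f a))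
    (hb' : b' ∈ Set.Icc 0 (f a')) (hflat : |y' - y| < |x' - x|) (hx : |x' - x| = D)
    (ha : max |a' - a| |b' - b| = D) (hxa : max |x - a'| |y - b'| = D)
    (hax : max |a - x'| |b - y'| = D) (hfst : interp t x x' = interp t a a')
    (hsnd : heightInterp f t x y x' y' = heightInterp f t a b a' b') : x = a ∧ x' = a' := by
  have zero_mem : (0 : ℝ) ∈ Set.Icc (0 : ℝ) 1 := Set.left_mem_Icc.2 zero_le_one
  have one_mem : (1 : ℝ) ∈ Set.Icc (0 : ℝ) 1 := Set.right_mem_Icc.2 zero_le_one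
  have ht' := Set.Ioo_subset_Icc_self ht
  have h₁ := hf.abs_heightInterp_sub_lt zero_mem ht' ht.1.ne hy hy' hflat
  have h₂ := hf.abs_heightInterp_sub_lt ht' one_mem ht.2.ne hy hy' hflat
  have h₃ := hf.abs_heightInterp_sub_le_max zero_mem ht' hb hb'
  have h₄ := hf.abs_heightInterp_sub_le_max ht' one_mem hb hb'
  rw [hf.heightInterp_zero, sub_zero, abs_of_pos ht.1, abs_lt, hsnd, hx] at h₁
  rw [hf.heightInterp_one, abs_of_pos (sub_pos.2 ht.2), abs_lt, hsnd, hx] at h₂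
  rw [hf.heightInterp_zero, sub_zero, abs_of_pos ht.1, abs_le, ha] at h₃
  rw [hf.heightInterp_one, abs_of_pos (sub_pos.2 ht.2), abs_le, ha] at h₄
  have hyb : |y - b'| < D := abs_lt.2 ⟨by linarith [h₁.2, h₄.2], by linarith [h₁.1, h₄.1]⟩
  have hby : |b - y'| < D := abs_lt.2 ⟨by linarith [h₂.2, h₃.2], by linarith [h₂.1, h₃.1]⟩
  refine eq_and_eq_of_interp_eq ht (hx ▸ (abs_nonneg _).trans_lt hflat) hx
    (ha ▸ le_max_left _ _) ?_ ?_ hfst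
  · exact (max_eq_iff.1 hxa).elim And.left fun h ↦ absurd h.1 hyb.ne
  · exact (max_eq_iff.1 hax).elim And.left fun h ↦ absurd h.1 hby.ne

lemma inner_neg_of_flat_crossing (hf : ThinProfile f k) (ht : t ∈ Set.Ioo (0 : ℝ) 1) {D : ℝ}
    (hy : y ∈ Set.Icc 0 (f x)) (hy' : y' ∈ Set.Icc 0 (f x')) (hb : b ∈ Set.Icc 0 (f a))
    (hb' : b' ∈ Set.Icc 0 (f a')) (hflat : |y' - y| < |x' - x|) (hx : |x' - x| = D)
    (ha : max |a' - a| |b' - b| = D) (hxa : max |x - a'| |y - b'| = D)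
    (hax : max |a - x'| |b - y'| = D) (hfst : interp t x x' = interp t a a')
    (hsnd : heightInterp f t x y x' y' = heightInterp f t a b a' b')
    (hne : ((x, y), (x', y')) ≠ ((a, b), (a', b'))) :
    (x - a) * (x' - a') + (y - b) * (y' - b') < 0 := by
  obtain ⟨rfl, rfl⟩ := hf.eq_and_eq_of_flat_crossing ht hy hy' hb hb' hflat hx ha hxa hax hfst hsnd
  have hx_ne : x ≠ x' := by
    rintro rfl
    exact absurd hflat (by simp)
  rw [sub_self, zero_mul, zero_add]
  refine hf.mul_neg_of_heightInterp_eq ht hx_ne hy hy' hb hb' hsnd ?_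
  rintro ⟨rfl, rfl⟩
  exact hne rfl

lemma inner_neg_of_interp_eq (ht : t ∈ Set.Ioo (0 : ℝ) 1) (hfst : interp t x x' = interp t a a')
    (hsnd : interp t y y' = interp t b b') (hne : ((x, y), (x', y')) ≠ ((a, b), (a', b'))) :
    (x - a) * (x' - a') + (y - b) * (y' - b') < 0 := by
  have ht₁ := sub_pos.2 ht.2
  have hx : x - a = -(t / (1 - t)) * (x' - a') := by
    unfold interp at hfst; field_simp; linarith
  have hy : y - b = -(t / (1 - t)) * (y' - b') := by
    unfold interp at hsnd; field_simp; linarith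
  have hpos : 0 < (x' - a') ^ 2 + (y' - b') ^ 2 := by
    by_contra! hle
    have hx' : x' - a' = 0 := by nlinarith [sq_nonneg (x' - a'), sq_nonneg (y' - b')]
    have hy' : y' - b' = 0 := by nlinarith [sq_nonneg (x' - a'), sq_nonneg (y' - b')]
    rw [hx', mul_zero, sub_eq_zero] at hx
    rw [hy', mul_zero, sub_eq_zero] at hy
    exact hne (by rw [hx, hy, sub_eq_zero.1 hx', sub_eq_zero.1 hy'])
  rw [hx, hy]
  linarith [mul_pos (div_pos ht.1 ht₁) hpos]

lemma inner_neg_of_crossing (hf : ThinProfile f k) (ht : t ∈ Set.Ioo (0 : ℝ) 1) {D : ℝ}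
    (hy : y ∈ Set.Icc 0 (f x)) (hy' : y' ∈ Set.Icc 0 (f x')) (hb : b ∈ Set.Icc 0 (f a))
    (hb' : b' ∈ Set.Icc 0 (f a')) (hx : max |x' - x| |y' - y| = D)
    (ha : max |a' - a| |b' - b| = D) (hxa : max |x - a'| |y - b'| = D)
    (hax : max |a - x'| |b - y'| = D) (hfst : interp t x x' = interp t a a')
    (hsnd : heightInterp f t x y x' y' = heightInterp f t a b a' b')
    (hne : ((x, y), (x', y')) ≠ ((a, b), (a', b'))) :
    (x - a) * (x' - a') + (y - b) * (y' - b') < 0 := by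
  rcases lt_or_ge |y' - y| |x' - x| with hflat | hsteep
  · exact hf.inner_neg_of_flat_crossing ht hy hy' hb hb' hflat (max_eq_left hflat.le ▸ hx) ha hxa
      hax hfst hsnd hne
  rcases lt_or_ge |b' - b| |a' - a| with hflat' | hsteep'
  · linarith [hf.inner_neg_of_flat_crossing ht hb hb' hy hy' hflat' (max_eq_left hflat'.le ▸ ha) hx
      hax hxa hfst.symm hsnd.symm hne.symm]
  · rw [hf.heightInterp_eq_interp_of_steep hsteep, hf.heightInterp_eq_interp_of_steep hsteep']
      at hsnd
    exact inner_neg_of_interp_eq ht hfst hsnd hne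

lemma swapImproves_of_crossing (hf : ThinProfile f k) (ht : t ∈ Set.Ioo (0 : ℝ) 1)
    {ω η : (ℝ × ℝ) × (ℝ × ℝ)} (hω : ω ∈ subgraphRegion f ×ˢ subgraphRegion f)
    (hη : η ∈ subgraphRegion f ×ˢ subgraphRegion f) (h : interpMap f t ω = interpMap f t η)
    (hne : ω ≠ η) : SwapImproves distSq euclidSq (ω, η) := by
  have ht' := Set.Ioo_subset_Icc_self ht
  rcases sq_add_sq_lt_or_eq ht dist_nonneg dist_nonneg dist_nonneg (hf.dist_cross_le ht' hω hη h)
    (hf.dist_cross_le ht' hη hω h.symm) with hlt | ⟨hη_dist, hcross, hcross'⟩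
  · exact .inl (by exact_mod_cast hlt)
  · refine .inr ⟨?_, ?_⟩
    · refine NNReal.coe_injective ?_
      simp only [crossSum, selfSum, distSq, NNReal.coe_add, NNReal.coe_pow, coe_nndist, hη_dist,
        hcross, hcross']
    · obtain ⟨⟨x, y⟩, ⟨x', y'⟩⟩ := ω
      obtain ⟨⟨a, b⟩, ⟨a', b'⟩⟩ := η
      rw [dist_comm (a, b) (a', b'), dist_comm (x, y) (x', y')] at hη_dist
      rw [dist_comm (x, y) (x', y')] at hcross hcross'
      exact crossSum_euclidSq_lt_selfSum (hf.inner_neg_of_crossing ht hω.1.2 hω.2.2 hη.1.2 hη.2.2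
        rfl hη_dist hcross hcross' (congrArg Prod.fst h) (congrArg Prod.snd h) hne)

end ThinProfile

/-! ### The support of an optimal coupling -/

/-- A measurable set of pairs of points of the region which is cyclically monotone for `distSq` (on
two-point cycles), on which equally displaced pairs are ordered, and whose pairs
have disjoint interpolations at time `t`. -/
structure NoncrossingSupport (f : ℝ → ℝ) (t : ℝ) (Γ : Set ((ℝ × ℝ) × (ℝ × ℝ))) : Prop where
  measurableSet : MeasurableSet Γ
  subset : Γ ⊆ subgraphRegion f ×ˢ subgraphRegion f
  selfSum_le : ∀ ω ∈ Γ, ∀ η ∈ Γ, selfSum distSq (ω, η) ≤ crossSum distSq (ω, η)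
  flat_mono : ∀ ω ∈ Γ, ∀ η ∈ Γ, ω.1.1 = η.1.1 → ω.2.1 = η.2.1 →
    |ω.2.2 - ω.1.2| < |ω.2.1 - ω.1.1| → |η.2.2 - η.1.2| < |η.2.1 - η.1.1| →
    ω.1.2 < η.1.2 → ω.2.2 ≤ η.2.2
  steep_mono : ∀ ω ∈ Γ, ∀ η ∈ Γ, ω.1.2 = η.1.2 → ω.2.2 = η.2.2 →
    |ω.2.1 - ω.1.1| < |ω.2.2 - ω.1.2| → |η.2.1 - η.1.1| < |η.2.2 - η.1.2| →
    ω.1.1 < η.1.1 → ω.2.1 ≤ η.2.1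
  injOn : Set.InjOn (interpMap f t) Γ

lemma abs_sub_lt_of_swap {y z y' z' D : ℝ} (hy : |y' - y| < D) (hz : |z' - z| < D) (h : y < z)
    (h' : z' < y') : |z' - y| < D ∧ |y' - z| < D := by
  rw [abs_lt] at hy hz
  exact ⟨abs_lt.2 ⟨by linarith, by linarith⟩, abs_lt.2 ⟨by linarith, by linarith⟩⟩

lemma swapImproves_of_flat {ω η : (ℝ × ℝ) × (ℝ × ℝ)} (h₁ : ω.1.1 = η.1.1) (h₂ : ω.2.1 = η.2.1)
    (hω : |ω.2.2 - ω.1.2| < |ω.2.1 - ω.1.1|) (hη : |η.2.2 - η.1.2| < |η.2.1 - η.1.1|)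
    (hlt : ω.1.2 < η.1.2) (hgt : η.2.2 < ω.2.2) : SwapImproves distSq euclidSq (ω, η) := by
  obtain ⟨⟨x, y⟩, ⟨x', y'⟩⟩ := ω
  obtain ⟨⟨a, b⟩, ⟨a', b'⟩⟩ := η
  obtain rfl : x = a := h₁
  obtain rfl : x' = a' := h₂
  obtain ⟨hcross, hcross'⟩ := abs_sub_lt_of_swap hω hη hlt hgt
  refine .inr ⟨NNReal.coe_injective ?_, crossSum_euclidSq_lt_selfSum ?_⟩
  · simp only [crossSum, selfSum, NNReal.coe_add, coe_distSq]
    rw [max_eq_left hω.le, max_eq_left hη.le, max_eq_left hcross.le, max_eq_left hcross'.le]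
  · rw [sub_self, zero_mul, zero_add]
    exact mul_neg_of_neg_of_pos (sub_neg.2 hlt) (sub_pos.2 hgt)

lemma swapImproves_of_steep {ω η : (ℝ × ℝ) × (ℝ × ℝ)} (h₁ : ω.1.2 = η.1.2) (h₂ : ω.2.2 = η.2.2)
    (hω : |ω.2.1 - ω.1.1| < |ω.2.2 - ω.1.2|) (hη : |η.2.1 - η.1.1| < |η.2.2 - η.1.2|)
    (hlt : ω.1.1 < η.1.1) (hgt : η.2.1 < ω.2.1) : SwapImproves distSq euclidSq (ω, η) := by
  obtain ⟨⟨x, y⟩, ⟨x', y'⟩⟩ := ω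
  obtain ⟨⟨a, b⟩, ⟨a', b'⟩⟩ := η
  obtain rfl : y = b := h₁
  obtain rfl : y' = b' := h₂
  obtain ⟨hcross, hcross'⟩ := abs_sub_lt_of_swap hω hη hlt hgt
  refine .inr ⟨NNReal.coe_injective ?_, crossSum_euclidSq_lt_selfSum ?_⟩
  · simp only [crossSum, selfSum, NNReal.coe_add, coe_distSq]
    rw [max_eq_right hω.le, max_eq_right hη.le, max_eq_right hcross.le, max_eq_right hcross'.le]
  · rw [sub_self, zero_mul, add_zero]
    exact mul_neg_of_neg_of_pos (sub_neg.2 hlt) (sub_pos.2 hgt)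

lemma ThinProfile.exists_noncrossingSupport {f : ℝ → ℝ} {k t : ℝ} (hf : ThinProfile f k)
    (ht : t ∈ Set.Ioo (0 : ℝ) 1) {μ ν : Measure (ℝ × ℝ)} [IsProbabilityMeasure μ]
    {π : Measure ((ℝ × ℝ) × (ℝ × ℝ))} (hπ : LexOptimal distSq euclidSq μ ν π)
    (hmem : ∀ᵐ ω ∂π, ω ∈ subgraphRegion f ×ˢ subgraphRegion f) :
    ∃ Γ, NoncrossingSupport f t Γ ∧ ∀ᵐ ω ∂π, ω ∈ Γ := by
  have hc₁ := continuous_distSq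
  have hm := continuous_distSq.measurable
  have hm' := continuous_euclidSq.measurable
  have hX := hf.isCompact_subgraphRegion.measurableSet
  obtain ⟨Γ₁, hm₁, hae₁, hΓ₁⟩ := hπ.exists_forall_notMem_of_swapImproves hm hm'
    (g := fun _ ↦ ()) measurable_const hmem
    (R := {q | crossSum distSq q < selfSum distSq q})
    (isOpen_lt (by unfold crossSum; fun_prop) (by unfold selfSum; fun_prop))
    fun _ _ _ _ _ hR ↦ .inl hR
  obtain ⟨Γ₂, hm₂, hae₂, hΓ₂⟩ := hπ.exists_forall_notMem_of_swapImproves hm hm'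
    (g := fun ω ↦ (ω.1.1, ω.2.1)) (by fun_prop) hmem
    (R := {q | |q.1.2.2 - q.1.1.2| < |q.1.2.1 - q.1.1.1| ∧
      |q.2.2.2 - q.2.1.2| < |q.2.2.1 - q.2.1.1| ∧ q.1.1.2 < q.2.1.2 ∧ q.2.2.2 < q.1.2.2})
    (by refine .and ?_ (.and ?_ (.and ?_ ?_)) <;> exact isOpen_lt (by fun_prop) (by fun_prop))
    fun ω _ η _ heq ⟨hω, hη, hlt, hgt⟩ ↦
      swapImproves_of_flat (Prod.mk.inj heq).1 (Prod.mk.inj heq).2 hω hη hlt hgt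
  obtain ⟨Γ₃, hm₃, hae₃, hΓ₃⟩ := hπ.exists_forall_notMem_of_swapImproves hm hm'
    (g := fun ω ↦ (ω.1.2, ω.2.2)) (by fun_prop) hmem
    (R := {q | |q.1.2.1 - q.1.1.1| < |q.1.2.2 - q.1.1.2| ∧
      |q.2.2.1 - q.2.1.1| < |q.2.2.2 - q.2.1.2| ∧ q.1.1.1 < q.2.1.1 ∧ q.2.2.1 < q.1.2.1})
    (by refine .and ?_ (.and ?_ (.and ?_ ?_)) <;> exact isOpen_lt (by fun_prop) (by fun_prop))
    fun ω _ η _ heq ⟨hω, hη, hlt, hgt⟩ ↦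
      swapImproves_of_steep (Prod.mk.inj heq).1 (Prod.mk.inj heq).2 hω hη hlt hgt
  obtain ⟨Γ₄, hm₄, hae₄, hΓ₄⟩ := hπ.exists_forall_notMem_of_swapImproves hm hm'
    (hf.measurable_interpMap t) hmem
    (R := {q | q.1 ≠ q.2}) (isOpen_ne_fun continuous_fst continuous_snd)
    fun ω hω η hη heq hne ↦ hf.swapImproves_of_crossing ht hω hη heq hne
  refine ⟨(subgraphRegion f ×ˢ subgraphRegion f) ∩ Γ₁ ∩ Γ₂ ∩ Γ₃ ∩ Γ₄, ?_, ?_⟩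
  · constructor
    · exact ((((hX.prod hX).inter hm₁).inter hm₂).inter hm₃).inter hm₄
    · exact fun ω hω ↦ hω.1.1.1.1
    · exact fun ω hω η hη ↦ not_lt.1 (hΓ₁ ω hω.1.1.1.2 η hη.1.1.1.2 rfl)
    · exact fun ω hω η hη h₁ h₂ hflat hflat' hlt ↦ not_lt.1 fun hgt ↦
        hΓ₂ ω hω.1.1.2 η hη.1.1.2 (Prod.ext h₁ h₂) ⟨hflat, hflat', hlt, hgt⟩
    · exact fun ω hω η hη h₁ h₂ hsteep hsteep' hlt ↦ not_lt.1 fun hgt ↦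
        hΓ₃ ω hω.1.2 η hη.1.2 (Prod.ext h₁ h₂) ⟨hsteep, hsteep', hlt, hgt⟩
    · exact fun ω hω η hη heq ↦ not_not.1 (hΓ₄ ω hω.2 η hη.2 heq)
  · filter_upwards [hmem, hae₁, hae₂, hae₃, hae₄] with ω h h₁ h₂ h₃ h₄
    exact ⟨⟨⟨⟨h, h₁⟩, h₂⟩, h₃⟩, h₄⟩

/-! ### The weighted Jacobian estimate -/

/-- The density of the reference measure with respect to Lebesgue measure. -/
noncomputable def weight (f : ℝ → ℝ) (K : ℝ) (p : ℝ × ℝ) : ℝ :=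
  1 / f p.1 * Real.exp (-K * (p.2 / f p.1) ^ 2)

/-- The derivative in `y`, divided by `1 - t`, of the height
`interp t y y' + (c - τ * (y' - y)) * interpDefect f t x y x' y'`, where `θ = c - τ * (y' - y)`. -/
noncomputable def heightSlope₀ (f : ℝ → ℝ) (t θ τ x y x' y' : ℝ) : ℝ :=
  1 + θ * (f (interp t x x') / f x - 1) + τ / (1 - t) * interpDefect f t x y x' y'

/-- The derivative in `y'`, divided by `t`, of the height
`interp t y y' + (c - τ * (y' - y)) * interpDefect f t x y x' y'`, where `θ = c - τ * (y' - y)`. -/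
noncomputable def heightSlope₁ (f : ℝ → ℝ) (t θ τ x y x' y' : ℝ) : ℝ :=
  1 + θ * (f (interp t x x') / f x' - 1) - τ / t * interpDefect f t x y x' y'

/-- Two points of the region whose displacement is not flat, in the sense that `bend` may differ
from `1`. -/
structure NonflatPair (f : ℝ → ℝ) (x y x' y' : ℝ) : Prop where
  le_one : x ≤ 1
  le_one' : x' ≤ 1
  mem : y ∈ Set.Icc 0 (f x)
  mem' : y' ∈ Set.Icc 0 (f x')
  le_two_mul : |x' - x| ≤ 2 * |y' - y|

lemma sub_two_mul_sq_le_log_one_add {z : ℝ} (hz : |z| ≤ 1 / 2) :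
    z - 2 * z ^ 2 ≤ Real.log (1 + z) := by
  have hz_ge := (abs_le.1 hz).1
  have hpos : 0 < 1 + z := by linarith
  refine le_trans ?_ (Real.one_sub_inv_le_log_of_pos hpos)
  rw [show 1 - (1 + z)⁻¹ = z / (1 + z) by field_simp; ring, le_div_iff₀ hpos]
  nlinarith [mul_nonneg (sq_nonneg z) (show 0 ≤ 1 / 2 + z by linarith),
    mul_nonneg (sq_nonneg z) hpos.le]

lemma interp_sub_le_interp_log {t a b c : ℝ} (ht : t ∈ Set.Icc (0 : ℝ) 1) (hc : c ≤ 1 / 2)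
    (ha : |a| ≤ t * c) (hb : |b| ≤ (1 - t) * c) :
    interp t a b - 2 * (t * (1 - t)) * c ^ 2 ≤
      interp t (Real.log (1 + a)) (Real.log (1 + b)) := by
  have hc₀ : 0 ≤ c := by linarith [abs_nonneg a, abs_nonneg b]
  have hlog_a := sub_two_mul_sq_le_log_one_add
    (ha.trans ((mul_le_of_le_one_left hc₀ ht.2).trans hc))
  have hlog_b := sub_two_mul_sq_le_log_one_add
    (hb.trans ((mul_le_of_le_one_left hc₀ (by linarith [ht.1])).trans hc))
  have hsq_a : a ^ 2 ≤ (t * c) ^ 2 := sq_le_sq' (abs_le.1 ha).1 (abs_le.1 ha).2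
  have hsq_b : b ^ 2 ≤ ((1 - t) * c) ^ 2 := sq_le_sq' (abs_le.1 hb).1 (abs_le.1 hb).2
  calc interp t a b - 2 * (t * (1 - t)) * c ^ 2
      = interp t (a - 2 * (t * c) ^ 2) (b - 2 * ((1 - t) * c) ^ 2) := by unfold interp; ring
    _ ≤ interp t (a - 2 * a ^ 2) (b - 2 * b ^ 2) :=
        interp_le_interp ht (by linarith) (by linarith)
    _ ≤ _ := interp_le_interp ht hlog_a hlog_b

lemma interp_one_sub (t x x' : ℝ) : interp (1 - t) x' x = interp t x x' := by
  unfold interp; ring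

lemma heightSlope₁_eq_heightSlope₀ (f : ℝ → ℝ) (t θ τ x y x' y' : ℝ) :
    heightSlope₁ f t θ τ x y x' y' = heightSlope₀ f (1 - t) θ (-τ) x' y' x y := by
  unfold heightSlope₀ heightSlope₁ interpDefect proportionalInterp
  simp only [interp_one_sub]
  ring

namespace ThinProfile

variable {f : ℝ → ℝ} {k K t θ τ x y x' y' : ℝ}

lemma weight_pos (hf : ThinProfile f k) (K : ℝ) (p : ℝ × ℝ) : 0 < weight f K p :=
  mul_pos (one_div_pos.2 (hf.pos p.1)) (Real.exp_pos _)

lemma continuous_weight (hf : ThinProfile f k) (K : ℝ) : Continuous (weight f K) := by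
  have hcont := hf.continuous
  have hne : ∀ p : ℝ × ℝ, f p.1 ≠ 0 := fun p ↦ (hf.pos p.1).ne'
  unfold weight
  fun_prop (disch := exact hne _)

lemma log_weight (hf : ThinProfile f k) (K : ℝ) (p : ℝ × ℝ) :
    Real.log (weight f K p) = -Real.log (f p.1) - K * (p.2 / f p.1) ^ 2 := by
  have hpos := hf.pos p.1
  rw [weight, Real.log_mul (by positivity) (by positivity), Real.log_exp, one_div, Real.log_inv]
  ring

lemma weight_rpow_mul_rpow_le (hf : ThinProfile f k) {a b : ℝ} {p q z : ℝ × ℝ} (ha : 0 < a)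
    (hb : 0 < b)
    (h : 0 ≤ interp t (Real.log (a * f p.1 / f z.1)) (Real.log (b * f q.1 / f z.1)) +
      K * (interp t ((p.2 / f p.1) ^ 2) ((q.2 / f q.1) ^ 2) - (z.2 / f z.1) ^ 2)) :
    weight f K p ^ (1 - t) * weight f K q ^ t ≤ a ^ (1 - t) * b ^ t * weight f K z := by
  have hwp := hf.weight_pos K p
  have hwq := hf.weight_pos K q
  have hwz := hf.weight_pos K z
  have hp := hf.pos p.1
  have hq := hf.pos q.1
  have hz := hf.pos z.1
  rw [Real.log_div (by positivity) hz.ne', Real.log_mul ha.ne' hp.ne',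
    Real.log_div (by positivity) hz.ne', Real.log_mul hb.ne' hq.ne'] at h
  rw [← Real.log_le_log_iff (by positivity) (by positivity),
    Real.log_mul (by positivity) (by positivity), Real.log_mul (by positivity) (by positivity),
    Real.log_mul (by positivity) (by positivity), Real.log_rpow hwp, Real.log_rpow hwq,
    Real.log_rpow ha, Real.log_rpow hb, hf.log_weight, hf.log_weight, hf.log_weight]
  unfold interp at h
  linarith

lemma abs_sub_interp_le (hf : ThinProfile f k) (ht : t ∈ Set.Icc (0 : ℝ) 1) (x x' : ℝ) :
    |f x - f (interp t x x')| ≤ t * (k * |x' - x|) ∧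
      |f x' - f (interp t x x')| ≤ (1 - t) * (k * |x' - x|) := by
  have h₀ := hf.abs_sub_le (interp t x x') x
  have h₁ := hf.abs_sub_le (interp t x x') x'
  rw [show x - interp t x x' = -(t * (x' - x)) by unfold interp; ring, abs_neg, abs_mul,
    abs_of_nonneg ht.1] at h₀
  rw [show x' - interp t x x' = (1 - t) * (x' - x) by unfold interp; ring, abs_mul,
    abs_of_nonneg (sub_nonneg.2 ht.2)] at h₁
  exact ⟨h₀.trans_eq (by ring), h₁.trans_eq (by ring)⟩

lemma abs_interpDefect_le_mul (hf : ThinProfile f k) (ht : t ∈ Set.Icc (0 : ℝ) 1)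
    (hy : y ∈ Set.Icc 0 (f x)) (hy' : y' ∈ Set.Icc 0 (f x')) :
    |interpDefect f t x y x' y'| ≤
      t * (1 - t) * (|x' - x| * (k * |y' / f x' - y / f x| + |x' - x|)) := by
  have hs : 0 ≤ t * (1 - t) := mul_nonneg ht.1 (sub_nonneg.2 ht.2)
  have hx := (hf.pos x).ne'
  have hx' := (hf.pos x').ne'
  obtain ⟨hw₀, hw₁⟩ := hf.interp_div_mem_Icc ht hy hy'
  set w := interp t (y / f x) (y' / f x') with hw
  set G := interp t (f x) (f x') - f (interp t x x') with hG
  have heq : interpDefect f t x y x' y' =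
      -(t * (1 - t) * ((f x' - f x) * (y' / f x' - y / f x)) + G * w) := by
    rw [interpDefect, proportionalInterp, hG, hw]
    unfold interp
    field_simp
    ring
  have hG₀ : 0 ≤ G := sub_nonneg.2 (hf.interp_le ht x x')
  have hG₁ : G ≤ t * (1 - t) * |x' - x| ^ 2 := by
    rw [sq_abs]; linarith [hf.interp_le_add ht x x']
  calc |interpDefect f t x y x' y'|
      ≤ t * (1 - t) * (|f x' - f x| * |y' / f x' - y / f x|) + G * w := by
        rw [heq, abs_neg]
        refine (abs_add_le _ _).trans_eq ?_
        rw [abs_mul, abs_of_nonneg hs, abs_mul, abs_of_nonneg (mul_nonneg hG₀ hw₀)]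
    _ ≤ t * (1 - t) * (k * |x' - x| * |y' / f x' - y / f x|) + t * (1 - t) * |x' - x| ^ 2 * 1 := by
        gcongr
        exact hf.abs_sub_le x x'
    _ = _ := by ring

end ThinProfile

namespace NonflatPair

variable {f : ℝ → ℝ} {k K t θ τ x y x' y' : ℝ}

lemma le_mul_interp (h : NonflatPair f x y x' y') (hf : ThinProfile f k)
    (ht : t ∈ Set.Icc (0 : ℝ) 1) :
    f x ≤ 101 / 100 * f (interp t x x') ∧ f x' ≤ 101 / 100 * f (interp t x x') := by
  have hk := hf.lt_thousandth
  have hx := hf.pos x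
  have hx' := hf.pos x'
  have hnear : |x' - x| ≤ 2 * f x ∨ |x' - x| ≤ 2 * f x' := by
    rcases le_total y y' with hle | hle
    · exact .inr (by linarith [h.le_two_mul, abs_of_nonneg (sub_nonneg.2 hle), h.mem.1, h.mem'.2])
    · exact .inl (by linarith [h.le_two_mul, abs_of_nonpos (sub_nonpos.2 hle), h.mem.2, h.mem'.1])
  obtain ⟨hr, hr'⟩ := hf.one_sub_le_div ht hnear
  rw [le_div_iff₀ hx] at hr
  rw [le_div_iff₀ hx'] at hr'
  constructor <;> nlinarith

lemma abs_sub_le_mul (h : NonflatPair f x y x' y') (hf : ThinProfile f k)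
    (ht : t ∈ Set.Icc (0 : ℝ) 1) :
    |x' - x| ≤ 21 / 10 * f (interp t x x') * |y' / f x' - y / f x| := by
  have hx := hf.pos x
  have hx' := hf.pos x'
  have hk := hf.k_pos
  obtain ⟨hu₀, hu₁⟩ := hf.div_mem_Icc h.mem
  have hkD : k * |x' - x| ≤ 1 / 1000 * |x' - x| := by gcongr; exact hf.lt_thousandth.le
  have hdiff : |y' - y| ≤ f x' * |y' / f x' - y / f x| + k * |x' - x| := by
    calc |y' - y| = |f x' * (y' / f x' - y / f x) + (f x' - f x) * (y / f x)| := by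
          congr 1; field_simp; ring
      _ ≤ f x' * |y' / f x' - y / f x| + |f x' - f x| * (y / f x) := by
          refine (abs_add_le _ _).trans_eq ?_
          rw [abs_mul, abs_mul, abs_of_pos hx', abs_of_nonneg hu₀]
      _ ≤ f x' * |y' / f x' - y / f x| + k * |x' - x| * 1 := by
          gcongr
          exact hf.abs_sub_le x x'
      _ = _ := by rw [mul_one]
  have hmul := mul_le_mul_of_nonneg_right (h.le_mul_interp hf ht).2
    (abs_nonneg (y' / f x' - y / f x))
  linarith [h.le_two_mul, mul_nonneg hx'.le (abs_nonneg (y' / f x' - y / f x))]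

lemma abs_sub_le_mul_of_thin (h : NonflatPair f x y x' y') (hf : ThinProfile f k)
    (ht : t ∈ Set.Icc (0 : ℝ) 1) : |x' - x| ≤ 63 / 10 * (k * |y' / f x' - y / f x|) := by
  have hm : f (interp t x x') ≤ 3 * k := hf.le_of_le_one
    ((interp_le_interp ht h.le_one h.le_one').trans_eq (interp_self t 1))
  have := mul_le_mul_of_nonneg_right hm (abs_nonneg (y' / f x' - y / f x))
  linarith [h.abs_sub_le_mul hf ht]

lemma abs_interpDefect_div_le (h : NonflatPair f x y x' y') (hf : ThinProfile f k)
    (ht : t ∈ Set.Icc (0 : ℝ) 1) :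
    |interpDefect f t x y x' y' / f (interp t x x')| ≤
      t * (1 - t) * (16 * k * |y' / f x' - y / f x| ^ 2) := by
  have hs : 0 ≤ t * (1 - t) := mul_nonneg ht.1 (sub_nonneg.2 ht.2)
  have hk := hf.k_pos
  have hm := hf.pos (interp t x x')
  have hD := h.abs_sub_le_mul hf ht
  have hD' := h.abs_sub_le_mul_of_thin hf ht
  rw [abs_div, abs_of_pos hm, div_le_iff₀ hm]
  set δ := |y' / f x' - y / f x|
  calc |interpDefect f t x y x' y'| ≤ t * (1 - t) * (|x' - x| * (k * δ + |x' - x|)) :=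
        hf.abs_interpDefect_le_mul ht h.mem h.mem'
    _ ≤ t * (1 - t) * (21 / 10 * f (interp t x x') * δ * (k * δ + 63 / 10 * (k * δ))) := by
        gcongr
    _ = 1533 / 100 * (t * (1 - t) * (f (interp t x x') * (k * δ ^ 2))) := by ring
    _ ≤ 16 * (t * (1 - t) * (f (interp t x x') * (k * δ ^ 2))) := by gcongr; norm_num
    _ = _ := by ring

lemma abs_mul_interpDefect_le (h : NonflatPair f x y x' y') (hf : ThinProfile f k)
    (ht : t ∈ Set.Icc (0 : ℝ) 1) (hτ : |τ| * |x' - x| ≤ 2) :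
    |τ * interpDefect f t x y x' y'| ≤ t * (1 - t) * (15 * (k * |y' / f x' - y / f x|)) := by
  have hs : 0 ≤ t * (1 - t) := mul_nonneg ht.1 (sub_nonneg.2 ht.2)
  have hk := hf.k_pos
  have hD' := h.abs_sub_le_mul_of_thin hf ht
  rw [abs_mul]
  set δ := |y' / f x' - y / f x|
  calc |τ| * |interpDefect f t x y x' y'|
      ≤ |τ| * (t * (1 - t) * (|x' - x| * (k * δ + |x' - x|))) := by
        gcongr; exact hf.abs_interpDefect_le_mul ht h.mem h.mem'
    _ = t * (1 - t) * (|τ| * |x' - x| * (k * δ + |x' - x|)) := by ring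
    _ ≤ t * (1 - t) * (2 * (k * δ + 63 / 10 * (k * δ))) := by gcongr
    _ = 146 / 10 * (t * (1 - t) * (k * δ)) := by ring
    _ ≤ 15 * (t * (1 - t) * (k * δ)) := by gcongr; norm_num
    _ = _ := by ring

lemma symm (h : NonflatPair f x y x' y') : NonflatPair f x' y' x y :=
  ⟨h.le_one', h.le_one, h.mem', h.mem, by
    rw [abs_sub_comm x, abs_sub_comm y]; exact h.le_two_mul⟩

lemma eighteen_mul_le_half (h : NonflatPair f x y x' y') (hf : ThinProfile f k) :
    18 * (k * |y' / f x' - y / f x|) ≤ 1 / 2 := by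
  obtain ⟨hu₀, hu₁⟩ := hf.div_mem_Icc h.mem
  obtain ⟨hu₀', hu₁'⟩ := hf.div_mem_Icc h.mem'
  have hδ : |y' / f x' - y / f x| ≤ 1 := abs_le.2 ⟨by linarith, by linarith⟩
  have := mul_le_mul hf.lt_thousandth.le hδ (abs_nonneg _) (by norm_num)
  linarith

lemma abs_heightSlope₀_mul_div_sub_one_le (h : NonflatPair f x y x' y') (hf : ThinProfile f k)
    (ht : t ∈ Set.Ioo (0 : ℝ) 1) (hθ : θ ∈ Set.Icc (0 : ℝ) 1) (hτ : |τ| * |x' - x| ≤ 2) :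
    |heightSlope₀ f t θ τ x y x' y' * f x / f (interp t x x') - 1| ≤
      t * (18 * (k * |y' / f x' - y / f x|)) := by
  have ht' := Set.Ioo_subset_Icc_self ht
  have hs := sub_pos.2 ht.2
  have hk := hf.k_pos
  have hx := hf.pos x
  have hm := hf.pos (interp t x x')
  set δ := |y' / f x' - y / f x|
  have hδ : 0 ≤ δ := abs_nonneg _
  set m := f (interp t x x')
  set d := interpDefect f t x y x' y'
  have heq : heightSlope₀ f t θ τ x y x' y' * f x / m - 1 =
      (1 - θ) * ((f x - m) / m) + τ * d / (1 - t) * (f x / m) := by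
    rw [heightSlope₀]; field_simp; ring
  have hratio : |(f x - m) / m| ≤ t * (21 / 10 * (k * δ)) := by
    rw [abs_div, abs_of_pos hm, div_le_iff₀ hm]
    calc |f x - m| ≤ t * (k * |x' - x|) := (hf.abs_sub_interp_le ht' x x').1
      _ ≤ t * (k * (21 / 10 * m * δ)) :=
          mul_le_mul_of_nonneg_left
            (mul_le_mul_of_nonneg_left (h.abs_sub_le_mul hf ht') hk.le) ht'.1
      _ = _ := by ring
  have htail : |τ * d / (1 - t)| ≤ t * (15 * (k * δ)) := by
    rw [abs_div, abs_of_pos hs, div_le_iff₀ hs]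
    exact (h.abs_mul_interpDefect_le hf ht' hτ).trans_eq (by ring)
  have hx_div : |f x / m| ≤ 101 / 100 := by
    rw [abs_of_pos (div_pos hx hm), div_le_iff₀ hm]; exact (h.le_mul_interp hf ht').1
  rw [heq]
  calc _ ≤ |1 - θ| * |(f x - m) / m| + |τ * d / (1 - t)| * |f x / m| := by
        rw [← abs_mul, ← abs_mul]; exact abs_add_le _ _
    _ ≤ 1 * (t * (21 / 10 * (k * δ))) + t * (15 * (k * δ)) * (101 / 100) := by
        have := ht'.1
        gcongr
        exact abs_le.2 ⟨by linarith [hθ.2], by linarith [hθ.1]⟩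
    _ ≤ t * (18 * (k * δ)) := by linarith [mul_nonneg ht'.1 (mul_nonneg hk.le hδ)]

lemma abs_heightSlope₁_mul_div_sub_one_le (h : NonflatPair f x y x' y') (hf : ThinProfile f k)
    (ht : t ∈ Set.Ioo (0 : ℝ) 1) (hθ : θ ∈ Set.Icc (0 : ℝ) 1) (hτ : |τ| * |x' - x| ≤ 2) :
    |heightSlope₁ f t θ τ x y x' y' * f x' / f (interp t x x') - 1| ≤
      (1 - t) * (18 * (k * |y' / f x' - y / f x|)) := by
  rw [heightSlope₁_eq_heightSlope₀, ← interp_one_sub, abs_sub_comm (y' / f x')]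
  refine h.symm.abs_heightSlope₀_mul_div_sub_one_le hf
    ⟨by linarith [ht.2], by linarith [ht.1]⟩ hθ ?_
  rwa [abs_neg, abs_sub_comm]

lemma neg_le_interp_heightSlope_sub_one (h : NonflatPair f x y x' y') (hf : ThinProfile f k)
    (ht : t ∈ Set.Ioo (0 : ℝ) 1) (hθ : θ ∈ Set.Icc (0 : ℝ) 1) (hτ : |τ| * |x' - x| ≤ 2) :
    -(t * (1 - t) * (32 * (k * |y' / f x' - y / f x|) ^ 2)) ≤
      interp t (heightSlope₀ f t θ τ x y x' y' * f x / f (interp t x x') - 1)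
        (heightSlope₁ f t θ τ x y x' y' * f x' / f (interp t x x') - 1) := by
  have ht' := Set.Ioo_subset_Icc_self ht
  have ht₀ := ht.1.ne'
  have ht₁ := (sub_pos.2 ht.2).ne'
  have hk := hf.k_pos
  have hx := hf.pos x
  have hx' := hf.pos x'
  have hm := hf.pos (interp t x x')
  have hconv := hf.interp_le ht' x x'
  have hdefect := h.abs_interpDefect_div_le hf ht'
  set δ := |y' / f x' - y / f x|
  set m := f (interp t x x')
  set d := interpDefect f t x y x' y'
  have heq : interp t (heightSlope₀ f t θ τ x y x' y' * f x / m - 1)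
      (heightSlope₁ f t θ τ x y x' y' * f x' / m - 1) =
      (1 - θ) * ((interp t (f x) (f x') - m) / m) - τ * (f x' - f x) * (d / m) := by
    change interp t ((1 + θ * (m / f x - 1) + τ / (1 - t) * d) * f x / m - 1)
      ((1 + θ * (m / f x' - 1) - τ / t * d) * f x' / m - 1) = _
    unfold interp
    field_simp
    ring
  have hgap : 0 ≤ (1 - θ) * ((interp t (f x) (f x') - m) / m) :=
    mul_nonneg (sub_nonneg.2 hθ.2) (div_nonneg (sub_nonneg.2 hconv) hm.le)
  have hτf : |τ * (f x' - f x)| ≤ 2 * k := by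
    calc |τ * (f x' - f x)| ≤ |τ| * (k * |x' - x|) := by
          rw [abs_mul]; gcongr; exact hf.abs_sub_le x x'
      _ ≤ 2 * k := by nlinarith
  have htail : |τ * (f x' - f x) * (d / m)| ≤ t * (1 - t) * (32 * (k * δ) ^ 2) := by
    rw [abs_mul]
    exact (mul_le_mul hτf hdefect (abs_nonneg _) (by positivity)).trans_eq (by ring)
  linarith [(abs_le.1 htail).2]

lemma mul_sq_le_interp_sq_sub (h : NonflatPair f x y x' y') (hf : ThinProfile f k)
    (ht : t ∈ Set.Icc (0 : ℝ) 1) (hθ : θ ∈ Set.Icc (0 : ℝ) 1) :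
    t * (1 - t) * (95 / 100 * |y' / f x' - y / f x| ^ 2) ≤
      interp t ((y / f x) ^ 2) ((y' / f x') ^ 2) -
        ((interp t y y' + θ * interpDefect f t x y x' y') / f (interp t x x')) ^ 2 := by
  have hs : 0 ≤ t * (1 - t) := mul_nonneg ht.1 (sub_nonneg.2 ht.2)
  have hs₁ : t * (1 - t) ≤ 1 := by nlinarith [ht.1, ht.2]
  have hk := hf.lt_thousandth
  have hm := hf.pos (interp t x x')
  obtain ⟨hw₀, hw₁⟩ := hf.interp_div_mem_Icc ht h.mem h.mem'
  obtain ⟨hu₀, hu₁⟩ := hf.div_mem_Icc h.mem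
  obtain ⟨hu₀', hu₁'⟩ := hf.div_mem_Icc h.mem'
  have hdefect := h.abs_interpDefect_div_le hf ht
  have hheight : (interp t y y' + θ * interpDefect f t x y x' y') / f (interp t x x') =
      interp t (y / f x) (y' / f x') -
        (1 - θ) * (interpDefect f t x y x' y' / f (interp t x x')) := by
    rw [interpDefect, proportionalInterp]; field_simp; ring
  rw [hheight]
  set u := y / f x
  set u' := y' / f x'
  set e := interpDefect f t x y x' y' / f (interp t x x')
  set w := interp t u u' with hw
  have hvar : interp t (u ^ 2) (u' ^ 2) = w ^ 2 + t * (1 - t) * |u' - u| ^ 2 := by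
    rw [hw, sq_abs]; unfold interp; ring
  have hδ : |u' - u| ^ 2 ≤ 1 := by
    rw [sq_abs]; nlinarith
  have he_small : |e| ≤ t * (1 - t) * (16 / 1000 * |u' - u| ^ 2) :=
    hdefect.trans (by gcongr; linarith)
  have he_one : |e| ≤ 16 / 1000 := he_small.trans (by nlinarith [sq_nonneg |u' - u|])
  have hθe : |(1 - θ) * e| ≤ |e| := by
    rw [abs_mul, abs_of_nonneg (sub_nonneg.2 hθ.2)]
    exact mul_le_of_le_one_left (abs_nonneg _) (by linarith [hθ.1])
  obtain ⟨hl, hr⟩ := abs_le.1 hθe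
  nlinarith [abs_nonneg e]

lemma heightSlope_pos (h : NonflatPair f x y x' y') (hf : ThinProfile f k)
    (ht : t ∈ Set.Ioo (0 : ℝ) 1) (hθ : θ ∈ Set.Icc (0 : ℝ) 1) (hτ : |τ| * |x' - x| ≤ 2) :
    0 < heightSlope₀ f t θ τ x y x' y' ∧ 0 < heightSlope₁ f t θ τ x y x' y' := by
  have hc := h.eighteen_mul_le_half hf
  have hx := hf.pos x
  have hx' := hf.pos x'
  have hm := hf.pos (interp t x x')
  have hc₀ : 0 ≤ 18 * (k * |y' / f x' - y / f x|) := by have := hf.k_pos; positivity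
  have h₀ := (abs_le.1 (h.abs_heightSlope₀_mul_div_sub_one_le hf ht hθ hτ)).1
  have h₁ := (abs_le.1 (h.abs_heightSlope₁_mul_div_sub_one_le hf ht hθ hτ)).1
  have hpos₀ : 0 < heightSlope₀ f t θ τ x y x' y' * f x / f (interp t x x') := by
    nlinarith [ht.1, ht.2, hc₀]
  have hpos₁ : 0 < heightSlope₁ f t θ τ x y x' y' * f x' / f (interp t x x') := by
    nlinarith [ht.1, ht.2, hc₀]
  exact ⟨pos_of_mul_pos_left ((div_pos_iff_of_pos_right hm).1 hpos₀) hx.le,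
    pos_of_mul_pos_left ((div_pos_iff_of_pos_right hm).1 hpos₁) hx'.le⟩

lemma weight_rpow_mul_rpow_le (h : NonflatPair f x y x' y') (hf : ThinProfile f k) (hK : 1 ≤ K)
    (ht : t ∈ Set.Ioo (0 : ℝ) 1) (hθ : θ ∈ Set.Icc (0 : ℝ) 1) (hτ : |τ| * |x' - x| ≤ 2) :
    weight f K (x, y) ^ (1 - t) * weight f K (x', y') ^ t ≤
      heightSlope₀ f t θ τ x y x' y' ^ (1 - t) * heightSlope₁ f t θ τ x y x' y' ^ t *
        weight f K (interp t x x', interp t y y' + θ * interpDefect f t x y x' y') := by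
  have ht' := Set.Ioo_subset_Icc_self ht
  have hs : 0 ≤ t * (1 - t) := mul_nonneg ht'.1 (sub_nonneg.2 ht'.2)
  obtain ⟨hpos₀, hpos₁⟩ := h.heightSlope_pos hf ht hθ hτ
  refine hf.weight_rpow_mul_rpow_le hpos₀ hpos₁ ?_
  have hlog := interp_sub_le_interp_log ht' (h.eighteen_mul_le_half hf)
    (h.abs_heightSlope₀_mul_div_sub_one_le hf ht hθ hτ)
    (h.abs_heightSlope₁_mul_div_sub_one_le hf ht hθ hτ)
  simp only [add_sub_cancel] at hlog
  have hlin := h.neg_le_interp_heightSlope_sub_one hf ht hθ hτ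
  have hpot := h.mul_sq_le_interp_sq_sub hf ht' hθ
  set δ := |y' / f x' - y / f x|
  have hkδ : t * (1 - t) * (680 * (k * δ) ^ 2) ≤ t * (1 - t) * (95 / 100 * δ ^ 2) := by
    have hk : k ^ 2 ≤ (1 / 1000) ^ 2 := pow_le_pow_left₀ hf.k_pos.le hf.lt_thousandth.le 2
    refine mul_le_mul_of_nonneg_left ?_ hs
    nlinarith [sq_nonneg δ]
  have hpot_nonneg : 0 ≤ t * (1 - t) * (95 / 100 * δ ^ 2) := by positivity
  have hKpot := le_mul_of_one_le_left (hpot_nonneg.trans hpot) hK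
  dsimp only
  linarith

end NonflatPair

lemma ThinProfile.weight_rpow_mul_rpow_le_of_proportional {f : ℝ → ℝ} {k K t : ℝ}
    (hf : ThinProfile f k) (hK : 0 ≤ K) (ht : t ∈ Set.Icc (0 : ℝ) 1) (x y x' y' : ℝ) :
    weight f K (x, y) ^ (1 - t) * weight f K (x', y') ^ t ≤
      (f (interp t x x') / f x) ^ (1 - t) * (f (interp t x x') / f x') ^ t *
        weight f K (interp t x x', proportionalInterp f t x y x' y') := by
  have hs : 0 ≤ t * (1 - t) := mul_nonneg ht.1 (sub_nonneg.2 ht.2)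
  have hx := hf.pos x
  have hx' := hf.pos x'
  have hm := hf.pos (interp t x x')
  refine hf.weight_rpow_mul_rpow_le (div_pos hm hx) (div_pos hm hx') ?_
  dsimp only
  rw [div_mul_cancel₀ _ hx.ne', div_mul_cancel₀ _ hx'.ne', div_self hm.ne', Real.log_one,
    interp_self, proportionalInterp, mul_div_cancel_left₀ _ hm.ne', zero_add]
  refine mul_nonneg hK (le_of_le_of_eq (mul_nonneg hs (sq_nonneg (y' / f x' - y / f x))) ?_)
  unfold interp
  ring

lemma heightIncrement_eq {f : ℝ → ℝ} {t x x' : ℝ} (ht : t ∈ Set.Ioo (0 : ℝ) 1) (hx : f x ≠ 0)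
    (hx' : f x' ≠ 0) (c τ y₀ y₀' y₁ y₁' : ℝ) :
    interp t y₁ y₁' + (c - τ * (y₁' - y₁)) * interpDefect f t x y₁ x' y₁' -
        (interp t y₀ y₀' + (c - τ * (y₀' - y₀)) * interpDefect f t x y₀ x' y₀') =
      (heightSlope₀ f t (c - τ * (y₀' - y₀)) τ x y₀ x' y₀' +
          heightSlope₀ f t (c - τ * (y₁' - y₁)) τ x y₁ x' y₁') / 2 * (1 - t) * (y₁ - y₀) +
        (heightSlope₁ f t (c - τ * (y₀' - y₀)) τ x y₀ x' y₀' +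
          heightSlope₁ f t (c - τ * (y₁' - y₁)) τ x y₁ x' y₁') / 2 * t * (y₁' - y₀') := by
  have ht₀ := ht.1.ne'
  have ht₁ := (sub_pos.2 ht.2).ne'
  have hdefect : ∀ y y', interpDefect f t x y x' y' =
      (1 - t) * (f (interp t x x') / f x - 1) * y + t * (f (interp t x x') / f x' - 1) * y' := by
    intro y y'
    rw [interpDefect, proportionalInterp]
    set m := f (interp t x x')
    unfold interp
    field_simp
    ring
  simp only [heightSlope₀, heightSlope₁, hdefect]
  set P := f (interp t x x') / f x
  set Q := f (interp t x x') / f x'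
  unfold interp
  field_simp
  ring

/-! ### Covering the support by pieces with weighted slopes -/

/-- On `P` the interpolation has, in the coordinates `e`, slopes `g₀` and `g₁` whose geometric mean
compensates the variation of the weight. -/
structure WeightedSlopes (f : ℝ → ℝ) (K t : ℝ) (e : ℝ × ℝ ≃ᵐ ℝ × ℝ)
    (g₀ g₁ : (ℝ × ℝ) × (ℝ × ℝ) → ℝ) (P : Set ((ℝ × ℝ) × (ℝ × ℝ))) : Prop where
  continuous_coord : Continuous e
  measurePreserving_coord : MeasurePreserving e
  measurable_fst : Measurable g₀
  measurable_snd : Measurable g₁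
  averageSlope :
    AverageSlopeInterpolation t g₀ g₁ (e ∘ Prod.fst) (e ∘ Prod.snd) (e ∘ interpMap f t) P
  pos : ∀ ω ∈ P, 0 < g₀ ω ∧ 0 < g₁ ω
  weight_le : ∀ ω ∈ P, weight f K ω.1 ^ (1 - t) * weight f K ω.2 ^ t ≤
    g₀ ω ^ (1 - t) * g₁ ω ^ t * weight f K (interpMap f t ω)

/-- `S` is a countable union of measurable pieces on which the interpolation has weighted slopes. -/
def HasSlopeCover (f : ℝ → ℝ) (K t : ℝ) (S : Set ((ℝ × ℝ) × (ℝ × ℝ))) : Prop :=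
  ∃ C : Set (Set ((ℝ × ℝ) × (ℝ × ℝ))), C.Countable ∧ ⋃₀ C = S ∧
    ∀ P ∈ C, MeasurableSet P ∧ ∃ e g₀ g₁, WeightedSlopes f K t e g₀ g₁ P

section HasSlopeCover

variable {f : ℝ → ℝ} {K t : ℝ}

lemma WeightedSlopes.hasSlopeCover {e : ℝ × ℝ ≃ᵐ ℝ × ℝ} {g₀ g₁ : (ℝ × ℝ) × (ℝ × ℝ) → ℝ}
    {P : Set ((ℝ × ℝ) × (ℝ × ℝ))} (h : WeightedSlopes f K t e g₀ g₁ P) (hP : MeasurableSet P) :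
    HasSlopeCover f K t P :=
  ⟨{P}, Set.countable_singleton P, Set.sUnion_singleton P, fun _ hQ ↦ hQ ▸ ⟨hP, e, g₀, g₁, h⟩⟩

lemma HasSlopeCover.biUnion {ι : Type*} {I : Set ι} (hI : I.Countable)
    {S : ι → Set ((ℝ × ℝ) × (ℝ × ℝ))} (h : ∀ i ∈ I, HasSlopeCover f K t (S i)) :
    HasSlopeCover f K t (⋃ i ∈ I, S i) := by
  choose! C hC hCS hpiece using h
  refine ⟨⋃ i ∈ I, C i, hI.biUnion hC, ?_, fun P hP ↦ ?_⟩
  · simp only [Set.sUnion_iUnion]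
    exact Set.iUnion₂_congr hCS
  · obtain ⟨i, hi, hPi⟩ := Set.mem_iUnion₂.1 hP
    exact hpiece i hi P hPi

lemma HasSlopeCover.union {S T : Set ((ℝ × ℝ) × (ℝ × ℝ))} (hS : HasSlopeCover f K t S)
    (hT : HasSlopeCover f K t T) : HasSlopeCover f K t (S ∪ T) := by
  have h := HasSlopeCover.biUnion (Set.toFinite {S, T}).countable (S := id) (f := f) (K := K)
    (t := t) (by simpa using ⟨hS, hT⟩)
  simpa using h

lemma hasSlopeCover_inter_of_isOpen {Γ R : Set ((ℝ × ℝ) × (ℝ × ℝ))} (hR : IsOpen R)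
    (h : ∀ Q, IsOpen Q → (∀ ω ∈ Q, ∀ η ∈ Q, (ω.1, η.2) ∈ R) → HasSlopeCover f K t (Γ ∩ Q)) :
    HasSlopeCover f K t (Γ ∩ R) := by
  obtain ⟨C, hC, hCR, hcov⟩ := exists_countable_cover_openRectangles hR
  have hunion : Γ ∩ R = ⋃ q ∈ C, Γ ∩ q.1 ×ˢ q.2 := by
    ext ω
    simp only [Set.mem_inter_iff, Set.mem_iUnion₂]
    exact ⟨fun ⟨hω, hωR⟩ ↦ (hcov ω hωR).imp fun q ⟨hq, hωq⟩ ↦ ⟨hq, hω, hωq⟩,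
      fun ⟨q, hq, hω, hωq⟩ ↦ ⟨hω, (hCR q hq).2.2 hωq⟩⟩
  rw [hunion]
  exact .biUnion hC fun q hq ↦ h _ ((hCR q hq).1.prod (hCR q hq).2.1)
    fun ω hω η hη ↦ (hCR q hq).2.2 ⟨hω.1, hη.2⟩

end HasSlopeCover

lemma le_and_le_or_ge_and_ge {a b a' b' : ℝ} (h : a < b → a' ≤ b') (h' : b < a → b' ≤ a') :
    a ≤ b ∧ a' ≤ b' ∨ b ≤ a ∧ b' ≤ a' := by
  rcases lt_trichotomy a b with hab | rfl | hab
  · exact .inl ⟨hab.le, h hab⟩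
  · simpa using le_total a' b'
  · exact .inr ⟨hab.le, h' hab⟩

lemma le_of_sq_add_sq_le {a b a' b' : ℝ}
    (h : (a' - a) ^ 2 + (b' - b) ^ 2 ≤ (b' - a) ^ 2 + (a' - b) ^ 2) (hab : a < b) : a' ≤ b' := by
  by_contra! hlt
  nlinarith [mul_pos (sub_pos.2 hab) (sub_pos.2 hlt)]

lemma distSq_eq_of_flat {p q : ℝ × ℝ} (h : |q.2 - p.2| ≤ |q.1 - p.1|) :
    (distSq (p, q) : ℝ) = (q.1 - p.1) ^ 2 := by
  rw [coe_distSq, max_eq_left h, sq_abs]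

lemma distSq_eq_of_steep {p q : ℝ × ℝ} (h : |q.1 - p.1| ≤ |q.2 - p.2|) :
    (distSq (p, q) : ℝ) = (q.2 - p.2) ^ 2 := by
  rw [coe_distSq, max_eq_right h, sq_abs]

namespace NoncrossingSupport

variable {f : ℝ → ℝ} {t : ℝ} {Γ : Set ((ℝ × ℝ) × (ℝ × ℝ))} {ω η : (ℝ × ℝ) × (ℝ × ℝ)}

lemma le_of_distSq_eq (hΓ : NoncrossingSupport f t Γ) (hω : ω ∈ Γ) (hη : η ∈ Γ)
    {g : ℝ × ℝ → ℝ} (hg : ∀ p ∈ ({ω.1, η.1} : Set (ℝ × ℝ)), ∀ q ∈ ({ω.2, η.2} : Set (ℝ × ℝ)),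
      (distSq (p, q) : ℝ) = (g q - g p) ^ 2)
    (hlt : g ω.1 < g η.1) : g ω.2 ≤ g η.2 := by
  have hle := NNReal.coe_le_coe.2 (hΓ.selfSum_le ω hω η hη)
  simp only [selfSum, crossSum, NNReal.coe_add] at hle
  rw [hg ω.1 (by simp) ω.2 (by simp), hg η.1 (by simp) η.2 (by simp),
    hg ω.1 (by simp) η.2 (by simp), hg η.1 (by simp) ω.2 (by simp)] at hle
  exact le_of_sq_add_sq_le hle hlt

end NoncrossingSupport

/-- The area-preserving coordinates in which the lines of slope `σ` are vertical. -/
noncomputable def shear (σ : ℝ) : ℝ × ℝ ≃ᵐ ℝ × ℝ where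
  toFun p := (p.2 - σ * p.1, p.1)
  invFun q := (q.2, q.1 + σ * q.2)
  left_inv p := by ext <;> simp
  right_inv q := by ext <;> simp
  measurable_toFun := by
    change Measurable fun p : ℝ × ℝ ↦ (p.2 - σ * p.1, p.1)
    fun_prop
  measurable_invFun := by
    change Measurable fun q : ℝ × ℝ ↦ (q.2, q.1 + σ * q.2)
    fun_prop

lemma continuous_shear (σ : ℝ) : Continuous (shear σ) := by
  change Continuous fun p : ℝ × ℝ ↦ (p.2 - σ * p.1, p.1)
  fun_prop

lemma measurePreserving_shear (σ : ℝ) : MeasurePreserving (shear σ) := by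
  have hskew : MeasurePreserving (fun p : ℝ × ℝ ↦ (p.1, p.2 - σ * p.1)) :=
    (MeasurePreserving.id (volume : Measure ℝ)).skew_product (μc := volume) (μd := volume)
      (g := fun a b ↦ b - σ * a) (by unfold Function.uncurry; fun_prop)
      (ae_of_all _ fun a ↦ (measurePreserving_sub_right volume (σ * a)).map_eq)
  exact Measure.measurePreserving_swap.comp hskew

/-- The slope `heightSlope₀` of the height of `interpMap` at pairs with `|Δy| < |Δx|`, where
`bend Δx Δy` is locally of the form `c - s / |Δx| * Δy`. -/
noncomputable def flatSlope₀ (f : ℝ → ℝ) (t s : ℝ) (ω : (ℝ × ℝ) × (ℝ × ℝ)) : ℝ :=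
  heightSlope₀ f t (bend (ω.2.1 - ω.1.1) (ω.2.2 - ω.1.2)) (s / |ω.2.1 - ω.1.1|)
    ω.1.1 ω.1.2 ω.2.1 ω.2.2

/-- The slope `heightSlope₁` corresponding to `flatSlope₀`. -/
noncomputable def flatSlope₁ (f : ℝ → ℝ) (t s : ℝ) (ω : (ℝ × ℝ) × (ℝ × ℝ)) : ℝ :=
  heightSlope₁ f t (bend (ω.2.1 - ω.1.1) (ω.2.2 - ω.1.2)) (s / |ω.2.1 - ω.1.1|)
    ω.1.1 ω.1.2 ω.2.1 ω.2.2

lemma nonflatPair_of_mem {f : ℝ → ℝ} {ω : (ℝ × ℝ) × (ℝ × ℝ)}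
    (hω : ω ∈ subgraphRegion f ×ˢ subgraphRegion f)
    (h : |ω.2.1 - ω.1.1| ≤ 2 * |ω.2.2 - ω.1.2|) : NonflatPair f ω.1.1 ω.1.2 ω.2.1 ω.2.2 :=
  ⟨hω.1.1.2, hω.2.1.2, hω.1.2, hω.2.2, h⟩

namespace ThinProfile

variable {f : ℝ → ℝ} {k K t : ℝ} {Γ P : Set ((ℝ × ℝ) × (ℝ × ℝ))}

lemma weightedSlopes_of_steep (hf : ThinProfile f k) (hK : 1 ≤ K) (ht : t ∈ Set.Ioo (0 : ℝ) 1)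
    (hP : P ⊆ subgraphRegion f ×ˢ subgraphRegion f)
    (hsteep : ∀ ω ∈ P, |ω.2.1 - ω.1.1| ≤ |ω.2.2 - ω.1.2|) {e : ℝ × ℝ ≃ᵐ ℝ × ℝ}
    (he : Continuous e) (he_vol : MeasurePreserving e)
    (he_lin : ∀ p q : ℝ × ℝ, e ((1 - t) • p + t • q) = (1 - t) • e p + t • e q)
    (hfst : ∀ ω ∈ P, ∀ η ∈ P, (e ω.1).1 < (e η.1).1 → (e ω.2).1 ≤ (e η.2).1)
    (hsnd : ∀ ω ∈ P, ∀ η ∈ P, (e ω.1).1 = (e η.1).1 → (e ω.2).1 = (e η.2).1 →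
      (e ω.1).2 < (e η.1).2 → (e ω.2).2 ≤ (e η.2).2) :
    WeightedSlopes f K t e (fun _ ↦ 1) (fun _ ↦ 1) P := by
  have hmap : ∀ ω ∈ P, interpMap f t ω = (1 - t) • ω.1 + t • ω.2 := fun ω hω ↦
    Prod.ext rfl (hf.heightInterp_eq_interp_of_steep (hsteep ω hω))
  have he_map : ∀ ω ∈ P, (e ∘ interpMap f t) ω = (1 - t) • e ω.1 + t • e ω.2 := fun ω hω ↦ by
    rw [Function.comp_apply, hmap ω hω, he_lin]
  refine ⟨he, he_vol, measurable_const, measurable_const,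
    ⟨fun ω hω ↦ ?_, hfst, fun ω hω η hη h₀ h₁ ↦ ?_, fun ω hω η hη _ _ ↦ ?_⟩,
    fun _ _ ↦ ⟨one_pos, one_pos⟩, fun ω hω ↦ ?_⟩
  · rw [he_map ω hω]; rfl
  · exact le_and_le_or_ge_and_ge (hsnd ω hω η hη h₀ h₁) (hsnd η hη ω hω h₀.symm h₁.symm)
  · rw [he_map ω hω, he_map η hη]
    simp only [Prod.snd_add, Prod.smul_snd, smul_eq_mul, Function.comp_apply]
    ring
  · have hnonflat := nonflatPair_of_mem (hP hω)
      ((hsteep ω hω).trans (le_mul_of_one_le_left (abs_nonneg _) one_le_two))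
    have hweight := hnonflat.weight_rpow_mul_rpow_le hf hK ht (θ := 0) (τ := 0) (by simp) (by simp)
    simp only [heightSlope₀, heightSlope₁, zero_mul, zero_div, add_zero, sub_zero] at hweight
    rw [hmap ω hω]
    exact hweight

lemma hasSlopeCover_steep (hf : ThinProfile f k) (hK : 1 ≤ K) (ht : t ∈ Set.Ioo (0 : ℝ) 1)
    (hΓ : NoncrossingSupport f t Γ) :
    HasSlopeCover f K t (Γ ∩ {ω | |ω.2.1 - ω.1.1| < |ω.2.2 - ω.1.2|}) := by
  refine hasSlopeCover_inter_of_isOpen (isOpen_lt (by fun_prop) (by fun_prop)) fun Q hQ hsteep ↦ ?_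
  simp only [Set.mem_ofPred_eq] at hsteep
  refine WeightedSlopes.hasSlopeCover (hf.weightedSlopes_of_steep hK ht
    (Set.inter_subset_left.trans hΓ.subset) (fun ω hω ↦ (hsteep ω hω.2 ω hω.2).le)
    (e := MeasurableEquiv.prodComm) continuous_swap Measure.measurePreserving_swap
    (fun _ _ ↦ rfl) (fun ω hω η hη ↦ hΓ.le_of_distSq_eq hω.1 hη.1 (g := Prod.snd) ?_)
    fun ω hω η hη h₀ h₁ ↦ hΓ.steep_mono ω hω.1 η hη.1 h₀ h₁ (hsteep ω hω.2 ω hω.2)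
      (hsteep η hη.2 η hη.2)) (hΓ.measurableSet.inter hQ.measurableSet)
  rintro p (rfl | rfl) q (rfl | rfl)
  exacts [distSq_eq_of_steep (hsteep ω hω.2 ω hω.2).le,
    distSq_eq_of_steep (hsteep ω hω.2 η hη.2).le, distSq_eq_of_steep (hsteep η hη.2 ω hω.2).le,
    distSq_eq_of_steep (hsteep η hη.2 η hη.2).le]

lemma hasSlopeCover_diagonal (hf : ThinProfile f k) (hK : 1 ≤ K) (ht : t ∈ Set.Ioo (0 : ℝ) 1)
    (hΓ : NoncrossingSupport f t Γ) {σ : ℝ} (hσ : |σ| = 1) :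
    HasSlopeCover f K t (Γ ∩ {ω | ω.2.2 - ω.1.2 = σ * (ω.2.1 - ω.1.1)}) := by
  have hsteep : ∀ p q : ℝ × ℝ, q.2 - p.2 = σ * (q.1 - p.1) → |q.2 - p.2| = |q.1 - p.1| :=
    fun p q h ↦ by rw [h, abs_mul, hσ, one_mul]
  refine WeightedSlopes.hasSlopeCover (hf.weightedSlopes_of_steep hK ht
    (Set.inter_subset_left.trans hΓ.subset) (fun ω hω ↦ (hsteep _ _ hω.2).ge)
    (continuous_shear σ) (measurePreserving_shear σ) (fun p q ↦ Prod.ext ?_ rfl)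
    (fun ω hω η hη hlt ↦ ?_)
    fun ω hω η hη h₀ h₁ ↦ hΓ.le_of_distSq_eq hω.1 hη.1 (g := Prod.fst) ?_)
    (hΓ.measurableSet.inter (measurableSet_eq_fun (by fun_prop) (by fun_prop)))
  · change ((1 - t) * p.2 + t * q.2) - σ * ((1 - t) * p.1 + t * q.1) =
      (1 - t) * (p.2 - σ * p.1) + t * (q.2 - σ * q.1)
    ring
  · change ω.1.2 - σ * ω.1.1 < η.1.2 - σ * η.1.1 at hlt
    change ω.2.2 - σ * ω.2.1 ≤ η.2.2 - σ * η.2.1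
    have hω_line : ω.2.2 - ω.1.2 = σ * (ω.2.1 - ω.1.1) := hω.2
    have hη_line : η.2.2 - η.1.2 = σ * (η.2.1 - η.1.1) := hη.2
    linarith
  · change ω.1.2 - σ * ω.1.1 = η.1.2 - σ * η.1.1 at h₀
    change ω.2.2 - σ * ω.2.1 = η.2.2 - σ * η.2.1 at h₁
    have hω_line : ω.2.2 - ω.1.2 = σ * (ω.2.1 - ω.1.1) := hω.2
    rintro p (rfl | rfl) q (rfl | rfl) <;>
      exact distSq_eq_of_flat (hsteep _ _ (by linarith)).le

lemma measurable_flatSlope₀ (hf : ThinProfile f k) (t s : ℝ) : Measurable (flatSlope₀ f t s) := by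
  have hf_meas := hf.continuous.measurable
  unfold flatSlope₀ heightSlope₀ interpDefect proportionalInterp interp bend
  fun_prop

lemma measurable_flatSlope₁ (hf : ThinProfile f k) (t s : ℝ) : Measurable (flatSlope₁ f t s) := by
  have hf_meas := hf.continuous.measurable
  unfold flatSlope₁ heightSlope₁ interpDefect proportionalInterp interp bend
  fun_prop

lemma averageSlopeInterpolation_of_flat (hf : ThinProfile f k) (ht : t ∈ Set.Ioo (0 : ℝ) 1)
    (hΓ : NoncrossingSupport f t Γ) (hP : P ⊆ Γ) {c s : ℝ}
    (hflat : ∀ ω ∈ P, ∀ η ∈ P, |η.2.2 - ω.1.2| < |η.2.1 - ω.1.1|)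
    (hbend : ∀ ω ∈ P, bend (ω.2.1 - ω.1.1) (ω.2.2 - ω.1.2) =
      c - s / |ω.2.1 - ω.1.1| * (ω.2.2 - ω.1.2)) :
    AverageSlopeInterpolation t (flatSlope₀ f t s) (flatSlope₁ f t s) Prod.fst Prod.snd
      (interpMap f t) P := by
  refine ⟨fun _ _ ↦ rfl, fun ω hω η hη ↦ hΓ.le_of_distSq_eq (hP hω) (hP hη) (g := Prod.fst) ?_,
    fun ω hω η hη h₀ h₁ ↦ le_and_le_or_ge_and_ge
      (hΓ.flat_mono ω (hP hω) η (hP hη) h₀ h₁ (hflat ω hω ω hω) (hflat η hη η hη))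
      (hΓ.flat_mono η (hP hη) ω (hP hω) h₀.symm h₁.symm (hflat η hη η hη) (hflat ω hω ω hω)),
    fun ω hω η hη h₀ h₁ ↦ ?_⟩
  · rintro p (rfl | rfl) q (rfl | rfl)
    exacts [distSq_eq_of_flat (hflat ω hω ω hω).le, distSq_eq_of_flat (hflat ω hω η hη).le,
      distSq_eq_of_flat (hflat η hη ω hω).le, distSq_eq_of_flat (hflat η hη η hη).le]
  · have hincrement := heightIncrement_eq ht (hf.pos ω.1.1).ne' (hf.pos ω.2.1).ne' c
      (s / |ω.2.1 - ω.1.1|) ω.1.2 ω.2.2 η.1.2 η.2.2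
    have hbend_η := hbend η hη
    simp only [interpMap, heightInterp, flatSlope₀, flatSlope₁, hbend ω hω]
    rw [← h₀, ← h₁] at hbend_η ⊢
    rw [hbend_η]
    exact hincrement

lemma flatSlope_pos_and_weight_le (hf : ThinProfile f k) (hK : 1 ≤ K)
    (ht : t ∈ Set.Ioo (0 : ℝ) 1) {s : ℝ} {ω : (ℝ × ℝ) × (ℝ × ℝ)}
    (hω : ω ∈ subgraphRegion f ×ˢ subgraphRegion f) (hne : ω.2.1 - ω.1.1 ≠ 0)
    (hs : bend (ω.2.1 - ω.1.1) (ω.2.2 - ω.1.2) = 1 ∧ s = 0 ∨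
      |s| ≤ 2 ∧ |ω.2.1 - ω.1.1| ≤ 2 * |ω.2.2 - ω.1.2|) :
    (0 < flatSlope₀ f t s ω ∧ 0 < flatSlope₁ f t s ω) ∧
      weight f K ω.1 ^ (1 - t) * weight f K ω.2 ^ t ≤
        flatSlope₀ f t s ω ^ (1 - t) * flatSlope₁ f t s ω ^ t * weight f K (interpMap f t ω) := by
  rcases hs with ⟨hbend, rfl⟩ | ⟨hs, hnonflat⟩
  · have hm := hf.pos (interp t ω.1.1 ω.2.1)
    have hslope₀ : flatSlope₀ f t 0 ω = f (interp t ω.1.1 ω.2.1) / f ω.1.1 := by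
      simp [flatSlope₀, heightSlope₀, hbend]
    have hslope₁ : flatSlope₁ f t 0 ω = f (interp t ω.1.1 ω.2.1) / f ω.2.1 := by
      simp [flatSlope₁, heightSlope₁, hbend]
    have hmap : interpMap f t ω = (interp t ω.1.1 ω.2.1,
        proportionalInterp f t ω.1.1 ω.1.2 ω.2.1 ω.2.2) := by
      simp [interpMap, heightInterp, interpDefect, hbend]
    rw [hslope₀, hslope₁, hmap]
    exact ⟨⟨div_pos hm (hf.pos _), div_pos hm (hf.pos _)⟩,
      hf.weight_rpow_mul_rpow_le_of_proportional (zero_le_one.trans hK)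
        (Set.Ioo_subset_Icc_self ht) _ _ _ _⟩
  · have hpair := nonflatPair_of_mem hω hnonflat
    have hτ : |(s / |ω.2.1 - ω.1.1|)| * |ω.2.1 - ω.1.1| ≤ 2 := by
      rwa [abs_div, abs_abs, div_mul_cancel₀ _ (abs_ne_zero.2 hne)]
    have hθ : bend (ω.2.1 - ω.1.1) (ω.2.2 - ω.1.2) ∈ Set.Icc 0 1 :=
      ⟨bend_nonneg _ _, bend_le_one _ _⟩
    exact ⟨hpair.heightSlope_pos hf ht hθ hτ, hpair.weight_rpow_mul_rpow_le hf hK ht hθ hτ⟩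

lemma weightedSlopes_of_flat (hf : ThinProfile f k) (hK : 1 ≤ K) (ht : t ∈ Set.Ioo (0 : ℝ) 1)
    (hΓ : NoncrossingSupport f t Γ) (hP : P ⊆ Γ) {c s : ℝ}
    (hflat : ∀ ω ∈ P, ∀ η ∈ P, |η.2.2 - ω.1.2| < |η.2.1 - ω.1.1|)
    (hbend : ∀ ω ∈ P, bend (ω.2.1 - ω.1.1) (ω.2.2 - ω.1.2) =
      c - s / |ω.2.1 - ω.1.1| * (ω.2.2 - ω.1.2))
    (hs : ∀ ω ∈ P, bend (ω.2.1 - ω.1.1) (ω.2.2 - ω.1.2) = 1 ∧ s = 0 ∨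
      |s| ≤ 2 ∧ |ω.2.1 - ω.1.1| ≤ 2 * |ω.2.2 - ω.1.2|) :
    WeightedSlopes f K t (.refl _) (flatSlope₀ f t s) (flatSlope₁ f t s) P := by
  have hslope : ∀ ω ∈ P, _ := fun ω hω ↦ hf.flatSlope_pos_and_weight_le hK ht (hΓ.subset (hP hω))
    (abs_pos.1 ((abs_nonneg _).trans_lt (hflat ω hω ω hω))) (hs ω hω)
  exact ⟨continuous_id, MeasurePreserving.id _, hf.measurable_flatSlope₀ t s,
    hf.measurable_flatSlope₁ t s, hf.averageSlopeInterpolation_of_flat ht hΓ hP hflat hbend,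
    fun ω hω ↦ (hslope ω hω).1, fun ω hω ↦ (hslope ω hω).2⟩

lemma hasSlopeCover_of_two_mul_le (hf : ThinProfile f k) (hK : 1 ≤ K)
    (ht : t ∈ Set.Ioo (0 : ℝ) 1) (hΓ : NoncrossingSupport f t Γ) (hP : P ⊆ Γ)
    (hP_meas : MeasurableSet P) (hflat : ∀ ω ∈ P, ∀ η ∈ P, |η.2.2 - ω.1.2| < |η.2.1 - ω.1.1|)
    (hle : ∀ ω ∈ P, 2 * |ω.2.2 - ω.1.2| ≤ |ω.2.1 - ω.1.1|) : HasSlopeCover f K t P :=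
  (hf.weightedSlopes_of_flat hK ht hΓ hP hflat (c := 1) (s := 0)
    (fun ω hω ↦ by rw [bend_eq_one (hle ω hω), zero_div, zero_mul, sub_zero])
    fun ω hω ↦ .inl ⟨bend_eq_one (hle ω hω), rfl⟩).hasSlopeCover hP_meas

lemma hasSlopeCover_of_le_two_mul (hf : ThinProfile f k) (hK : 1 ≤ K)
    (ht : t ∈ Set.Ioo (0 : ℝ) 1) (hΓ : NoncrossingSupport f t Γ) (hP : P ⊆ Γ)
    (hP_meas : MeasurableSet P) (hflat : ∀ ω ∈ P, ∀ η ∈ P, |η.2.2 - ω.1.2| < |η.2.1 - ω.1.1|)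
    (hle : ∀ ω ∈ P, |ω.2.1 - ω.1.1| ≤ 2 * |ω.2.2 - ω.1.2|) {s : ℝ} (hs : |s| = 2)
    (hsign : ∀ ω ∈ P, s * (ω.2.2 - ω.1.2) = 2 * |ω.2.2 - ω.1.2|) : HasSlopeCover f K t P := by
  refine (hf.weightedSlopes_of_flat hK ht hΓ hP hflat (c := 2) (s := s) (fun ω hω ↦ ?_)
    fun ω hω ↦ .inr ⟨hs.le, hle ω hω⟩).hasSlopeCover hP_meas
  have hlt := hflat ω hω ω hω
  rw [bend_eq_of_le_of_le (abs_pos.1 ((abs_nonneg _).trans_lt hlt)) (hle ω hω) hlt.le,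
    div_mul_eq_mul_div, hsign ω hω, mul_div_assoc]

lemma hasSlopeCover_flat (hf : ThinProfile f k) (hK : 1 ≤ K) (ht : t ∈ Set.Ioo (0 : ℝ) 1)
    (hΓ : NoncrossingSupport f t Γ) :
    HasSlopeCover f K t (Γ ∩ {ω | |ω.2.2 - ω.1.2| < |ω.2.1 - ω.1.1|}) := by
  refine hasSlopeCover_inter_of_isOpen (isOpen_lt (by fun_prop) (by fun_prop)) fun Q hQ hflat ↦ ?_
  have hmeas := hΓ.measurableSet.inter hQ.measurableSet
  let A : Set ((ℝ × ℝ) × (ℝ × ℝ)) := {ω | 2 * |ω.2.2 - ω.1.2| ≤ |ω.2.1 - ω.1.1|}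
  let B (s : ℝ) : Set ((ℝ × ℝ) × (ℝ × ℝ)) := {ω | |ω.2.1 - ω.1.1| ≤ 2 * |ω.2.2 - ω.1.2|} ∩
    {ω | s * (ω.2.2 - ω.1.2) = 2 * |ω.2.2 - ω.1.2|}
  have hA : HasSlopeCover f K t (Γ ∩ Q ∩ A) :=
    hf.hasSlopeCover_of_two_mul_le hK ht hΓ (fun ω hω ↦ hω.1.1)
      (hmeas.inter (measurableSet_le (by fun_prop) (by fun_prop)))
      (fun ω hω η hη ↦ hflat ω hω.1.2 η hη.1.2) fun ω hω ↦ hω.2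
  have hB : ∀ s : ℝ, |s| = 2 → HasSlopeCover f K t (Γ ∩ Q ∩ B s) := fun s hs ↦
    hf.hasSlopeCover_of_le_two_mul hK ht hΓ (fun ω hω ↦ hω.1.1)
      (hmeas.inter ((measurableSet_le (by fun_prop) (by fun_prop)).inter
        (measurableSet_eq_fun (by fun_prop) (by fun_prop))))
      (fun ω hω η hη ↦ hflat ω hω.1.2 η hη.1.2) (fun ω hω ↦ hω.2.1) hs fun ω hω ↦ hω.2.2
  convert hA.union ((hB 2 (by norm_num)).union (hB (-2) (by norm_num))) using 1
  rw [← Set.inter_union_distrib_left, ← Set.inter_union_distrib_left, eq_comm,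
    Set.inter_eq_left]
  intro ω _
  rcases le_total (2 * |ω.2.2 - ω.1.2|) |ω.2.1 - ω.1.1| with hle | hle
  · exact .inl hle
  · rcases le_total 0 (ω.2.2 - ω.1.2) with hsign | hsign
    · exact .inr (.inl ⟨hle, congrArg (2 * ·) (abs_of_nonneg hsign).symm⟩)
    · exact .inr (.inr ⟨hle, by rw [Set.mem_ofPred_eq, abs_of_nonpos hsign]; ring⟩)

lemma hasSlopeCover (hf : ThinProfile f k) (hK : 1 ≤ K) (ht : t ∈ Set.Ioo (0 : ℝ) 1)
    (hΓ : NoncrossingSupport f t Γ) : HasSlopeCover f K t Γ := by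
  convert ((hf.hasSlopeCover_flat hK ht hΓ).union (hf.hasSlopeCover_steep hK ht hΓ)).union
    ((hf.hasSlopeCover_diagonal hK ht hΓ (σ := 1) (by norm_num)).union
      (hf.hasSlopeCover_diagonal hK ht hΓ (σ := -1) (by norm_num))) using 1
  simp only [← Set.inter_union_distrib_left]
  rw [eq_comm, Set.inter_eq_left]
  intro ω _
  rcases lt_trichotomy |ω.2.2 - ω.1.2| |ω.2.1 - ω.1.1| with hlt | heq | hlt
  · exact .inl (.inl hlt)
  · rcases abs_eq_abs.1 heq with h | h
    · exact .inr (.inl (by simpa using h))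
    · exact .inr (.inr (by simpa using h))
  · exact .inl (.inr hlt)

end ThinProfile

/-! ### The density of the interpolated measure -/

/-- The bound for the Lebesgue density of the interpolated measure at `interpMap f t ω`, given the
densities `v₀` and `v₁` of the endpoints: it expresses log-convexity of the density relative to
the weight along the interpolation. -/
noncomputable def densityBound (f : ℝ → ℝ) (K t : ℝ) (v₀ v₁ : ℝ × ℝ → ℝ)
    (ω : (ℝ × ℝ) × (ℝ × ℝ)) : ℝ :=
  geomDensity t (v₀ ω.1) (v₁ ω.2) (weight f K ω.1) (weight f K ω.2) * weight f K (interpMap f t ω)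

namespace ThinProfile

variable {f : ℝ → ℝ} {k K t : ℝ} {v₀ v₁ : ℝ × ℝ → ℝ}

lemma measurable_densityBound (hf : ThinProfile f k) (K t : ℝ) (hv₀ : Measurable v₀)
    (hv₁ : Measurable v₁) : Measurable (densityBound f K t v₀ v₁) := by
  have hweight := (hf.continuous_weight K).measurable
  have hmap := hf.measurable_interpMap t
  unfold densityBound geomDensity
  fun_prop

lemma densityBound_pos (hf : ThinProfile f k) (K t : ℝ) {ω : (ℝ × ℝ) × (ℝ × ℝ)} (h₀ : 0 < v₀ ω.1)
    (h₁ : 0 < v₁ ω.2) : 0 < densityBound f K t v₀ v₁ ω := by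
  have hw₀ := hf.weight_pos K ω.1
  have hw₁ := hf.weight_pos K ω.2
  have hw := hf.weight_pos K (interpMap f t ω)
  unfold densityBound geomDensity
  positivity

lemma log_densityBound (hf : ThinProfile f k) (K t : ℝ) {ω : (ℝ × ℝ) × (ℝ × ℝ)} (h₀ : 0 < v₀ ω.1)
    (h₁ : 0 < v₁ ω.2) :
    Real.log (densityBound f K t v₀ v₁ ω) - Real.log (weight f K (interpMap f t ω)) =
      (1 - t) * (Real.log (v₀ ω.1) - Real.log (weight f K ω.1)) +
        t * (Real.log (v₁ ω.2) - Real.log (weight f K ω.2)) := by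
  have hw₀ := hf.weight_pos K ω.1
  have hw₁ := hf.weight_pos K ω.2
  have hw := hf.weight_pos K (interpMap f t ω)
  rw [densityBound, geomDensity, Real.log_mul (by positivity) hw.ne',
    Real.log_div (by positivity) (by positivity), Real.log_mul (by positivity) (by positivity),
    Real.log_mul (by positivity) (by positivity), Real.log_rpow h₀, Real.log_rpow h₁,
    Real.log_rpow hw₀, Real.log_rpow hw₁]
  ring

lemma imageDensityLE_densityBound (hf : ThinProfile f k) (ht : t ∈ Set.Ioo (0 : ℝ) 1)
    {π : Measure ((ℝ × ℝ) × (ℝ × ℝ))} [IsFiniteMeasure π] (hv₀ : Measurable v₀)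
    (hv₁ : Measurable v₁) (hπ₀ : MarginalDensityLE π Prod.fst (v₀ ∘ Prod.fst))
    (hπ₁ : MarginalDensityLE π Prod.snd (v₁ ∘ Prod.snd)) {P : Set ((ℝ × ℝ) × (ℝ × ℝ))}
    (hinj : P.InjOn (interpMap f t)) {e : ℝ × ℝ ≃ᵐ ℝ × ℝ} {g₀ g₁ : (ℝ × ℝ) × (ℝ × ℝ) → ℝ}
    (h : WeightedSlopes f K t e g₀ g₁ P) :
    ImageDensityLE π volume (interpMap f t)
      (fun ω ↦ ENNReal.ofReal (densityBound f K t v₀ v₁ ω))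
      (P ∩ {ω | 0 < v₀ ω.1 ∧ 0 < v₁ ω.2}) := by
  have hslopes := (h.averageSlope.mono (Set.inter_subset_left
    (t := {ω | 0 < v₀ ω.1 ∧ 0 < v₁ ω.2}))).imageDensityLE ht.1 ht.2
    (h.continuous_coord.comp continuous_fst) (h.continuous_coord.comp continuous_snd)
    (e.measurable.comp (hf.measurable_interpMap t))
    ((e.injective.comp_injOn hinj).mono Set.inter_subset_left) (hv₀.comp measurable_fst)
    (hv₁.comp measurable_snd) h.measurable_fst h.measurable_snd
    (fun ω hω ↦ ⟨hω.2.1, hω.2.2, h.pos ω hω.1⟩)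
    (hπ₀.measurePreserving_comp h.measurePreserving_coord)
    (hπ₁.measurePreserving_comp h.measurePreserving_coord)
  refine (hslopes.of_measurePreserving_comp h.measurePreserving_coord).mono
    fun ω ⟨hω, h₀, h₁⟩ ↦ ENNReal.ofReal_le_ofReal ?_
  obtain ⟨hg₀, hg₁⟩ := h.pos ω hω
  have hw₀ := hf.weight_pos K ω.1
  have hw₁ := hf.weight_pos K ω.2
  rw [densityBound, geomDensity, geomDensity, div_mul_eq_mul_div, Function.comp_apply,
    Function.comp_apply, div_le_div_iff₀ (by positivity) (by positivity)]
  calc v₀ ω.1 ^ (1 - t) * v₁ ω.2 ^ t * (weight f K ω.1 ^ (1 - t) * weight f K ω.2 ^ t)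
      ≤ v₀ ω.1 ^ (1 - t) * v₁ ω.2 ^ t *
          (g₀ ω ^ (1 - t) * g₁ ω ^ t * weight f K (interpMap f t ω)) :=
        mul_le_mul_of_nonneg_left (h.weight_le ω hω) (by positivity)
    _ = _ := by ring

end ThinProfile

lemma ae_toReal_rnDeriv_pos {α : Type*} [MeasurableSpace α] {μ ν : Measure α} [SigmaFinite μ]
    [SigmaFinite ν] (hμ : μ ≪ ν) : ∀ᵐ z ∂μ, 0 < (μ.rnDeriv ν z).toReal := by
  filter_upwards [Measure.rnDeriv_pos hμ, hμ.ae_le (Measure.rnDeriv_lt_top μ ν)]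
    with z hpos hfin using ENNReal.toReal_pos hpos.ne' hfin.ne

/-- The density of `μ` with respect to the Lebesgue measure of the plane, as a real number. -/
noncomputable def lebDensity (μ : Measure (ℝ × ℝ)) (z : ℝ × ℝ) : ℝ := (μ.rnDeriv volume z).toReal

section LebDensity

variable {μ : Measure (ℝ × ℝ)}

lemma measurable_lebDensity (μ : Measure (ℝ × ℝ)) : Measurable (lebDensity μ) :=
  (Measure.measurable_rnDeriv _ _).ennreal_toReal

lemma withDensity_ofReal_lebDensity [SigmaFinite μ] (hμ : μ ≪ volume) :
    volume.withDensity (fun z ↦ ENNReal.ofReal (lebDensity μ z)) = μ := by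
  conv_rhs => rw [← Measure.withDensity_rnDeriv_eq μ volume hμ]
  refine withDensity_congr_ae ?_
  filter_upwards [Measure.rnDeriv_lt_top μ volume] with z hz using ENNReal.ofReal_toReal hz.ne

lemma ae_lebDensity_pos [SigmaFinite μ] (hμ : μ ≪ volume) : ∀ᵐ z ∂μ, 0 < lebDensity μ z :=
  ae_toReal_rnDeriv_pos hμ

end LebDensity

lemma ThinProfile.map_interpMap_absolutelyContinuous_and_rnDeriv_le {f : ℝ → ℝ} {k K t : ℝ}
    (hf : ThinProfile f k) (hK : 1 ≤ K) (ht : t ∈ Set.Ioo (0 : ℝ) 1) {μ ν : Measure (ℝ × ℝ)}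
    [IsProbabilityMeasure μ] [IsProbabilityMeasure ν] (hμ : μ ≪ volume) (hν : ν ≪ volume)
    {π : Measure ((ℝ × ℝ) × (ℝ × ℝ))} (hπ : LexOptimal distSq euclidSq μ ν π)
    (hmem : ∀ᵐ ω ∂π, ω ∈ subgraphRegion f ×ˢ subgraphRegion f) :
    π.map (interpMap f t) ≪ volume ∧
      ∀ᵐ ω ∂π, (π.map (interpMap f t)).rnDeriv volume (interpMap f t ω) ≤
        ENNReal.ofReal (densityBound f K t (lebDensity μ) (lebDensity ν) ω) := by
  have := hπ.isCoupling.isProbabilityMeasure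
  have hv₀ := measurable_lebDensity μ
  have hv₁ := measurable_lebDensity ν
  have hmap := hf.measurable_interpMap t
  obtain ⟨Γ, hΓ, hπΓ⟩ := hf.exists_noncrossingSupport ht hπ hmem
  obtain ⟨C, hC, hCΓ, hpiece⟩ := hf.hasSlopeCover hK ht hΓ
  have hC_sub : ∀ P ∈ C, P ⊆ Γ := fun P hP ↦ hCΓ ▸ Set.subset_sUnion_of_mem hP
  have := hC.to_subtype
  let pos : Set ((ℝ × ℝ) × (ℝ × ℝ)) := {ω | 0 < lebDensity μ ω.1 ∧ 0 < lebDensity ν ω.2}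
  have hmeas : ∀ P : C, MeasurableSet (P.1 ∩ pos) := fun P ↦
    (hpiece P P.2).1.inter ((measurableSet_lt measurable_const (hv₀.comp measurable_fst)).inter
      (measurableSet_lt measurable_const (hv₁.comp measurable_snd)))
  have hcov : ∀ᵐ ω ∂π, ∃ P : C, ω ∈ P.1 ∩ pos := by
    filter_upwards [hπΓ, hπ.isCoupling.ae_fst (ae_lebDensity_pos hμ),
      hπ.isCoupling.ae_snd (ae_lebDensity_pos hν)] with ω hω h₀ h₁
    obtain ⟨P, hP, hωP⟩ := Set.mem_sUnion.1 (hCΓ ▸ hω)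
    exact ⟨⟨P, hP⟩, hωP, h₀, h₁⟩
  have hdens : ∀ P : C, ImageDensityLE π volume (interpMap f t)
      (fun ω ↦ ENNReal.ofReal (densityBound f K t (lebDensity μ) (lebDensity ν) ω))
      (P.1 ∩ pos) := fun P ↦ by
    obtain ⟨-, e, g₀, g₁, hslopes⟩ := hpiece P P.2
    exact hf.imageDensityLE_densityBound ht hv₀ hv₁
      (marginalDensityLE_of_map_eq_withDensity measurable_fst hv₀
        (hπ.isCoupling.1.trans (withDensity_ofReal_lebDensity hμ).symm))
      (marginalDensityLE_of_map_eq_withDensity measurable_snd hv₁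
        (hπ.isCoupling.2.trans (withDensity_ofReal_lebDensity hν).symm))
      (hΓ.injOn.mono (hC_sub P P.2)) hslopes
  exact ⟨absolutelyContinuous_map_of_imageDensityLE hmap hmeas hcov hdens,
    ae_rnDeriv_map_le_of_imageDensityLE hmap
      (hf.measurable_densityBound K t hv₀ hv₁).ennreal_ofReal hΓ.injOn hmeas
      (fun P ↦ Set.inter_subset_left.trans (hC_sub P P.2)) hcov hdens⟩

/-! ### The reference measure -/

/-- The reference measure `m` of the metric measure space, as a measure on the plane which is
concentrated on `subgraphRegion f`. -/
noncomputable def refMeasure (f : ℝ → ℝ) (K : ℝ) : Measure (ℝ × ℝ) :=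
  volume.withDensity ((subgraphRegion f).indicator fun z ↦ ENNReal.ofReal (weight f K z))

lemma refMeasure_absolutelyContinuous (f : ℝ → ℝ) (K : ℝ) : refMeasure f K ≪ volume :=
  withDensity_absolutelyContinuous _ _

namespace ThinProfile

variable {f : ℝ → ℝ} {k K : ℝ} {μ : Measure (ℝ × ℝ)}

lemma measurableSet_subgraphRegion (hf : ThinProfile f k) : MeasurableSet (subgraphRegion f) :=
  hf.isCompact_subgraphRegion.measurableSet

lemma refMeasure_eq (hf : ThinProfile f k) (K : ℝ) :
    refMeasure f K =
      (volume.restrict (subgraphRegion f)).withDensity fun z ↦ ENNReal.ofReal (weight f K z) :=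
  withDensity_indicator hf.measurableSet_subgraphRegion _

lemma isFiniteMeasure_refMeasure (hf : ThinProfile f k) (K : ℝ) :
    IsFiniteMeasure (refMeasure f K) := by
  rw [hf.refMeasure_eq]
  exact isFiniteMeasure_withDensity_ofReal
    ((hf.continuous_weight K).continuousOn.integrableOn_compact hf.isCompact_subgraphRegion).2

lemma ae_refMeasure_mem (hf : ThinProfile f k) (K : ℝ) :
    ∀ᵐ z ∂refMeasure f K, z ∈ subgraphRegion f := by
  rw [hf.refMeasure_eq]
  exact (withDensity_absolutelyContinuous _ _).ae_le
    (ae_restrict_mem hf.measurableSet_subgraphRegion)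

lemma absolutelyContinuous_refMeasure (hf : ThinProfile f k) (K : ℝ) (hμ : μ ≪ volume)
    (hmem : ∀ᵐ z ∂μ, z ∈ subgraphRegion f) : μ ≪ refMeasure f K := by
  rw [hf.refMeasure_eq, ← Measure.restrict_eq_self_of_ae_mem hmem]
  refine (hμ.restrict _).trans (withDensity_absolutelyContinuous' ?_ ?_)
  · exact (hf.continuous_weight K).measurable.ennreal_ofReal.aemeasurable
  · exact ae_of_all _ fun z ↦ (ENNReal.ofReal_pos.2 (hf.weight_pos K z)).ne'

lemma llr_refMeasure (hf : ThinProfile f k) [IsProbabilityMeasure μ] (hμ : μ ≪ refMeasure f K) :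
    ∀ᵐ z ∂μ, llr μ (refMeasure f K) z = Real.log (lebDensity μ z) - Real.log (weight f K z) := by
  have := hf.isFiniteMeasure_refMeasure K
  have hvol := hμ.trans (refMeasure_absolutelyContinuous f K)
  have hdens : (refMeasure f K).rnDeriv volume =ᵐ[volume] _ :=
    Measure.rnDeriv_withDensity volume
      ((hf.continuous_weight K).measurable.ennreal_ofReal.indicator hf.measurableSet_subgraphRegion)
  filter_upwards [hvol.ae_le (Measure.rnDeriv_mul_rnDeriv (κ := volume) hμ), hvol.ae_le hdens,
    ae_toReal_rnDeriv_pos hμ, hμ.ae_le (hf.ae_refMeasure_mem K)] with z hchain hdens hpos hz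
  have hw := hf.weight_pos K z
  rw [Set.indicator_of_mem hz] at hdens
  rw [llr_def, lebDensity, ← hchain, Pi.mul_apply, hdens, ENNReal.toReal_mul,
    ENNReal.toReal_ofReal hw.le, Real.log_mul hpos.ne' hw.ne', add_sub_cancel_right]

lemma ae_map_interpMap_mem (hf : ThinProfile f k) {t : ℝ} (ht : t ∈ Set.Icc (0 : ℝ) 1)
    {π : Measure ((ℝ × ℝ) × (ℝ × ℝ))}
    (hmem : ∀ᵐ ω ∂π, ω ∈ subgraphRegion f ×ˢ subgraphRegion f) :
    ∀ᵐ z ∂π.map (interpMap f t), z ∈ subgraphRegion f :=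
  (ae_map_iff (hf.measurable_interpMap t).aemeasurable hf.measurableSet_subgraphRegion).2
    (hmem.mono fun _ ↦ hf.interpMap_mem ht)

lemma llr_map_interpMap_le (hf : ThinProfile f k) {t : ℝ} (hK : 1 ≤ K) (ht : t ∈ Set.Ioo (0 : ℝ) 1)
    {ν : Measure (ℝ × ℝ)} [IsProbabilityMeasure μ] [IsProbabilityMeasure ν]
    (hμ : μ ≪ refMeasure f K) (hν : ν ≪ refMeasure f K) {π : Measure ((ℝ × ℝ) × (ℝ × ℝ))}
    (hπ : LexOptimal distSq euclidSq μ ν π) :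
    π.map (interpMap f t) ≪ refMeasure f K ∧
      ∀ᵐ ω ∂π, llr (π.map (interpMap f t)) (refMeasure f K) (interpMap f t ω) ≤
        (1 - t) * llr μ (refMeasure f K) ω.1 + t * llr ν (refMeasure f K) ω.2 := by
  have := hπ.isCoupling.isProbabilityMeasure
  have hZ := (hf.measurable_interpMap t).aemeasurable (μ := π)
  have := Measure.isProbabilityMeasure_map hZ
  have hμvol := hμ.trans (refMeasure_absolutelyContinuous f K)
  have hνvol := hν.trans (refMeasure_absolutelyContinuous f K)
  have hmem := hπ.isCoupling.ae_mem_prod (hμ.ae_le (hf.ae_refMeasure_mem K))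
    (hν.ae_le (hf.ae_refMeasure_mem K))
  obtain ⟨hvol, hdens⟩ :=
    hf.map_interpMap_absolutelyContinuous_and_rnDeriv_le hK ht hμvol hνvol hπ hmem
  have hac : π.map (interpMap f t) ≪ refMeasure f K :=
    hf.absolutelyContinuous_refMeasure K hvol
      (hf.ae_map_interpMap_mem (Set.Ioo_subset_Icc_self ht) hmem)
  refine ⟨hac, ?_⟩
  filter_upwards [hdens, hπ.isCoupling.ae_fst (ae_lebDensity_pos hμvol),
    hπ.isCoupling.ae_snd (ae_lebDensity_pos hνvol), ae_of_ae_map hZ (ae_lebDensity_pos hvol),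
    hπ.isCoupling.ae_fst (hf.llr_refMeasure hμ), hπ.isCoupling.ae_snd (hf.llr_refMeasure hν),
    ae_of_ae_map hZ (hf.llr_refMeasure hac)] with ω hle hpos₀ hpos₁ hpos hllr₀ hllr₁ hllr
  rw [hllr₀, hllr₁, hllr, ← hf.log_densityBound K t hpos₀ hpos₁]
  exact sub_le_sub_right (Real.log_le_log hpos
    (ENNReal.toReal_le_of_le_ofReal (hf.densityBound_pos K t hpos₀ hpos₁).le hle)) _

end ThinProfile

/-! ### Convexity of the entropy -/

section Entropy

lemma mul_ofReal_neg_log_toReal_le_one (a : ℝ≥0∞) :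
    a * ENNReal.ofReal (-Real.log a.toReal) ≤ 1 := by
  rcases eq_or_ne a ∞ with rfl | ha
  · simp
  calc a * ENNReal.ofReal (-Real.log a.toReal)
      = ENNReal.ofReal (Real.negMulLog a.toReal) := by
        rw [Real.negMulLog, neg_mul_comm, ENNReal.ofReal_mul ENNReal.toReal_nonneg,
          ENNReal.ofReal_toReal ha]
    _ ≤ 1 := ENNReal.ofReal_le_one.2 ((Real.negMulLog_le_one_sub_self ENNReal.toReal_nonneg).trans
        (sub_le_self _ ENNReal.toReal_nonneg))

variable {α : Type*} [MeasurableSpace α] {m μ ν : Measure α} {t : ℝ}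

lemma integrable_min_llr_zero [IsFiniteMeasure m] [SigmaFinite μ] (hμ : μ ≪ m) :
    Integrable (fun z ↦ min (llr μ m z) 0) μ := by
  refine ⟨by fun_prop, ?_⟩
  calc ∫⁻ z, ‖min (llr μ m z) 0‖ₑ ∂μ
      = ∫⁻ z, ENNReal.ofReal (-llr μ m z) ∂μ := by
        refine lintegral_congr fun z ↦ ?_
        rw [← enorm_neg, ← max_neg_neg, neg_zero, Real.enorm_of_nonneg (le_max_right _ _),
          ENNReal.ofReal_max, ENNReal.ofReal_zero, max_eq_left zero_le]
    _ = ∫⁻ z, μ.rnDeriv m z * ENNReal.ofReal (-llr μ m z) ∂m :=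
        (lintegral_rnDeriv_mul hμ (by fun_prop)).symm
    _ ≤ ∫⁻ _, 1 ∂m := lintegral_mono fun z ↦ mul_ofReal_neg_log_toReal_le_one _
    _ < ∞ := by simp

lemma Ent_eq_integral (hμ : μ ≪ m) (hint : Integrable (llr μ m) μ) :
    Ent m μ = ((∫ z, llr μ m z ∂μ : ℝ) : EReal) :=
  if_pos ⟨hμ, hint⟩

lemma Ent_eq_top (hint : ¬Integrable (llr μ m) μ) : Ent m μ = ⊤ :=
  if_neg fun h ↦ hint h.2

lemma coe_mul_Ent_ne_bot (ht : 0 < t) : (t : EReal) * Ent m μ ≠ ⊥ := by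
  unfold Ent
  split_ifs
  · exact EReal.coe_ne_bot (t * ∫ z, llr μ m z ∂μ)
  · simp [EReal.coe_mul_top_of_pos ht]

variable [IsFiniteMeasure m] {π : Measure (α × α)} [IsFiniteMeasure π] {Z : α × α → α}

lemma integrable_llr_map_and_integral_le (hπ : IsCoupling μ ν π) (hZ : Measurable Z)
    (hac : π.map Z ≪ m) (hintμ : Integrable (llr μ m) μ) (hintν : Integrable (llr ν m) ν)
    (hle : ∀ᵐ ω ∂π, llr (π.map Z) m (Z ω) ≤ (1 - t) * llr μ m ω.1 + t * llr ν m ω.2) :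
    Integrable (llr (π.map Z) m) (π.map Z) ∧
      ∫ z, llr (π.map Z) m z ∂π.map Z ≤ (1 - t) * ∫ z, llr μ m z ∂μ + t * ∫ z, llr ν m z ∂ν := by
  have hmeas : ∀ ρ η : Measure α, AEStronglyMeasurable (llr ρ m) η := fun ρ η ↦
    (measurable_llr ρ m).aestronglyMeasurable
  have hint₀ : Integrable (fun ω ↦ llr μ m ω.1) π :=
    (hπ.1.symm ▸ hintμ : Integrable (llr μ m) (π.map Prod.fst)).comp_measurable measurable_fst
  have hint₁ : Integrable (fun ω ↦ llr ν m ω.2) π :=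
    (hπ.2.symm ▸ hintν : Integrable (llr ν m) (π.map Prod.snd)).comp_measurable measurable_snd
  have hbound := (hint₀.const_mul (1 - t)).add (hint₁.const_mul t)
  have hintZ : Integrable (fun ω ↦ llr (π.map Z) m (Z ω)) π :=
    integrable_of_le_of_le ((hmeas _ _).comp_measurable hZ) (ae_of_all _ fun ω ↦ min_le_left _ 0)
      hle ((integrable_min_llr_zero hac).comp_measurable hZ) hbound
  refine ⟨(integrable_map_measure (hmeas _ _) hZ.aemeasurable).2 hintZ, ?_⟩
  calc ∫ z, llr (π.map Z) m z ∂π.map Z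
      = ∫ ω, llr (π.map Z) m (Z ω) ∂π := integral_map hZ.aemeasurable (hmeas _ _)
    _ ≤ ∫ ω, (1 - t) * llr μ m ω.1 + t * llr ν m ω.2 ∂π := integral_mono_ae hintZ hbound hle
    _ = (1 - t) * ∫ ω, llr μ m ω.1 ∂π + t * ∫ ω, llr ν m ω.2 ∂π := by
        rw [integral_add (hint₀.const_mul _) (hint₁.const_mul _), integral_const_mul,
          integral_const_mul]
    _ = (1 - t) * ∫ z, llr μ m z ∂μ + t * ∫ z, llr ν m z ∂ν := by
        rw [← integral_map measurable_fst.aemeasurable (hmeas μ _),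
          ← integral_map measurable_snd.aemeasurable (hmeas ν _), hπ.1, hπ.2]

lemma Ent_map_le_of_llr_le (ht : t ∈ Set.Ioo (0 : ℝ) 1) (hμ : μ ≪ m) (hν : ν ≪ m)
    (hπ : IsCoupling μ ν π) (hZ : Measurable Z) (hac : π.map Z ≪ m)
    (hle : ∀ᵐ ω ∂π, llr (π.map Z) m (Z ω) ≤ (1 - t) * llr μ m ω.1 + t * llr ν m ω.2) :
    Ent m (π.map Z) ≤ ((1 - t : ℝ) : EReal) * Ent m μ + (t : EReal) * Ent m ν := by
  have ht' : 0 < 1 - t := sub_pos.2 ht.2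
  by_cases hintμ : Integrable (llr μ m) μ
  swap
  · rw [Ent_eq_top hintμ, EReal.coe_mul_top_of_pos ht',
      EReal.top_add_of_ne_bot (coe_mul_Ent_ne_bot ht.1)]
    exact le_top
  by_cases hintν : Integrable (llr ν m) ν
  swap
  · rw [Ent_eq_top hintν, EReal.coe_mul_top_of_pos ht.1,
      EReal.add_top_of_ne_bot (coe_mul_Ent_ne_bot ht')]
    exact le_top
  obtain ⟨hint, hintegral⟩ := integrable_llr_map_and_integral_le hπ hZ hac hintμ hintν hle
  rw [Ent_eq_integral hμ hintμ, Ent_eq_integral hν hintν, Ent_eq_integral hac hint]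
  exact_mod_cast hintegral

end Entropy

/-! ### Displacement convexity -/

lemma LexOptimal.W2sq_dist_eq_lintegral {μ ν : Measure (ℝ × ℝ)} {c : (ℝ × ℝ) × (ℝ × ℝ) → ℝ≥0}
    {π : Measure ((ℝ × ℝ) × (ℝ × ℝ))} (hπ : LexOptimal distSq c μ ν π) :
    W2sq dist μ ν = ∫⁻ ω, distSq ω ∂π := by
  have hcost : ∀ π' : Measure ((ℝ × ℝ) × (ℝ × ℝ)),
      ∫⁻ ω, ENNReal.ofReal (dist ω.1 ω.2 ^ 2) ∂π' = ∫⁻ ω, distSq ω ∂π' := fun π' ↦ by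
    simp only [distSq, ENNReal.ofReal_pow dist_nonneg, ← edist_dist, edist_nndist, ENNReal.coe_pow]
  simp only [W2sq, hcost]
  exact le_antisymm (iInf₂_le π hπ.isCoupling) (le_iInf₂ hπ.primary_le)

lemma W2sq_dist_map_le {α Ω : Type*} [PseudoMetricSpace α] [MeasurableSpace α]
    [SecondCountableTopology α] [OpensMeasurableSpace α] [MeasurableSpace Ω] {π : Measure Ω}
    {u v : Ω → α} (hu : Measurable u) (hv : Measurable v) :
    W2sq dist (π.map u) (π.map v) ≤ ∫⁻ ω, ENNReal.ofReal (dist (u ω) (v ω) ^ 2) ∂π :=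
  (iInf₂_le _ (isCoupling_map hu hv)).trans_eq
    (lintegral_map (by fun_prop) (hu.prodMk hv))

namespace ThinProfile

variable {f : ℝ → ℝ} {k K s t : ℝ} {μ ν : Measure (ℝ × ℝ)} {π : Measure ((ℝ × ℝ) × (ℝ × ℝ))}

lemma map_interpMap_zero (hf : ThinProfile f k) (hπ : IsCoupling μ ν π) :
    π.map (interpMap f 0) = μ := by
  rw [funext hf.interpMap_zero]
  exact hπ.1

lemma map_interpMap_one (hf : ThinProfile f k) (hπ : IsCoupling μ ν π) :
    π.map (interpMap f 1) = ν := by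
  rw [funext hf.interpMap_one]
  exact hπ.2

lemma W2sq_dist_map_interpMap_le (hf : ThinProfile f k) (hs : s ∈ Set.Icc (0 : ℝ) 1)
    (ht : t ∈ Set.Icc (0 : ℝ) 1) (hπ : LexOptimal distSq euclidSq μ ν π)
    (hmem : ∀ᵐ ω ∂π, ω ∈ subgraphRegion f ×ˢ subgraphRegion f) :
    W2sq dist (π.map (interpMap f s)) (π.map (interpMap f t)) ≤
      ENNReal.ofReal ((t - s) ^ 2) * W2sq dist μ ν := by
  rw [hπ.W2sq_dist_eq_lintegral, ← lintegral_const_mul' _ _ ENNReal.ofReal_ne_top]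
  refine (W2sq_dist_map_le (hf.measurable_interpMap s) (hf.measurable_interpMap t)).trans
    (lintegral_mono_ae ?_)
  filter_upwards [hmem] with ω hω
  rw [← ENNReal.ofReal_coe_nnreal, ← ENNReal.ofReal_mul (sq_nonneg _), distSq, NNReal.coe_pow,
    coe_nndist, ← sq_abs (t - s), ← mul_pow]
  exact ENNReal.ofReal_le_ofReal
    (pow_le_pow_left₀ dist_nonneg (hf.dist_interpMap_le hs ht hω) 2)

lemma W2sq_dist_map_interpMap_eq [IsProbabilityMeasure μ] (hf : ThinProfile f k)
    (hs : s ∈ Set.Icc (0 : ℝ) 1) (ht : t ∈ Set.Icc (0 : ℝ) 1)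
    (hπ : LexOptimal distSq euclidSq μ ν π)
    (hmem : ∀ᵐ ω ∂π, ω ∈ subgraphRegion f ×ˢ subgraphRegion f) :
    W2sq dist (π.map (interpMap f s)) (π.map (interpMap f t)) =
      ENNReal.ofReal ((t - s) ^ 2) * W2sq dist μ ν := by
  have := hπ.isCoupling.isProbabilityMeasure
  have h₀ := hf.map_interpMap_zero hπ.isCoupling
  have h₁ := hf.map_interpMap_one hπ.isCoupling
  have hgeod := W2sq_eq_of_le (M := fun t ↦ π.map (interpMap f t))
    (fun t _ ↦ Measure.isProbabilityMeasure_map (hf.measurable_interpMap t).aemeasurable)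
    (by simpa only [h₀, h₁, hπ.W2sq_dist_eq_lintegral] using hπ.primary_ne_top)
    (fun s hs t ht ↦ by
      simpa only [h₀, h₁] using hf.W2sq_dist_map_interpMap_le hs ht hπ hmem) hs ht
  simpa only [h₀, h₁] using hgeod

lemma Ent_map_interpMap_le [IsProbabilityMeasure μ] [IsProbabilityMeasure ν]
    (hf : ThinProfile f k) (hK : 1 ≤ K) (ht : t ∈ Set.Icc (0 : ℝ) 1) (hμ : μ ≪ refMeasure f K)
    (hν : ν ≪ refMeasure f K) (hπ : LexOptimal distSq euclidSq μ ν π) :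
    Ent (refMeasure f K) (π.map (interpMap f t)) ≤
      ((1 - t : ℝ) : EReal) * Ent (refMeasure f K) μ + (t : EReal) * Ent (refMeasure f K) ν := by
  have := hf.isFiniteMeasure_refMeasure K
  have := hπ.isCoupling.isProbabilityMeasure
  rcases ht.1.eq_or_lt with rfl | ht₀
  · simp [hf.map_interpMap_zero hπ.isCoupling]
  rcases ht.2.eq_or_lt with rfl | ht₁
  · simp [hf.map_interpMap_one hπ.isCoupling]
  obtain ⟨hac, hle⟩ := hf.llr_map_interpMap_le hK ⟨ht₀, ht₁⟩ hμ hν hπ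
  exact Ent_map_le_of_llr_le ⟨ht₀, ht₁⟩ hμ hν hπ.isCoupling (hf.measurable_interpMap t) hac hle

end ThinProfile

theorem stmt_13_general {f : ℝ → ℝ} {k K : ℝ} (hf : ThinProfile f k) (hK : 1 ≤ K)
    {μ₀ μ₁ : Measure (ℝ × ℝ)} [IsProbabilityMeasure μ₀] [IsProbabilityMeasure μ₁]
    (hμ₀ : μ₀ ≪ refMeasure f K) (hμ₁ : μ₁ ≪ refMeasure f K) :
    ∃ μ : ℝ → Measure (ℝ × ℝ),
      μ 0 = μ₀ ∧ μ 1 = μ₁ ∧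
      (∀ t ∈ Set.Icc (0 : ℝ) 1, IsProbabilityMeasure (μ t) ∧ (μ t) (subgraphRegion f)ᶜ = 0) ∧
      (∀ s ∈ Set.Icc (0 : ℝ) 1, ∀ t ∈ Set.Icc (0 : ℝ) 1,
        W2sq dist (μ s) (μ t) = ENNReal.ofReal ((t - s) ^ 2) * W2sq dist μ₀ μ₁) ∧
      (∀ t ∈ Set.Icc (0 : ℝ) 1, Ent (refMeasure f K) (μ t) ≤
        ((1 - t : ℝ) : EReal) * Ent (refMeasure f K) μ₀ +
          (t : EReal) * Ent (refMeasure f K) μ₁) := by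
  have hmem₀ := hμ₀.ae_le (hf.ae_refMeasure_mem K)
  have hmem₁ := hμ₁.ae_le (hf.ae_refMeasure_mem K)
  obtain ⟨π, hπ⟩ := exists_lexOptimal hf.isCompact_subgraphRegion hf.isCompact_subgraphRegion
    hmem₀ hmem₁ continuous_distSq continuous_euclidSq
  have hmem := hπ.isCoupling.ae_mem_prod hmem₀ hmem₁
  have := hπ.isCoupling.isProbabilityMeasure
  have hmeas := fun t ↦ (hf.measurable_interpMap t).aemeasurable (μ := π)
  refine ⟨fun t ↦ π.map (interpMap f t), hf.map_interpMap_zero hπ.isCoupling,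
    hf.map_interpMap_one hπ.isCoupling, fun t ht ↦ ⟨Measure.isProbabilityMeasure_map (hmeas t), ?_⟩,
    fun s hs t ht ↦ hf.W2sq_dist_map_interpMap_eq hs ht hπ hmem,
    fun t ht ↦ hf.Ent_map_interpMap_le hK ht hμ₀ hμ₁ hπ⟩
  exact hf.ae_map_interpMap_mem ht hmem

theorem stmt_13 :
    ∃ k₀ > (0 : ℝ), ∃ K₀ : ℝ, 1 ≤ K₀ ∧
    ∀ ε k K : ℝ, 0 < ε → ε < k → k < k₀ → K₀ ≤ K →
    ∀ φ : ℝ → ℝ, Continuous φ → (∀ x, 0 ≤ φ x) → (∀ x, φ x ≤ 1) →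
      (∀ x, x ∉ Set.Icc (-k) k → φ x = 0) → (∫ x, φ x) = k →
    ∀ f f' : ℝ → ℝ, (∀ x, HasDerivAt f (f' x) x) → (∀ x, HasDerivAt f' (φ x) x) →
      f' (-1) = 0 → f (-1) = ε →
    ∀ X : Set (ℝ × ℝ),
      X = {p : ℝ × ℝ | p.1 ∈ Set.Icc (-1 : ℝ) 1 ∧ 0 ≤ p.2 ∧ p.2 ≤ f p.1} →
    ∀ m : Measure (ℝ × ℝ),
      m = volume.withDensity
        (X.indicator fun z => ENNReal.ofReal ((1 / f z.1) * Real.exp (-K * (z.2 / f z.1) ^ 2))) →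
    ∀ μ₀ μ₁ : Measure (ℝ × ℝ), IsProbabilityMeasure μ₀ → IsProbabilityMeasure μ₁ →
      μ₀ ≪ m → μ₁ ≪ m →
    ∃ μ : ℝ → Measure (ℝ × ℝ),
      μ 0 = μ₀ ∧ μ 1 = μ₁ ∧
      (∀ t ∈ Set.Icc (0 : ℝ) 1, IsProbabilityMeasure (μ t) ∧ (μ t) Xᶜ = 0) ∧
      (∀ s ∈ Set.Icc (0 : ℝ) 1, ∀ t ∈ Set.Icc (0 : ℝ) 1,
        W2sq dist (μ s) (μ t) = ENNReal.ofReal ((t - s) ^ 2) * W2sq dist μ₀ μ₁) ∧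
      (∀ t ∈ Set.Icc (0 : ℝ) 1,
        Ent m (μ t) ≤ ((1 - t : ℝ) : EReal) * Ent m μ₀ + ((t : ℝ) : EReal) * Ent m μ₁) := by
  refine ⟨1 / 1000, by norm_num, 1, le_rfl, ?_⟩
  rintro ε k K hε hεk hk hK φ hφ hφ₀ hφ₁ hsupp hint f f' hf hf' hf'_left hf_left _ rfl _ rfl
    μ₀ μ₁ _ _ hμ₀ hμ₁
  exact stmt_13_general
    (thinProfile_of_hasDerivAt hε hεk hk hφ hφ₀ hφ₁ hsupp hint hf hf' hf'_left hf_left) hK hμ₀ hμ₁
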